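/- Let n ≥ 2 and let Γ ⊆ ℝⁿ be a convex invariant cone, and let f be a concave elliptic Hessian operator on Γ satisfying condition N with constants N₁, N₂ > 0. Let u : ℝⁿ → ℝ be a smooth entire admissible function which has quadratic growth, solves F(D²u) = 1 on all of ℝⁿ, and satisfies condition D with some constants D₁, D₂ > 0. Then u is a quadratic polynomial, i.e. there exist a symmetric matrix A, a vector b ∈ ℝⁿ and c ∈ ℝ with u(x) = ½ xᵀAx + b·x + c for all x. -/

import Mathlib

open scoped BigOperators

noncomputable section

/-- The positive orthant `Γₙ = (0,∞)ⁿ` in `ℝⁿ`. -/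
def PosOrthant (n : ℕ) : Set (Fin n → ℝ) := {lam | ∀ i, 0 < lam i}

/-- A convex invariant cone: an open cone `Γ ⊆ ℝⁿ` with vertex at the origin, `Γ ≠ ℝⁿ`,
which is convex, satisfies `Γ + Γₙ ⊆ Γ`, and is invariant under permutations of coordinates. -/
def IsConvexInvariantCone {n : ℕ} (Γ : Set (Fin n → ℝ)) : Prop :=
  IsOpen Γ ∧ Γ ≠ Set.univ ∧ Convex ℝ Γ ∧
    (∀ lam ∈ Γ, ∀ t : ℝ, 0 < t → t • lam ∈ Γ) ∧
    (∀ lam ∈ Γ, ∀ tau ∈ PosOrthant n, lam + tau ∈ Γ) ∧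
    (∀ lam ∈ Γ, ∀ σ : Equiv.Perm (Fin n), lam ∘ σ ∈ Γ)

/-- The partial derivative `∂f/∂λᵢ(λ)`. -/
def fpd {n : ℕ} (f : (Fin n → ℝ) → ℝ) (i : Fin n) (lam : Fin n → ℝ) : ℝ :=
  fderiv ℝ f lam (Pi.single i 1)

/-- A concave elliptic Hessian operator on a convex invariant cone `Γ`:
a `C²`, permutation-invariant, concave function `f` on `Γ` which is elliptic
(`∂f/∂λᵢ > 0`), positive, and positively homogeneous of degree one. -/
def IsConcaveEllipticHessianOp {n : ℕ} (Γ : Set (Fin n → ℝ)) (f : (Fin n → ℝ) → ℝ) : Prop :=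
  ContDiffOn ℝ 2 f Γ ∧ ConcaveOn ℝ Γ f ∧
    (∀ lam ∈ Γ, ∀ σ : Equiv.Perm (Fin n), f (lam ∘ σ) = f lam) ∧
    (∀ lam ∈ Γ, ∀ i, 0 < fpd f i lam) ∧
    (∀ lam ∈ Γ, 0 < f lam) ∧
    (∀ lam ∈ Γ, ∀ t : ℝ, 0 < t → f (t • lam) = t * f lam)

/-- Condition N: whenever `λ ∈ Γ` satisfies `f(λ) = 1` and `Σᵢ ∂f/∂λᵢ(λ) ≤ C` for some `C > 0`,
then `∂f/∂λᵢ(λ) ≥ 1/(N₁ C^{N₂})` for every `i`. -/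
def ConditionN {n : ℕ} (Γ : Set (Fin n → ℝ)) (f : (Fin n → ℝ) → ℝ) (N₁ N₂ : ℝ) : Prop :=
  ∀ lam ∈ Γ, f lam = 1 → ∀ C : ℝ, 0 < C → (∑ i, fpd f i lam) ≤ C →
    ∀ i, 1 / (N₁ * C ^ N₂) ≤ fpd f i lam

/-- The Hessian matrix `D²u(x)`. -/
def hessianMatrix {n : ℕ} (u : EuclideanSpace ℝ (Fin n) → ℝ) (x : EuclideanSpace ℝ (Fin n)) :
    Matrix (Fin n) (Fin n) ℝ :=
  fun i j => iteratedFDeriv ℝ 2 u x ![EuclideanSpace.single i 1, EuclideanSpace.single j 1]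

/-- The vector of eigenvalues `λ(D²u(x))` of the Hessian of `u` at `x`
(junk value `0` if the Hessian matrix fails to be symmetric). -/
def hessEigen {n : ℕ} (u : EuclideanSpace ℝ (Fin n) → ℝ) (x : EuclideanSpace ℝ (Fin n)) :
    Fin n → ℝ :=
  if h : (hessianMatrix u x).IsHermitian then h.eigenvalues else 0

/-- Condition D for a solution `u` of `F(D²u) = 1` on a set `Ω`: at every point, if an
eigenvalue `λᵢ` of `D²u` exceeds `D₁` then `∂f/∂λᵢ(λ) ⬝ λᵢ ≤ D₂`. -/
def ConditionD {n : ℕ} (f : (Fin n → ℝ) → ℝ) (u : EuclideanSpace ℝ (Fin n) → ℝ)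
    (Ω : Set (EuclideanSpace ℝ (Fin n))) (D₁ D₂ : ℝ) : Prop :=
  ∀ x ∈ Ω, ∀ i, D₁ < hessEigen u x i →
    fpd f i (hessEigen u x) * hessEigen u x i ≤ D₂

/-- The `k`-th elementary symmetric polynomial `σ_k` on `ℝⁿ`. -/
def esymmF (n k : ℕ) (lam : Fin n → ℝ) : ℝ :=
  ∑ s ∈ (Finset.univ : Finset (Fin n)).powersetCard k, ∏ i ∈ s, lam i

/-- The Gårding cone `Γ_k = {λ : σ_j(λ) > 0, j = 1,…,k}`. -/
def GammaK (n k : ℕ) : Set (Fin n → ℝ) :=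
  {lam | ∀ j : ℕ, 1 ≤ j → j ≤ k → 0 < esymmF n j lam}

/-- The cone `Γ̂_p` of vectors all of whose sums of `p` distinct coordinates are positive. -/
def GammaHat (n p : ℕ) : Set (Fin n → ℝ) :=
  {lam | ∀ s : Finset (Fin n), s.card = p → 0 < ∑ i ∈ s, lam i}

/-- The `p`-Monge–Ampère operator `M_p(λ) = ∏_{i₁<⋯<i_p} (λ_{i₁} + ⋯ + λ_{i_p})`. -/
def pMA (n p : ℕ) (lam : Fin n → ℝ) : ℝ :=
  ∏ s ∈ (Finset.univ : Finset (Fin n)).powersetCard p, ∑ i ∈ s, lam i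

/-- Quadratic growth: `u(x) ≥ C⁻¹|x|² − C` for some `C > 0`. -/
def QuadraticGrowth {n : ℕ} (u : EuclideanSpace ℝ (Fin n) → ℝ) : Prop :=
  ∃ C : ℝ, 0 < C ∧ ∀ x, C⁻¹ * ‖x‖ ^ 2 - C ≤ u x

/-- `u` is a quadratic polynomial: `u(x) = ½ xᵀAx + b·x + c` with `A` symmetric. -/
def IsQuadraticPolynomial {n : ℕ} (u : EuclideanSpace ℝ (Fin n) → ℝ) : Prop :=
  ∃ (A : Matrix (Fin n) (Fin n) ℝ) (b : Fin n → ℝ) (c : ℝ), A.IsSymm ∧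
    ∀ x, u x = (1 / 2) * (∑ i, ∑ j, A i j * x i * x j) + (∑ i, b i * x i) + c

open Set Filter MeasureTheory
open Module (finrank)
open scoped ContDiff Topology

/-!
Freeze the gradient `φ` of `f` at the eigenvalues of `D²u(x)`. Concavity, symmetry and homogeneity
of `f` give `∑ᵢ φᵢ D²u(y)(bᵢ, bᵢ) ≥ 1` for every point `y` and every orthonormal basis `b`, with
equality at `y = x` for the eigenbasis. Comparing nearby points in the eigenbasis shows that every
pure second derivative of `u` is a subsolution of the linearized operator `L`; letting the basis
rotate with `y` as well produces a gain quadratic in the third derivatives.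

* By quadratic growth the sublevel sets of `u`, rescaled to unit size, are bounded uniformly in the
  scale. Maximum principles weighted by powers of the height below the boundary of the sublevel set,
  with conditions N and D absorbing the errors and the rotational gain absorbing the third
  derivatives, bound the gradient and then `D²u`, so that `D²u` is bounded on the whole space.
* Suprema minus pure second derivatives are nonnegative supersolutions. A suitable positive
  combination `V` of them has infimum `0`, and `D²u` oscillates by at most `O(√η)` on `{V ≤ η}`.
  As a paraboloid touches `u` from below at points where `V` is small, the operator `L` is
  uniformly elliptic on `{V ≤ η}` for small `η`.
* Ellipticity is thus available exactly where `V` is small, which is enough for the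
  Krylov–Safonov growth argument: touching by paraboloids, a barrier and a covering show that
  `{V > η}` has density zero at infinity. Touching `u` from below by paraboloids selects points of
  positive density, so every supersolution with infimum `0` is almost minimized inside `{V ≤ η}`.
  Applied to `sup ∂ᵥ∂ᵥu - ∂ᵥ∂ᵥu`, this confines `D²u` to within `O(√η)` of a constant; let `η → 0`.
-/

/-! ### Directional derivatives and second-order tests at extrema -/

/-- The directional derivative of `g` along the constant vector field `v`. It is a function of the
base point, so that it can be iterated: `∂[v] ∂[w] g x` is `D²g(x)(v, w)`. -/
def dirDeriv {E F : Type*} [NormedAddCommGroup E] [NormedSpace ℝ E] [NormedAddCommGroup F]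
    [NormedSpace ℝ F] (v : E) (g : E → F) : E → F :=
  fun x => fderiv ℝ g x v

local notation:max "∂[" v "]" g:max => dirDeriv v g

section DirectionalDerivative

variable {E F G : Type*} [NormedAddCommGroup E] [NormedSpace ℝ E] [NormedAddCommGroup F]
  [NormedSpace ℝ F] [NormedAddCommGroup G] [NormedSpace ℝ G]

theorem two_le_infty : (2 : WithTop ℕ∞) ≤ ∞ :=
  WithTop.coe_le_coe.mpr (le_top : (2 : ℕ∞) ≤ ⊤)

theorem contDiff_dirDeriv {g : E → F} (hg : ContDiff ℝ ∞ g) (v : E) : ContDiff ℝ ∞ ∂[v] g :=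
  (hg.fderiv_right (by simp)).clm_apply contDiff_const

theorem differentiable_fderiv {g : E → F} (hg : ContDiff ℝ 2 g) :
    Differentiable ℝ (fderiv ℝ g) :=
  (hg.fderiv_right (m := 1) le_rfl).differentiable one_ne_zero

theorem dirDeriv_clm_apply {c : E → F →L[ℝ] G} (hc : Differentiable ℝ c) (v : E) (w : F) (x : E) :
    ∂[v] (fun y => c y w) x = ∂[v] c x w := by
  simp [dirDeriv, fderiv_clm_apply (hc x) (differentiableAt_const w)]

theorem dirDeriv_dirDeriv {g : E → F} (hg : ContDiff ℝ 2 g) (v w x : E) :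
    ∂[v] ∂[w] g x = fderiv ℝ (fderiv ℝ g) x v w :=
  dirDeriv_clm_apply (differentiable_fderiv hg) v w x

theorem dirDeriv_comm {g : E → F} (hg : ContDiff ℝ 2 g) (v w : E) :
    ∂[v] ∂[w] g = ∂[w] ∂[v] g := by
  ext x
  rw [dirDeriv_dirDeriv hg, dirDeriv_dirDeriv hg]
  exact hg.contDiffAt.isSymmSndFDerivAt (by simp) v w

theorem dirDeriv_hess_comm {g : E → F} (hg : ContDiff ℝ ∞ g) (v w : E) :
    ∂[w] ∂[w] ∂[v] g = ∂[v] ∂[w] ∂[w] g := by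
  rw [dirDeriv_comm (hg.of_le two_le_infty) w v,
    dirDeriv_comm ((contDiff_dirDeriv hg w).of_le two_le_infty) w v]

theorem dirDeriv_const (a : F) (v : E) : ∂[v] (fun _ => a) = fun _ => 0 := by
  ext x; simp [dirDeriv]

theorem dirDeriv_zero_left (g : E → F) : ∂[(0 : E)] g = fun _ => 0 := by
  ext x; simp [dirDeriv]

theorem dirDeriv_smul_left (a : ℝ) (v : E) (g : E → F) (x : E) :
    ∂[a • v] g x = a • ∂[v] g x := by
  simp [dirDeriv]

theorem dirDeriv_sum_left {ι : Type*} (s : Finset ι) (a : ι → ℝ) (v : ι → E) (g : E → F) (x : E) :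
    ∂[∑ i ∈ s, a i • v i] g x = ∑ i ∈ s, a i • ∂[v i] g x := by
  simp [dirDeriv]

theorem dirDeriv_add {g h : E → F} (hg : Differentiable ℝ g) (hh : Differentiable ℝ h) (v : E) :
    ∂[v] (fun x => g x + h x) = fun x => ∂[v] g x + ∂[v] h x := by
  ext x; simp [dirDeriv, fderiv_fun_add (hg x) (hh x)]

theorem dirDeriv_const_sub (a : F) (g : E → F) (v : E) :
    ∂[v] (fun x => a - g x) = fun x => -∂[v] g x := by
  ext x; simp [dirDeriv, fderiv_const_sub]

theorem dirDeriv_neg (g : E → F) (v : E) : ∂[v] (fun x => -g x) = fun x => -∂[v] g x := by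
  ext x; simp [dirDeriv, fderiv_fun_neg]

theorem dirDeriv_const_mul {g : E → ℝ} (hg : Differentiable ℝ g) (a : ℝ) (v : E) :
    ∂[v] (fun x => a * g x) = fun x => a * ∂[v] g x := by
  ext x; simp [dirDeriv, fderiv_const_mul (hg x)]

theorem dirDeriv_sum {ι : Type*} {s : Finset ι} {g : ι → E → F}
    (hg : ∀ i ∈ s, Differentiable ℝ (g i)) (v : E) :
    ∂[v] (fun x => ∑ i ∈ s, g i x) = fun x => ∑ i ∈ s, ∂[v] (g i) x := by
  ext x; simp [dirDeriv, fderiv_fun_sum fun i hi => hg i hi x]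

theorem dirDeriv_dirDeriv_smul {g : E → ℝ} (hg : ContDiff ℝ ∞ g) (a : ℝ) (v w : E) :
    ∂[v] ∂[a • w] g = fun x => a * ∂[v] ∂[w] g x := by
  ext x
  simp [dirDeriv_dirDeriv (hg.of_le two_le_infty)]

theorem dirDeriv_comp_add_smul (g : E → F) (x₀ : E) (r : ℝ) (v : E) :
    ∂[v] (fun x => g (x₀ + r • x)) = fun x => r • ∂[v] g (x₀ + r • x) := by
  ext x
  have h := fderiv_comp_smul (𝕜 := ℝ) (f := fun y => g (x₀ + y)) (x := x) r
  rw [fderiv_comp_add_left] at h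
  simp [dirDeriv, h]

theorem hasDerivAt_comp_line {g : E → F} (hg : Differentiable ℝ g) (x v : E) (t : ℝ) :
    HasDerivAt (fun s : ℝ => g (x + s • v)) (∂[v] g (x + t • v)) t :=
  (hg (x + t • v)).hasFDerivAt.comp_hasDerivAt t <| by
    simpa using ((hasDerivAt_id t).smul_const v).const_add x

end DirectionalDerivative

section TwoJet

variable {F G : Type*} [NormedAddCommGroup F] [NormedSpace ℝ F] [NormedAddCommGroup G]
  [NormedSpace ℝ G]

/-- The function `g` has the two-jet `a + b t + c t² / 2` at `t = 0`. Differentiability near `0` is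
demanded of `g`, but only at `0` of its derivative. -/
def HasTwoJet (g : ℝ → F) (a b c : F) : Prop :=
  g 0 = a ∧ ∃ g' : ℝ → F, (∀ᶠ t in 𝓝 0, HasDerivAt g (g' t) t) ∧ g' 0 = b ∧ HasDerivAt g' c 0

namespace HasTwoJet

theorem congr {g : ℝ → F} {a b c a' b' c' : F} (hg : HasTwoJet g a b c) (ha : a = a')
    (hb : b = b') (hc : c = c') : HasTwoJet g a' b' c' := by
  subst ha hb hc; exact hg

theorem const (a : F) : HasTwoJet (fun _ => a) a 0 0 :=
  ⟨rfl, 0, .of_forall fun t => hasDerivAt_const t a, rfl, hasDerivAt_const 0 0⟩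

theorem add {g h : ℝ → F} {a b c a' b' c' : F} (hg : HasTwoJet g a b c)
    (hh : HasTwoJet h a' b' c') : HasTwoJet (fun t => g t + h t) (a + a') (b + b') (c + c') := by
  obtain ⟨rfl, g', hg', rfl, hg''⟩ := hg
  obtain ⟨rfl, h', hh', rfl, hh''⟩ := hh
  exact ⟨rfl, fun t => g' t + h' t, hg'.and hh' |>.mono fun t ht => ht.1.add ht.2, rfl,
    hg''.add hh''⟩

theorem sum {ι : Type*} (s : Finset ι) {g : ι → ℝ → F} {a b c : ι → F}
    (h : ∀ i ∈ s, HasTwoJet (g i) (a i) (b i) (c i)) :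
    HasTwoJet (fun t => ∑ i ∈ s, g i t) (∑ i ∈ s, a i) (∑ i ∈ s, b i) (∑ i ∈ s, c i) := by
  classical
  induction s using Finset.induction_on with
  | empty => simpa using const 0
  | insert i s hi ih =>
    simp only [Finset.sum_insert hi]
    exact (h i (Finset.mem_insert_self i s)).add
      (ih fun j hj => h j (Finset.mem_insert_of_mem hj))

theorem clm_apply {g : ℝ → F →L[ℝ] G} {h : ℝ → F} {a b c : F →L[ℝ] G} {a' b' c' : F}
    (hg : HasTwoJet g a b c) (hh : HasTwoJet h a' b' c') :
    HasTwoJet (fun t => g t (h t)) (a a') (b a' + a b') (c a' + (2 : ℝ) • b b' + a c') := by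
  obtain ⟨rfl, g', hg', rfl, hg''⟩ := hg
  obtain ⟨rfl, h', hh', rfl, hh''⟩ := hh
  refine ⟨rfl, fun t => g' t (h t) + g t (h' t),
    hg'.and hh' |>.mono fun t ht => ht.1.clm_apply ht.2, rfl, ?_⟩
  refine ((hg''.clm_apply hh'.self_of_nhds).add
    (hg'.self_of_nhds.clm_apply hh'')).congr_deriv ?_
  rw [two_smul]; abel

theorem const_mul {g : ℝ → ℝ} {a b c : ℝ} (r : ℝ) (hg : HasTwoJet g a b c) :
    HasTwoJet (fun t => r * g t) (r * a) (r * b) (r * c) := by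
  obtain ⟨rfl, g', hg', rfl, hg''⟩ := hg
  exact ⟨rfl, fun t => r * g' t, hg'.mono fun t ht => ht.const_mul r, rfl, hg''.const_mul r⟩

theorem log {g : ℝ → ℝ} {a b c : ℝ} (hg : HasTwoJet g a b c) (ha : 0 < a) :
    HasTwoJet (fun t => Real.log (g t)) (Real.log a) (b / a) (c / a - (b / a) ^ 2) := by
  obtain ⟨rfl, g', hg', rfl, hg''⟩ := hg
  have hpos : ∀ᶠ t in 𝓝 0, 0 < g t := hg'.self_of_nhds.continuousAt.eventually (lt_mem_nhds ha)
  refine ⟨rfl, fun t => g' t / g t, ?_, rfl, ?_⟩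
  · filter_upwards [hg', hpos] with t ht htpos using ht.log htpos.ne'
  · refine (hg''.div hg'.self_of_nhds ha.ne').congr_deriv ?_
    field_simp

theorem exp {g : ℝ → ℝ} {a b c : ℝ} (hg : HasTwoJet g a b c) :
    HasTwoJet (fun t => Real.exp (g t)) (Real.exp a) (Real.exp a * b)
      (Real.exp a * (c + b ^ 2)) := by
  obtain ⟨rfl, g', hg', rfl, hg''⟩ := hg
  refine ⟨rfl, fun t => Real.exp (g t) * g' t, hg'.mono fun t ht => ht.exp, rfl, ?_⟩
  exact (hg'.self_of_nhds.exp.mul hg'').congr_deriv (by ring)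

theorem of_isLocalMax {g : ℝ → ℝ} {a b c : ℝ} (hg : HasTwoJet g a b c) (hm : IsLocalMax g 0) :
    b = 0 ∧ c ≤ 0 := by
  obtain ⟨rfl, g', hg', rfl, hg''⟩ := hg
  have hb : g' 0 = 0 := hm.hasDerivAt_eq_zero hg'.self_of_nhds
  refine ⟨hb, not_lt.1 fun hc => ?_⟩
  have hderiv : deriv g =ᶠ[𝓝 0] g' := hg'.mono fun t ht => ht.deriv
  have hderiv₂ : deriv (deriv g) 0 = c := by rw [hderiv.deriv_eq, hg''.deriv]
  have hmin : IsLocalMin g 0 := isLocalMin_of_deriv_deriv_pos (by rwa [hderiv₂])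
    (by rw [hderiv.self_of_nhds, hb]) hg'.self_of_nhds.continuousAt
  have hconst : g =ᶠ[𝓝 0] fun _ => g 0 :=
    hm.and hmin |>.mono fun t ht => le_antisymm ht.1 ht.2
  have : deriv (deriv g) 0 = 0 := by simp [hconst.deriv.deriv_eq]
  linarith

theorem of_isLocalMin {g : ℝ → ℝ} {a b c : ℝ} (hg : HasTwoJet g a b c) (hm : IsLocalMin g 0) :
    b = 0 ∧ 0 ≤ c := by
  have h := (hg.const_mul (-1)).of_isLocalMax (by simpa using hm.neg)
  constructor <;> linarith [h.1, h.2]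

end HasTwoJet

end TwoJet

section SecondOrderTest

variable {E F : Type*} [NormedAddCommGroup E] [NormedSpace ℝ E] [NormedAddCommGroup F]
  [NormedSpace ℝ F]

theorem hasTwoJet_comp_line {g : E → F} (hg : ContDiff ℝ ∞ g) (x v : E) :
    HasTwoJet (fun t : ℝ => g (x + t • v)) (g x) (∂[v] g x) (∂[v] ∂[v] g x) := by
  have hderiv := hasDerivAt_comp_line (hg.differentiable (by simp)) x v
  refine ⟨by simp, fun t => ∂[v] g (x + t • v), .of_forall hderiv, by simp, ?_⟩
  simpa using hasDerivAt_comp_line ((contDiff_dirDeriv hg v).differentiable (by simp)) x v 0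

theorem tendsto_line (x v : E) : Tendsto (fun t : ℝ => x + t • v) (𝓝 0) (𝓝 x) := by
  have : Continuous fun t : ℝ => x + t • v := by fun_prop
  simpa using this.tendsto 0

theorem isLocalMin_comp_line {g : E → ℝ} {x : E} (hm : IsLocalMin g x) (v : E) :
    IsLocalMin (fun t : ℝ => g (x + t • v)) 0 := by
  filter_upwards [(tendsto_line x v).eventually hm] with t ht
  simpa using ht

end SecondOrderTest

section InnerProductSpace

variable {E : Type*} [NormedAddCommGroup E] [InnerProductSpace ℝ E]

theorem hasTwoJet_norm_sq_line (x v : E) :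
    HasTwoJet (fun t : ℝ => ‖x + t • v‖ ^ 2) (‖x‖ ^ 2) (2 * inner ℝ x v) (2 * ‖v‖ ^ 2) := by
  have hline : ∀ t : ℝ, HasDerivAt (fun s : ℝ => x + s • v) v t := fun t => by
    simpa using ((hasDerivAt_id t).smul_const v).const_add x
  refine ⟨by simp, fun t => 2 * inner ℝ (x + t • v) v, .of_forall fun t => (hline t).norm_sq,
    by simp, ?_⟩
  exact (((hline 0).inner ℝ (hasDerivAt_const 0 v)).const_mul 2).congr_deriv (by simp)

/-- The weighted maximum principle of the gradient and Hessian estimates: at a positive interior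
maximum of `w h^γ exp (ε |x|²)` one may differentiate its logarithm twice. -/
theorem dirDeriv_of_isLocalMax_weighted {w h : E → ℝ} (hw : ContDiff ℝ ∞ w) (hh : ContDiff ℝ ∞ h)
    (γ : ℕ) (ε : ℝ) {x : E}
    (hm : IsLocalMax (fun y => w y * h y ^ γ * Real.exp (ε * ‖y‖ ^ 2)) x)
    (hwx : 0 < w x) (hhx : 0 < h x) (v : E) :
    ∂[v] w x / w x + γ * (∂[v] h x / h x) + 2 * ε * inner ℝ x v = 0 ∧
      ∂[v] ∂[v] w x / w x - (∂[v] w x / w x) ^ 2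
        + γ * (∂[v] ∂[v] h x / h x - (∂[v] h x / h x) ^ 2) + 2 * ε * ‖v‖ ^ 2 ≤ 0 := by
  have jet := (((hasTwoJet_comp_line hw x v).log hwx).add
    (((hasTwoJet_comp_line hh x v).log hhx).const_mul (γ : ℝ))).add
    ((hasTwoJet_norm_sq_line x v).const_mul ε)
  have hlog : ∀ y, 0 < w y → 0 < h y → Real.log (w y * h y ^ γ * Real.exp (ε * ‖y‖ ^ 2)) =
      Real.log (w y) + γ * Real.log (h y) + ε * ‖y‖ ^ 2 := fun y hwy hhy => by
    rw [Real.log_mul (by positivity) (by positivity), Real.log_mul (by positivity) (by positivity),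
      Real.log_pow, Real.log_exp]
  have hline := tendsto_line x v
  have htest := jet.of_isLocalMax (by
    filter_upwards [hline.eventually (hw.continuous.continuousAt.eventually (lt_mem_nhds hwx)),
      hline.eventually (hh.continuous.continuousAt.eventually (lt_mem_nhds hhx)),
      hline.eventually hm] with t hwt hht hmt
    simp only [zero_smul, add_zero]
    rw [← hlog _ hwt hht, ← hlog _ hwx hhx]
    exact Real.log_le_log (by positivity) hmt)
  exact ⟨by linarith [htest.1], by linarith [htest.2]⟩

end InnerProductSpace

/-! ### Elliptic frames and the linearized operator -/

section EllipticFrame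

variable {E : Type*} [NormedAddCommGroup E] [InnerProductSpace ℝ E] {n m : ℕ} {N₁ D₁ D₂ : ℝ}
  {u : E → ℝ}

theorem hess_rescale (hu : ContDiff ℝ ∞ u) (x₀ : E) {R : ℝ} (hR : 0 < R) (v w x : E) :
    ∂[v] ∂[w] (fun x => R⁻¹ ^ 2 * u (x₀ + R • x)) x = ∂[v] ∂[w] u (x₀ + R • x) := by
  have hcomp : ∀ {g : E → ℝ}, ContDiff ℝ ∞ g → Differentiable ℝ fun x => g (x₀ + R • x) :=
    fun hg => (hg.differentiable (by simp)).comp (by fun_prop)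
  have hw := contDiff_dirDeriv hu w
  rw [dirDeriv_const_mul (hcomp hu), dirDeriv_comp_add_smul]
  simp only [smul_eq_mul]
  rw [dirDeriv_const_mul ((hcomp hw).const_mul R), dirDeriv_const_mul (hcomp hw),
    dirDeriv_comp_add_smul]
  simp only [smul_eq_mul]
  field_simp

theorem hess_apply_of_diag {ι : Type*} [Fintype ι] [DecidableEq ι] (hu : ContDiff ℝ 2 u)
    (b : OrthonormalBasis ι ℝ E) {lam : ι → ℝ} {x : E}
    (hdiag : ∀ i j, ∂[b i] ∂[b j] u x = if i = j then lam i else 0) (v : E) :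
    ∂[v] ∂[v] u x = ∑ i, lam i * inner ℝ (b i) v ^ 2 := by
  simp only [dirDeriv_dirDeriv hu] at hdiag ⊢
  conv_lhs => rw [← b.sum_repr' v]
  simp only [map_sum, map_smul, sum_apply, smul_apply,
    hdiag, smul_eq_mul, mul_ite, mul_zero, Finset.sum_ite_eq', Finset.mem_univ, if_true]
  exact Finset.sum_congr rfl fun i _ => by ring

/-- What the equation `F(D²u) = 1` says about `u` at each point `x`: the orthonormal basis `b x`
diagonalizes `D²u(x)` with eigenvalues `lam x`, and `phi x` is the gradient of `f` at `lam x`.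
Euler's relation for the homogeneous `f` is `euler`; its concavity and symmetry give `comp`, in
which the frozen coefficients `phi x` are tested against the Hessian at any point in any orthonormal
basis. Condition N is recorded with a natural exponent `m ≥ N₂`. -/
structure EllipticFrame (n : ℕ) (N₁ : ℝ) (m : ℕ) (D₁ D₂ : ℝ) (u : E → ℝ) where
  smooth : ContDiff ℝ ∞ u
  b : E → OrthonormalBasis (Fin n) ℝ E
  lam : E → Fin n → ℝ
  phi : E → Fin n → ℝ
  diag : ∀ x i j, ∂[b x i] ∂[b x j] u x = if i = j then lam x i else 0
  pos : ∀ x i, 0 < phi x i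
  euler : ∀ x, ∑ i, phi x i * lam x i = 1
  comp : ∀ x y (b' : OrthonormalBasis (Fin n) ℝ E), 1 ≤ ∑ i, phi x i * ∂[b' i] ∂[b' i] u y
  condN : ∀ x (C : ℝ), 1 ≤ C → ∑ i, phi x i ≤ C → ∀ i, 1 ≤ N₁ * C ^ m * phi x i
  condD : ∀ x i, D₁ < lam x i → phi x i * lam x i ≤ D₂

namespace EllipticFrame

/-- The linearized operator of the equation at `u`. -/
def L (A : EllipticFrame n N₁ m D₁ D₂ u) (g : E → ℝ) (x : E) : ℝ :=
  ∑ i, A.phi x i * ∂[A.b x i] ∂[A.b x i] g x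

/-- The trace of the coefficients of the linearized operator. -/
def tr (A : EllipticFrame n N₁ m D₁ D₂ u) (x : E) : ℝ := ∑ i, A.phi x i

theorem diag_self (A : EllipticFrame n N₁ m D₁ D₂ u) (x : E) (i : Fin n) :
    ∂[A.b x i] ∂[A.b x i] u x = A.lam x i := by simp [A.diag]

theorem contDiff_hess (A : EllipticFrame n N₁ m D₁ D₂ u) (v w : E) :
    ContDiff ℝ ∞ ∂[v] ∂[w] u :=
  contDiff_dirDeriv (contDiff_dirDeriv A.smooth w) v

theorem phi_le_tr (A : EllipticFrame n N₁ m D₁ D₂ u) (x : E) (i : Fin n) : A.phi x i ≤ A.tr x :=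
  Finset.single_le_sum (fun j _ => (A.pos x j).le) (Finset.mem_univ i)

theorem tr_pos [NeZero n] (A : EllipticFrame n N₁ m D₁ D₂ u) (x : E) : 0 < A.tr x :=
  (A.pos x 0).trans_le (A.phi_le_tr x 0)

theorem norm_b (A : EllipticFrame n N₁ m D₁ D₂ u) (x : E) (i : Fin n) : ‖A.b x i‖ = 1 :=
  (A.b x).orthonormal.1 i

theorem L_self (A : EllipticFrame n N₁ m D₁ D₂ u) (x : E) : A.L u x = 1 := by
  simp only [L, A.diag_self, A.euler]

theorem L_dirDeriv (A : EllipticFrame n N₁ m D₁ D₂ u) {g : E → ℝ} (hg : ContDiff ℝ ∞ g) (v x : E) :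
    A.L ∂[v] g x = ∑ i, A.phi x i * ∂[v] ∂[A.b x i] ∂[A.b x i] g x := by
  simp only [L, dirDeriv_hess_comm hg v]

theorem L_dirDeriv_dirDeriv (A : EllipticFrame n N₁ m D₁ D₂ u) (x v : E) :
    A.L ∂[v] ∂[v] u x = ∑ i, A.phi x i * ∂[v] ∂[v] ∂[A.b x i] ∂[A.b x i] u x := by
  simp only [A.L_dirDeriv (contDiff_dirDeriv A.smooth v), dirDeriv_hess_comm A.smooth v]

theorem hess_basis_sum (A : EllipticFrame n N₁ m D₁ D₂ u) (x : E) (σ : Fin n → ℝ) (i : Fin n) :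
    ∂[A.b x i] ∂[∑ k, σ k • A.b x k] u x = σ i * A.lam x i := by
  rw [dirDeriv_comm (A.smooth.of_le two_le_infty), dirDeriv_sum_left,
    Finset.sum_eq_single i (fun k _ hk => by simp [A.diag, hk]) (by simp), A.diag_self, smul_eq_mul]

theorem hess_basis_apply (A : EllipticFrame n N₁ m D₁ D₂ u) (x v : E) (i : Fin n) :
    ∂[A.b x i] ∂[v] u x = A.lam x i * inner ℝ (A.b x i) v := by
  conv_lhs => rw [← (A.b x).sum_repr' v, A.hess_basis_sum]
  exact mul_comm _ _

theorem hess_apply (A : EllipticFrame n N₁ m D₁ D₂ u) (x v : E) :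
    ∂[v] ∂[v] u x = ∑ i, A.lam x i * inner ℝ (A.b x i) v ^ 2 :=
  hess_apply_of_diag (A.smooth.of_le two_le_infty) (A.b x) (A.diag x) v

/-- Averaging `comp` over the cyclic shifts of the basis replaces each coefficient by the mean. -/
theorem laplacian_pos [NeZero n] (A : EllipticFrame n N₁ m D₁ D₂ u) (y : E)
    (b' : OrthonormalBasis (Fin n) ℝ E) : 0 < ∑ i, ∂[b' i] ∂[b' i] u y := by
  have hshift : ∀ k : Fin n, 1 ≤ ∑ i, A.phi y i * ∂[b' (i + k)] ∂[b' (i + k)] u y := fun k => by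
    simpa using A.comp y y (b'.reindex (Equiv.addRight k).symm)
  have hsum : ∑ k : Fin n, ∑ i, A.phi y i * ∂[b' (i + k)] ∂[b' (i + k)] u y =
      A.tr y * ∑ i, ∂[b' i] ∂[b' i] u y := by
    rw [Finset.sum_comm, tr, Finset.sum_mul]
    refine Finset.sum_congr rfl fun i _ => ?_
    rw [← Finset.mul_sum]
    exact congrArg _ (Equiv.sum_comp (Equiv.addLeft i) fun j => ∂[b' j] ∂[b' j] u y)
  refine pos_of_mul_pos_right ?_ (A.tr_pos y).le
  rw [← hsum]
  exact Finset.sum_pos (fun k _ => one_pos.trans_le (hshift k)) Finset.univ_nonempty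

/-- The Hessian is invariant under `u ↦ R⁻² u(x₀ + R ·)`, and so is the frame. -/
def rescale (A : EllipticFrame n N₁ m D₁ D₂ u) (x₀ : E) {R : ℝ} (hR : 0 < R) :
    EllipticFrame n N₁ m D₁ D₂ fun x => R⁻¹ ^ 2 * u (x₀ + R • x) where
  smooth := contDiff_const.mul (A.smooth.comp (contDiff_const.add (contDiff_id.const_smul R)))
  b x := A.b (x₀ + R • x)
  lam x := A.lam (x₀ + R • x)
  phi x := A.phi (x₀ + R • x)
  diag x i j := by rw [hess_rescale A.smooth x₀ hR]; exact A.diag _ i j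
  pos x := A.pos _
  euler x := A.euler _
  comp x y b' := by simp only [hess_rescale A.smooth x₀ hR]; exact A.comp _ _ b'
  condN x := A.condN _
  condD x := A.condD _

end EllipticFrame

end EllipticFrame

/-! ### The second variation along rotated frames -/

section SecondVariation

variable {E : Type*} [NormedAddCommGroup E] [InnerProductSpace ℝ E] [FiniteDimensional ℝ E]
  {n m : ℕ} {N₁ D₁ D₂ : ℝ} {u : E → ℝ}

theorem hasTwoJet_exp_smul_apply (K : E →L[ℝ] E) (v : E) :
    HasTwoJet (fun t : ℝ => NormedSpace.exp (t • K) v) v (K v) (K (K v)) := by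
  let : NormedAlgebra ℚ (E →L[ℝ] E) := .restrictScalars ℚ ℝ _
  have hderiv : ∀ w t, HasDerivAt (fun t : ℝ => NormedSpace.exp (t • K) w)
      (NormedSpace.exp (t • K) (K w)) t := fun w t => by
    simpa using (hasDerivAt_exp_smul_const K t).clm_apply (hasDerivAt_const t w)
  refine ⟨by simp, fun t => NormedSpace.exp (t • K) (K v), .of_forall (hderiv v), by simp, ?_⟩
  simpa using hderiv (K v) 0

theorem hasTwoJet_hess_exp (hu : ContDiff ℝ ∞ u) (K : E →L[ℝ] E) (x e v : E) :
    HasTwoJet (fun t : ℝ =>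
        ∂[NormedSpace.exp (t • K) v] ∂[NormedSpace.exp (t • K) v] u (x + t • e))
      (∂[v] ∂[v] u x) (∂[e] ∂[v] ∂[v] u x + 2 * ∂[v] ∂[K v] u x)
      (∂[e] ∂[e] ∂[v] ∂[v] u x + 4 * ∂[e] ∂[v] ∂[K v] u x + 2 * ∂[K v] ∂[K v] u x
        + 2 * ∂[v] ∂[K (K v)] u x) := by
  have hu₂ := hu.of_le two_le_infty
  have hH : ContDiff ℝ ∞ (fderiv ℝ (fderiv ℝ u)) :=
    (hu.fderiv_right (m := ∞) (by simp)).fderiv_right (by simp)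
  have hH₁ := contDiff_dirDeriv hH e
  have apply₂ : ∀ {c : E → E →L[ℝ] E →L[ℝ] ℝ}, ContDiff ℝ ∞ c → ∀ v w y,
      ∂[e] (fun y => c y v w) y = ∂[e] c y v w := fun hc v w y => by
    rw [dirDeriv_clm_apply ((hc.clm_apply contDiff_const).differentiable (by simp)),
      dirDeriv_clm_apply (hc.differentiable (by simp))]
  have hess : ∀ v w, ∂[v] ∂[w] u = fun y => fderiv ℝ (fderiv ℝ u) y v w := fun v w =>
    funext (dirDeriv_dirDeriv hu₂ v w)
  have hess₃ : ∀ v w, ∂[e] ∂[v] ∂[w] u = fun y => ∂[e] (fderiv ℝ (fderiv ℝ u)) y v w :=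
    fun v w => by rw [hess]; exact funext (apply₂ hH v w)
  have hess₄ : ∀ v w y, ∂[e] ∂[e] ∂[v] ∂[w] u y = ∂[e] ∂[e] (fderiv ℝ (fderiv ℝ u)) y v w :=
    fun v w y => by rw [hess₃]; exact apply₂ hH₁ v w y
  have hexp := hasTwoJet_exp_smul_apply K v
  have key := ((hasTwoJet_comp_line hH x e).clm_apply hexp).clm_apply hexp
  have c₁ : ∂[K v] ∂[v] u = ∂[v] ∂[K v] u := dirDeriv_comm hu₂ _ _
  have c₂ : ∂[K (K v)] ∂[v] u = ∂[v] ∂[K (K v)] u := dirDeriv_comm hu₂ _ _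
  simp only [add_apply, smul_apply, smul_eq_mul, ← hess₄, ← congrFun (hess₃ _ _),
    ← congrFun (hess _ _), c₁, c₂] at key
  exact key.congr rfl (by ring) (by ring)

theorem exists_skewAdjoint_rotation (b : OrthonormalBasis (Fin n) ℝ E) (j : Fin n) {σ : Fin n → ℝ}
    (hσ : σ j = 0) : ∃ K ∈ skewAdjoint (E →L[ℝ] E), K (b j) = ∑ i, σ i • b i ∧
      K (∑ i, σ i • b i) = (-∑ i, σ i ^ 2) • b j ∧ ∀ i ≠ j, K (b i) = (-σ i) • b j := by
  let s := ∑ i, σ i • b i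
  have inner_s : ∀ i, inner ℝ s (b i) = σ i := fun i => by
    simp [s, sum_inner, inner_smul_left, OrthonormalBasis.inner_eq_ite]
  have inner_js : inner ℝ (b j) s = 0 := by rw [real_inner_comm, inner_s, hσ]
  have inner_ss : inner ℝ s s = ∑ i, σ i ^ 2 := by
    conv_lhs => rw [show s = ∑ i, σ i • b i from rfl, inner_sum]
    simp [inner_smul_right, inner_s, s, sq]
  refine ⟨InnerProductSpace.rankOne ℝ s (b j) - InnerProductSpace.rankOne ℝ (b j) s,
    by simp [skewAdjoint.mem_iff, ContinuousLinearMap.star_eq_adjoint], ?_, ?_, fun i hi => ?_⟩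
  · change inner ℝ (b j) (b j) • s - inner ℝ s (b j) • b j = s
    simp [inner_s, hσ]
  · change inner ℝ (b j) s • s - inner ℝ s s • b j = (-∑ i, σ i ^ 2) • b j
    rw [inner_js, inner_ss, zero_smul, zero_sub, neg_smul]
  · simp [inner_s, hi.symm]

namespace EllipticFrame

/-- By `comp`, the sum `∑ φᵢ D²u(x + te)(e^{tK}bᵢ, e^{tK}bᵢ)` is minimal at `t = 0`: a skew `K`
generates rotations. -/
theorem second_variation (A : EllipticFrame n N₁ m D₁ D₂ u) {K : E →L[ℝ] E}
    (hK : K ∈ skewAdjoint (E →L[ℝ] E)) (x e : E) :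
    ∑ i, A.phi x i * (∂[e] ∂[A.b x i] ∂[A.b x i] u x + 2 * ∂[A.b x i] ∂[K (A.b x i)] u x) = 0 ∧
      0 ≤ ∑ i, A.phi x i * (∂[e] ∂[e] ∂[A.b x i] ∂[A.b x i] u x
        + 4 * ∂[e] ∂[A.b x i] ∂[K (A.b x i)] u x + 2 * ∂[K (A.b x i)] ∂[K (A.b x i)] u x
        + 2 * ∂[A.b x i] ∂[K (K (A.b x i))] u x) := by
  let : NormedAlgebra ℚ (E →L[ℝ] E) := .restrictScalars ℚ ℝ _
  refine (HasTwoJet.sum Finset.univ fun i _ =>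
    (hasTwoJet_hess_exp A.smooth K x e (A.b x i)).const_mul (A.phi x i)).of_isLocalMin ?_
  refine .of_forall fun t => ?_
  have hrot := A.comp x (x + t • e) ((A.b x).map (Unitary.linearIsometryEquiv
    ⟨_, NormedSpace.exp_mem_unitary_of_mem_skewAdjoint (skewAdjoint.smul_mem t hK)⟩))
  have hb : ∀ i, ((A.b x).map (Unitary.linearIsometryEquiv
      ⟨_, NormedSpace.exp_mem_unitary_of_mem_skewAdjoint (skewAdjoint.smul_mem t hK)⟩)) i =
      NormedSpace.exp (t • K) (A.b x i) := fun i => rfl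
  simpa [hb, A.diag_self, A.euler] using hrot

theorem L_dirDeriv_self (A : EllipticFrame n N₁ m D₁ D₂ u) (x v : E) : A.L ∂[v] u x = 0 := by
  rw [A.L_dirDeriv A.smooth]
  simpa [dirDeriv_zero_left, dirDeriv_const] using (A.second_variation (zero_mem _) x v).1

theorem L_dirDeriv_dirDeriv_nonneg (A : EllipticFrame n N₁ m D₁ D₂ u) (x v : E) :
    0 ≤ A.L ∂[v] ∂[v] u x := by
  rw [A.L_dirDeriv_dirDeriv]
  simpa [dirDeriv_zero_left, dirDeriv_const] using (A.second_variation (zero_mem _) x v).2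

/-- The second variation for the rotation in the plane of `b j` and `∑ σᵢ bᵢ`. -/
theorem rotation_le_L (A : EllipticFrame n N₁ m D₁ D₂ u) (x : E) (j : Fin n) {σ : Fin n → ℝ}
    (hσ : σ j = 0) :
    ∑ i, (A.phi x i - A.phi x j) * (4 * σ i * ∂[A.b x i] ∂[A.b x j] ∂[A.b x j] u x
        - 2 * σ i ^ 2 * (A.lam x j - A.lam x i))
      ≤ A.L ∂[A.b x j] ∂[A.b x j] u x := by
  obtain ⟨K, hK, hKe, hKs, hKb⟩ := exists_skewAdjoint_rotation (A.b x) j hσ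
  set e := A.b x j
  set s := ∑ i, σ i • A.b x i
  let q : Fin n → ℝ := fun i => 4 * σ i * ∂[A.b x i] ∂[e] ∂[e] u x
    - 2 * σ i ^ 2 * (A.lam x j - A.lam x i)
  have hess_e : ∂[e] ∂[e] u x = A.lam x j := A.diag_self x j
  have hess_s : ∀ i, ∂[A.b x i] ∂[s] u x = σ i * A.lam x i := A.hess_basis_sum x σ
  have sum_q : ∑ k, q k = 4 * ∂[e] ∂[e] ∂[s] u x + 2 * ∂[s] ∂[s] u x + 2 * ∂[e] ∂[K s] u x := by
    rw [hKs, dirDeriv_hess_comm A.smooth, dirDeriv_sum_left, dirDeriv_sum_left,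
      dirDeriv_dirDeriv_smul A.smooth]
    simp only [q, hess_e, hess_s, smul_eq_mul, Finset.mul_sum, neg_mul, Finset.sum_mul,
      ← Finset.sum_neg_distrib, ← Finset.sum_add_distrib]
    exact Finset.sum_congr rfl fun k _ => by ring
  have term_eq : ∀ i, ∂[e] ∂[e] ∂[A.b x i] ∂[A.b x i] u x
        + 4 * ∂[e] ∂[A.b x i] ∂[K (A.b x i)] u x + 2 * ∂[K (A.b x i)] ∂[K (A.b x i)] u x
        + 2 * ∂[A.b x i] ∂[K (K (A.b x i))] u x =
      ∂[e] ∂[e] ∂[A.b x i] ∂[A.b x i] u x - q i + if i = j then ∑ k, q k else 0 := fun i => by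
    rcases eq_or_ne i j with rfl | hij
    · rw [hKe, if_pos rfl, sum_q]
      simp only [q, hσ]; ring
    · have hess_smul : ∂[e] ∂[A.b x i] ∂[(-σ i) • e] u x =
          -σ i * ∂[A.b x i] ∂[e] ∂[e] u x := by
        rw [dirDeriv_dirDeriv_smul A.smooth, dirDeriv_const_mul
          ((A.contDiff_hess _ _).differentiable (by simp)),
          dirDeriv_comm ((contDiff_dirDeriv A.smooth e).of_le two_le_infty)]
      rw [hKb i hij, map_smul, hKe, if_neg hij, hess_smul]
      simp only [dirDeriv_dirDeriv_smul A.smooth, dirDeriv_smul_left, hess_s, hess_e, smul_eq_mul,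
        q]
      ring
  change ∑ i, (A.phi x i - A.phi x j) * q i ≤ A.L ∂[e] ∂[e] u x
  have key := (A.second_variation hK x e).2
  simp only [term_eq, mul_add, mul_sub, mul_ite, mul_zero, Finset.sum_add_distrib,
    Finset.sum_sub_distrib, Finset.sum_ite_eq', Finset.mem_univ, if_true,
    ← A.L_dirDeriv_dirDeriv] at key
  simp only [sub_mul, Finset.sum_sub_distrib, ← Finset.mul_sum]
  linarith

end EllipticFrame

end SecondVariation

/-! ### Interior gradient and Hessian estimates -/

section WeightedMax

variable {E : Type*} [NormedAddCommGroup E] {u : E → ℝ} {Ψ : E → E → ℝ} {k : ℕ} {c C ε : ℝ}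
  {z e v : E}

theorem isCompact_sublevel [ProperSpace E] (hu : Continuous u) (hc : 0 < c)
    (hgrowth : ∀ x, c * ‖x‖ ^ 2 - C ≤ u x) (t : ℝ) : IsCompact {x | u x ≤ t} := by
  refine Metric.isCompact_of_isClosed_isBounded (isClosed_le hu continuous_const)
    ((Metric.isBounded_closedBall (x := (0 : E)) (r := √((t + C) / c))).subset fun x hx => ?_)
  rw [mem_closedBall_zero_iff]
  refine Real.le_sqrt_of_sq_le ((le_div_iff₀ hc).2 ?_)
  linarith [hgrowth x, hx.out]

/-- The pair `(z, e)` maximizes `Ψ e z (1 - u z)ᵏ exp (ε |z|²)`, with a positive value, over the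
unit vectors `e` and the sublevel set `{u ≤ 1}`. The gradient and Hessian estimates are read off at
such a pair for `Ψ e = ∂ₑu` and `Ψ e = ∂ₑ∂ₑu`. -/
structure IsWeightedMax (Ψ : E → E → ℝ) (u : E → ℝ) (k : ℕ) (ε : ℝ) (z e : E) : Prop where
  lt_one : u z < 1
  pos : 0 < Ψ e z
  norm_eq : ‖e‖ = 1
  le : ∀ v y, ‖v‖ = 1 → u y ≤ 1 →
    Ψ v y * (1 - u y) ^ k * Real.exp (ε * ‖y‖ ^ 2) ≤ Ψ e z * (1 - u z) ^ k * Real.exp (ε * ‖z‖ ^ 2)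

namespace IsWeightedMax

theorem apply_le (h : IsWeightedMax Ψ u k ε z e) (hv : ‖v‖ = 1) : Ψ v z ≤ Ψ e z := by
  have hz : 0 < 1 - u z := sub_pos.2 h.lt_one
  simpa only [mul_assoc] using
    le_of_mul_le_mul_right (by simpa only [mul_assoc] using h.le v z hv h.lt_one.le)
      (show 0 < (1 - u z) ^ k * Real.exp (ε * ‖z‖ ^ 2) by positivity)

theorem of_le (h : IsWeightedMax Ψ u k ε z e) (hv : ‖v‖ = 1) (hle : Ψ e z ≤ Ψ v z) :
    IsWeightedMax Ψ u k ε z v := by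
  have heq : Ψ v z = Ψ e z := le_antisymm (h.apply_le hv) hle
  exact ⟨h.lt_one, heq ▸ h.pos, hv, heq ▸ h.le⟩

theorem isLocalMax (h : IsWeightedMax Ψ u k ε z e) (hu : Continuous u) :
    IsLocalMax (fun y => Ψ e y * (1 - u y) ^ k * Real.exp (ε * ‖y‖ ^ 2)) z := by
  filter_upwards [hu.continuousAt.eventually (gt_mem_nhds h.lt_one)] with y hy
  exact h.le e y h.norm_eq hy.le

end IsWeightedMax

theorem weighted_le_of_isWeightedMax [ProperSpace E] (hΨ : Continuous fun p : E × E => Ψ p.1 p.2)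
    (hu : Continuous u) (hc : 0 < c) (hgrowth : ∀ x, c * ‖x‖ ^ 2 - 1 ≤ u x) (hk : k ≠ 0)
    (hε : 0 ≤ ε) {K : ℝ} (hK : 0 ≤ K)
    (hmax : ∀ z e, IsWeightedMax Ψ u k ε z e → Ψ e z * (1 - u z) ^ k ≤ K) {x : E} (hx : u x < 1)
    (hv : ‖v‖ = 1) : Ψ v x * (1 - u x) ^ k ≤ K * Real.exp (ε * (2 / c)) := by
  let Φ : E × E → ℝ := fun p => Ψ p.1 p.2 * (1 - u p.2) ^ k * Real.exp (ε * ‖p.2‖ ^ 2)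
  have hΦ : Continuous Φ := by fun_prop
  rcases le_or_gt (Ψ v x * (1 - u x) ^ k) 0 with hneg | hpos
  · exact hneg.trans (by positivity)
  obtain ⟨⟨e, z⟩, ⟨he, hz⟩, hmaxOn⟩ := ((isCompact_sphere (0 : E) 1).prod
    (isCompact_sublevel hu hc hgrowth 1)).exists_isMaxOn
    ⟨(v, x), by simpa using hv, hx.le⟩ hΦ.continuousOn
  have hle : ∀ w y, ‖w‖ = 1 → u y ≤ 1 → Φ (w, y) ≤ Φ (e, z) := fun w y hw hy =>
    hmaxOn (show (w, y) ∈ _ from ⟨by simpa using hw, hy⟩)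
  have hxΦ : Ψ v x * (1 - u x) ^ k ≤ Φ (v, x) :=
    le_mul_of_one_le_right hpos.le (Real.one_le_exp (by positivity))
  have hzpos : 0 < Ψ e z * (1 - u z) ^ k := pos_of_mul_pos_left
    (hpos.trans_le (hxΦ.trans (hle v x hv hx.le))) (Real.exp_pos _).le
  have hz1 : u z < 1 := lt_of_le_of_ne hz fun h => by simp [h, hk] at hzpos
  have hzK := hmax z e ⟨hz1, pos_of_mul_pos_left hzpos (pow_nonneg (sub_nonneg.2 hz) k),
    by simpa using he, hle⟩
  have hz2 : ‖z‖ ^ 2 ≤ 2 / c := by rw [le_div_iff₀ hc]; linarith [hgrowth z]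
  calc Ψ v x * (1 - u x) ^ k ≤ Φ (e, z) := hxΦ.trans (hle v x hv hx.le)
    _ ≤ K * Real.exp (ε * (2 / c)) := by
      refine mul_le_mul hzK (Real.exp_le_exp.2 ?_) (Real.exp_pos _).le hK
      gcongr

end WeightedMax

section WeightedMaxFrame

variable {E : Type*} [NormedAddCommGroup E] [InnerProductSpace ℝ E] {n m k : ℕ}
  {N₁ D₁ D₂ ε : ℝ} {u : E → ℝ} {Ψ : E → E → ℝ} {z e : E}

theorem inner_sq_le {z v : E} {P : ℝ} (hz : ‖z‖ ^ 2 ≤ P) (hv : ‖v‖ = 1) : inner ℝ z v ^ 2 ≤ P := by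
  rw [← sq_abs]
  refine (pow_le_pow_left₀ (abs_nonneg _) (abs_real_inner_le_norm z v) 2).trans ?_
  rwa [hv, mul_one]

theorem IsWeightedMax.dirDeriv_div (h : IsWeightedMax Ψ u k ε z e) (hu : ContDiff ℝ ∞ u)
    (hΨ : ContDiff ℝ ∞ (Ψ e)) (v : E) :
    ∂[v] (Ψ e) z / Ψ e z = k * (∂[v] u z / (1 - u z)) - 2 * ε * inner ℝ z v := by
  have test := (dirDeriv_of_isLocalMax_weighted hΨ (contDiff_const.sub hu) k ε
    (h.isLocalMax hu.continuous) h.pos (sub_pos.2 h.lt_one) v).1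
  rw [dirDeriv_const_sub, neg_div] at test
  linarith

namespace EllipticFrame

theorem sum_inner_sq (A : EllipticFrame n N₁ m D₁ D₂ u) (x v : E) :
    ∑ i, inner ℝ (A.b x i) v ^ 2 = ‖v‖ ^ 2 := (A.b x).sum_sq_inner_right v

theorem L_div_le_of_isWeightedMax (A : EllipticFrame n N₁ m D₁ D₂ u)
    (h : IsWeightedMax Ψ u k ε z e) (hΨ : ContDiff ℝ ∞ (Ψ e)) :
    A.L (Ψ e) z / Ψ e z + 2 * ε * A.tr z ≤ k / (1 - u z) +
      ∑ i, A.phi z i * (k * (∂[A.b z i] u z / (1 - u z)) ^ 2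
        + (∂[A.b z i] (Ψ e) z / Ψ e z) ^ 2) := by
  have hu := A.smooth
  have test : ∀ i, A.phi z i * (∂[A.b z i] ∂[A.b z i] (Ψ e) z / Ψ e z + 2 * ε) ≤
      A.phi z i * (k * A.lam z i / (1 - u z) + (k * (∂[A.b z i] u z / (1 - u z)) ^ 2
        + (∂[A.b z i] (Ψ e) z / Ψ e z) ^ 2)) := fun i => by
    have t := (dirDeriv_of_isLocalMax_weighted hΨ (contDiff_const.sub hu) k ε
      (h.isLocalMax hu.continuous) h.pos (sub_pos.2 h.lt_one) (A.b z i)).2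
    simp only [dirDeriv_const_sub, dirDeriv_neg, A.norm_b, A.diag_self] at t
    refine mul_le_mul_of_nonneg_left ?_ (A.pos z i).le
    ring_nf at t ⊢
    linarith
  have hsum := Finset.sum_le_sum fun i (_ : i ∈ Finset.univ) => test i
  have hL : ∑ i, A.phi z i * (∂[A.b z i] ∂[A.b z i] (Ψ e) z / Ψ e z + 2 * ε) =
      A.L (Ψ e) z / Ψ e z + 2 * ε * A.tr z := by
    simp only [L, tr, Finset.sum_div, Finset.mul_sum, ← Finset.sum_add_distrib]
    exact Finset.sum_congr rfl fun i _ => by ring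
  have hR : ∑ i, A.phi z i * (k * A.lam z i / (1 - u z)) = k / (1 - u z) := by
    calc _ = k / (1 - u z) * ∑ i, A.phi z i * A.lam z i := by
          rw [Finset.mul_sum]; exact Finset.sum_congr rfl fun i _ => by ring
      _ = k / (1 - u z) := by rw [A.euler, mul_one]
  rw [hL] at hsum
  refine hsum.trans_eq ?_
  simp only [mul_add (A.phi z _) (k * A.lam z _ / _), Finset.sum_add_distrib, hR]

theorem lam_le (A : EllipticFrame n N₁ m D₁ D₂ u) (hN₁ : 0 ≤ N₁) (hD₁ : 0 ≤ D₁) {C : ℝ}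
    (hC : 1 ≤ C) {x : E} (htr : A.tr x ≤ C) {i : Fin n} (hi : D₁ < A.lam x i) :
    A.lam x i ≤ N₁ * C ^ m * D₂ := by
  calc A.lam x i ≤ N₁ * C ^ m * A.phi x i * A.lam x i :=
        le_mul_of_one_le_left (hD₁.trans hi.le) (A.condN x C hC htr i)
    _ = N₁ * C ^ m * (A.phi x i * A.lam x i) := mul_assoc _ _ _
    _ ≤ N₁ * C ^ m * D₂ := mul_le_mul_of_nonneg_left (A.condD x i hi) (by positivity)

end EllipticFrame

end WeightedMaxFrame

section GradientEstimate

variable {E : Type*} [NormedAddCommGroup E] [InnerProductSpace ℝ E] {n m k : ℕ}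
  {N₁ D₁ D₂ c ε P : ℝ} {u : E → ℝ} {z e : E}

theorem eq_mul_inner_of_forall_le [CompleteSpace E] (ℓ : E →L[ℝ] ℝ) (he : ‖e‖ = 1)
    (hmax : ∀ v, ‖v‖ = 1 → ℓ v ≤ ℓ e) (v : E) : ℓ v = ℓ e * inner ℝ e v := by
  obtain ⟨g, rfl⟩ := (InnerProductSpace.toDual ℝ E).surjective ℓ
  simp only [InnerProductSpace.toDual_apply_apply] at hmax ⊢
  have hge : inner ℝ g e = ‖g‖ := by
    refine le_antisymm (by simpa [he] using real_inner_le_norm g e) ?_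
    rcases eq_or_ne g 0 with rfl | hg
    · simp
    · have h := hmax (‖g‖⁻¹ • g) (norm_smul_inv_norm (𝕜 := ℝ) hg)
      rwa [inner_smul_right, real_inner_self_eq_norm_sq, sq, inv_mul_cancel_left₀
        (norm_ne_zero_iff.2 hg)] at h
  have heq := (inner_eq_norm_mul_iff_real (x := g) (y := e)).1 (by rw [hge, he, mul_one])
  rw [he, one_smul] at heq
  conv_lhs => rw [heq, inner_smul_left]
  rw [hge]; rfl

theorem lower_bound_of_critical {a l g H κ q : ℝ} (hg : 0 < g) (hH : 0 < H) (hκ : 0 ≤ κ)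
    (hε : 0 ≤ ε) (hcrit : l * a / g = κ * (g * a / H) - 2 * ε * q)
    (hlt : 4 * ε * |q| < |κ * (g * a / H)|) : κ * g ^ 2 / (2 * H) ≤ l := by
  have ha : a ≠ 0 := by
    rintro rfl
    simp only [mul_zero, zero_div, abs_zero] at hlt
    exact absurd hlt (not_lt.2 (by positivity))
  have hla : l * a ^ 2 = κ * g ^ 2 / H * a ^ 2 - 2 * ε * q * (g * a) := by
    rw [div_eq_iff hg.ne'] at hcrit
    linear_combination a * hcrit
  have hsmall : 4 * ε * q * (g * a) ≤ κ * g ^ 2 / H * a ^ 2 := by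
    calc 4 * ε * q * (g * a) ≤ 4 * ε * |q| * |g * a| := by
          rw [mul_assoc (4 * ε), mul_assoc (4 * ε), ← abs_mul]
          gcongr
          exact le_abs_self _
      _ ≤ |κ * (g * a / H)| * |g * a| := by gcongr
      _ = κ * g ^ 2 / H * a ^ 2 := by
          rw [← abs_mul, abs_of_nonneg]
          · ring
          · exact (by positivity : 0 ≤ κ / H * (g * a) ^ 2).trans_eq (by ring)
  refine le_of_mul_le_mul_right (a := a ^ 2) ?_ (by positivity)
  rw [hla]
  have : κ * g ^ 2 / (2 * H) * a ^ 2 = κ * g ^ 2 / H * a ^ 2 / 2 := by ring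
  linarith

theorem IsWeightedMax.dirDeriv_eq [CompleteSpace E]
    (h : IsWeightedMax (fun v => ∂[v] u) u k ε z e) (v : E) : ∂[v] u z = ∂[e] u z * inner ℝ e v :=
  eq_mul_inner_of_forall_le (fderiv ℝ u z) h.norm_eq (fun _ hv => h.apply_le hv) v

/-- Where the gradient term exceeds the error `ε |z|²`, the critical point equation makes `κ r²`
small compared with the corresponding eigenvalue, so condition D controls it. -/
theorem gradient_term_le {a l φ g H κ q : ℝ} (hφ : 0 < φ) (hg : 0 < g) (hH : 0 < H) (hκ : 1 ≤ κ)
    (hε : 0 ≤ ε) (hq : q ^ 2 ≤ P) (hεP : 56 * (ε * P) ≤ 1) (hD₂ : 0 ≤ D₂)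
    (hcrit : l * a / g = κ * (g * a / H) - 2 * ε * q) (hD : κ * g ^ 2 / (2 * H) ≤ l → φ * l ≤ D₂) :
    φ * (κ * (g * a / H) ^ 2 + (l * a / g) ^ 2) ≤ ε * φ + 8 * κ * D₂ / H * a ^ 2 := by
  set r := κ * (g * a / H) with hr
  have hr2 : κ * (g * a / H) ^ 2 ≤ r ^ 2 := by
    rw [hr, mul_pow]
    exact mul_le_mul_of_nonneg_right (le_self_pow₀ hκ two_ne_zero) (sq_nonneg _)
  have hterm : κ * (g * a / H) ^ 2 + (l * a / g) ^ 2 ≤ 3 * r ^ 2 + 8 * (ε * q) ^ 2 := by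
    rw [hcrit]
    linarith [sq_nonneg (r + 2 * ε * q)]
  rcases le_or_gt |r| (4 * ε * |q|) with hle | hlt
  · have hr16 : r ^ 2 ≤ 16 * (ε * q) ^ 2 := by
      calc r ^ 2 = |r| ^ 2 := (sq_abs r).symm
        _ ≤ (4 * ε * |q|) ^ 2 := by gcongr
        _ = 16 * (ε * q) ^ 2 := by rw [mul_pow, sq_abs]; ring
    have hsmall : 56 * (ε * q) ^ 2 ≤ ε := by
      calc 56 * (ε * q) ^ 2 = ε * (56 * (ε * q ^ 2)) := by ring
        _ ≤ ε * (56 * (ε * P)) := by gcongr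
        _ ≤ ε := mul_le_of_le_one_right hε hεP
    calc _ ≤ φ * ε := mul_le_mul_of_nonneg_left (by linarith) hφ.le
      _ ≤ ε * φ + 8 * κ * D₂ / H * a ^ 2 := by
        rw [mul_comm]; exact le_add_of_nonneg_right (by positivity)
  · have hl := lower_bound_of_critical hg hH (one_pos.trans_le hκ).le hε hcrit hlt
    have hr4 : 16 * (ε * q) ^ 2 ≤ r ^ 2 := by
      calc 16 * (ε * q) ^ 2 = (4 * ε * |q|) ^ 2 := by rw [mul_pow (4 * ε), sq_abs]; ring
        _ ≤ |r| ^ 2 := by gcongr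
        _ = r ^ 2 := sq_abs r
    calc _ ≤ φ * (4 * r ^ 2) :=
          mul_le_mul_of_nonneg_left (by linarith [sq_nonneg r]) hφ.le
      _ = φ * (κ * g ^ 2 / (2 * H)) * (8 * κ / H * a ^ 2) := by rw [hr]; field_simp; ring
      _ ≤ D₂ * (8 * κ / H * a ^ 2) := by
        refine mul_le_mul_of_nonneg_right ?_ (by positivity)
        exact (mul_le_mul_of_nonneg_left hl hφ.le).trans (hD hl)
      _ = 8 * κ * D₂ / H * a ^ 2 := by ring
      _ ≤ ε * φ + 8 * κ * D₂ / H * a ^ 2 := le_add_of_nonneg_left (by positivity)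

theorem sq_le_of_abs_le {N a g H κ q : ℝ} (hκ : 1 ≤ κ) (hε : 0 ≤ ε) (hH : 0 < H)
    (ha : 1 ≤ N * a ^ 2) (hq : q ^ 2 ≤ P) (hεP : 56 * (ε * P) ≤ 1)
    (hle : |κ * (g * a / H)| ≤ 4 * ε * |q|) : g ^ 2 ≤ N * ε * H ^ 2 := by
  have hN : 0 ≤ N := le_of_not_gt fun h => by nlinarith [sq_nonneg a]
  have hr : (g * a / H) ^ 2 ≤ ε := by
    calc (g * a / H) ^ 2 ≤ (κ * (g * a / H)) ^ 2 := by
          rw [mul_pow κ]; exact le_mul_of_one_le_left (sq_nonneg _) (one_le_pow₀ hκ)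
      _ ≤ (4 * ε * |q|) ^ 2 := sq_le_sq.2 (hle.trans (le_abs_self _))
      _ = 16 * ε * (ε * q ^ 2) := by rw [mul_pow, sq_abs]; ring
      _ ≤ 16 * ε * (ε * P) := by gcongr
      _ ≤ ε := by nlinarith
  rw [div_pow, div_le_iff₀ (by positivity)] at hr
  calc g ^ 2 ≤ N * a ^ 2 * g ^ 2 := le_mul_of_one_le_left (sq_nonneg g) ha
    _ = N * (g * a) ^ 2 := by ring
    _ ≤ N * (ε * H ^ 2) := by gcongr
    _ = N * ε * H ^ 2 := by ring

namespace EllipticFrame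

theorem gradient_critical [FiniteDimensional ℝ E] (A : EllipticFrame n N₁ m D₁ D₂ u)
    (h : IsWeightedMax (fun v => ∂[v] u) u k ε z e) (i : Fin n) :
    A.lam z i * inner ℝ (A.b z i) e / ∂[e] u z =
      k * (∂[e] u z * inner ℝ (A.b z i) e / (1 - u z)) - 2 * ε * inner ℝ z (A.b z i) := by
  have := FiniteDimensional.complete ℝ E
  rw [← A.hess_basis_apply, real_inner_comm, ← h.dirDeriv_eq]
  exact h.dirDeriv_div A.smooth (contDiff_dirDeriv A.smooth e) _

theorem gradient_tr_le [FiniteDimensional ℝ E] (A : EllipticFrame n N₁ m D₁ D₂ u)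
    (h : IsWeightedMax (fun v => ∂[v] u) u k ε z e) (hk : k ≠ 0) (hε : 0 ≤ ε) (hD₂ : 0 ≤ D₂)
    (hz : ‖z‖ ^ 2 ≤ P) (hεP : 56 * (ε * P) ≤ 1)
    (hlarge : D₁ < k * (∂[e] u z) ^ 2 / (2 * (1 - u z))) :
    ε * A.tr z ≤ k * (1 + 8 * D₂) / (1 - u z) := by
  have := FiniteDimensional.complete ℝ E
  have hk1 : (1 : ℝ) ≤ k := by exact_mod_cast Nat.one_le_iff_ne_zero.2 hk
  have hmax := A.L_div_le_of_isWeightedMax h (contDiff_dirDeriv A.smooth e)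
  simp only [A.L_dirDeriv_self, zero_div, zero_add, A.hess_basis_apply] at hmax
  have hterm := fun i => gradient_term_le (A.pos z i) h.pos (sub_pos.2 h.lt_one) hk1 hε
    (inner_sq_le hz (A.norm_b z i)) hεP hD₂ (A.gradient_critical h i)
    fun hl => A.condD z i (hlarge.trans_le hl)
  have hgrad : ∀ i, ∂[A.b z i] u z = ∂[e] u z * inner ℝ (A.b z i) e := fun i => by
    rw [h.dirDeriv_eq, real_inner_comm]
  simp only [hgrad] at hmax
  have hsum := hmax.trans (add_le_add_right (Finset.sum_le_sum fun i _ => hterm i) _)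
  rw [Finset.sum_add_distrib, ← Finset.mul_sum, ← Finset.mul_sum, A.sum_inner_sq, h.norm_eq] at hsum
  have : k * (1 + 8 * D₂) / (1 - u z) = k / (1 - u z) + 8 * k * D₂ / (1 - u z) * 1 ^ 2 := by ring
  rw [this]
  change _ ≤ _ + (ε * A.tr z + _) at hsum
  linarith

theorem exists_one_le_mul_inner_sq [NeZero n] (A : EllipticFrame n N₁ m D₁ D₂ u) (x : E)
    (he : ‖e‖ = 1) : ∃ i, 1 ≤ n * inner ℝ (A.b x i) e ^ 2 := by
  obtain ⟨i, -, hi⟩ := Finset.exists_le_of_sum_le (s := Finset.univ) Finset.univ_nonempty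
    (f := fun _ : Fin n => (n : ℝ)⁻¹) (g := fun i => inner ℝ (A.b x i) e ^ 2)
    (by simp [A.sum_inner_sq, he])
  exact ⟨i, (inv_le_iff_one_le_mul₀' (by exact_mod_cast NeZero.pos n)).1 hi⟩

theorem gradient_sq_le [NeZero n] [FiniteDimensional ℝ E] (A : EllipticFrame n N₁ m D₁ D₂ u)
    (h : IsWeightedMax (fun v => ∂[v] u) u k ε z e) (hk : k ≠ 0) (hε : 0 < ε) (hN₁ : 0 ≤ N₁)
    (hD₁ : 0 ≤ D₁) (hD₂ : 0 ≤ D₂) (hz : ‖z‖ ^ 2 ≤ P) (hεP : 56 * (ε * P) ≤ 1)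
    (hu : 1 - u z ≤ 2) {C : ℝ} (hC : 2 + k * (1 + 8 * D₂) / ε ≤ C) :
    ∂[e] u z ^ 2 ≤ 2 * (1 - u z) * D₁ + n * ε * (1 - u z) ^ 2
      + 2 * (1 - u z) * (N₁ * (C / (1 - u z)) ^ m * D₂) := by
  set H := 1 - u z
  set g := ∂[e] u z
  have hg0 : 0 < g := h.pos
  have hH0 : 0 < H := sub_pos.2 h.lt_one
  have hk1 : (1 : ℝ) ≤ k := by exact_mod_cast Nat.one_le_iff_ne_zero.2 hk
  have hC2 : 2 ≤ C := le_trans (le_add_of_nonneg_right (by positivity)) hC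
  have h₁ : 0 ≤ 2 * H * D₁ := by positivity
  have h₂ : 0 ≤ n * ε * H ^ 2 := by positivity
  have h₃ : 0 ≤ 2 * H * (N₁ * (C / H) ^ m * D₂) := by positivity
  have hgk : g ^ 2 ≤ 2 * H * (k * g ^ 2 / (2 * H)) := by
    rw [mul_div_cancel₀ _ (by positivity)]
    exact le_mul_of_one_le_left (sq_nonneg g) hk1
  rcases le_or_gt (k * g ^ 2 / (2 * H)) D₁ with hsmall | hlarge
  · linarith [mul_le_mul_of_nonneg_left hsmall (by positivity : 0 ≤ 2 * H)]
  obtain ⟨i, hi⟩ := A.exists_one_le_mul_inner_sq z h.norm_eq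
  have hcrit := A.gradient_critical h i
  rcases le_or_gt |k * (g * inner ℝ (A.b z i) e / H)| (4 * ε * |inner ℝ z (A.b z i)|) with hle | hlt
  · have hq := inner_sq_le hz (A.norm_b z i)
    linarith [sq_le_of_abs_le hk1 hε.le hH0 hi hq hεP hle]
  · have hl := lower_bound_of_critical hg0 hH0 k.cast_nonneg hε.le hcrit hlt
    have htr : A.tr z ≤ C / H := by
      rw [le_div_iff₀ hH0]
      refine le_trans ?_ ((le_add_of_nonneg_left zero_le_two).trans hC)
      rw [le_div_iff₀ hε, mul_right_comm, ← le_div_iff₀ hH0, mul_comm]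
      exact A.gradient_tr_le h hk hε.le hD₂ hz hεP hlarge
    have hlam := A.lam_le hN₁ hD₁ ((one_le_div hH0).2 (hu.trans hC2)) htr (hlarge.trans_le hl)
    linarith [mul_le_mul_of_nonneg_left (hl.trans hlam) (by positivity : 0 ≤ 2 * H)]

end EllipticFrame

/-- The weighted maximum principle with weight `(1 - u)ᵐ⁺¹`: condition N costs a factor
`(1 - u)⁻ᵐ`, and the cutoff one more. -/
theorem exists_gradient_bound [NeZero n] [FiniteDimensional ℝ E] (hc : 0 < c) (hN₁ : 0 ≤ N₁)
    (hD₁ : 0 ≤ D₁) (hD₂ : 0 ≤ D₂) :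
    ∃ K, 0 < K ∧ ∀ u : E → ℝ, EllipticFrame n N₁ m D₁ D₂ u → (∀ x, c * ‖x‖ ^ 2 - 1 ≤ u x) →
      ∀ x v, u x < 1 → ‖v‖ = 1 → ∂[v] u x * (1 - u x) ^ (m + 1) ≤ K := by
  have := FiniteDimensional.proper_real E
  set ε := c / 112 with hε
  set C := 2 + (m + 1 : ℕ) * (1 + 8 * D₂) / ε with hC
  set K := (1 + 4 * D₁ + n * ε * 4) * 2 ^ (m + 1) + 8 * (N₁ * C ^ m * D₂) with hK
  refine ⟨K * Real.exp (ε * (2 / c)), by positivity, fun u A hgrowth x v hx hv => ?_⟩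
  refine weighted_le_of_isWeightedMax (Ψ := fun v => ∂[v] u) ?_ A.smooth.continuous hc hgrowth
    m.succ_ne_zero (by positivity) (by positivity) (fun z e h => ?_) hx hv
  · exact ((A.smooth.continuous_fderiv (by simp)).comp continuous_snd).clm_apply continuous_fst
  · have hz : ‖z‖ ^ 2 ≤ 2 / c := by rw [le_div_iff₀ hc]; linarith [hgrowth z, h.lt_one]
    have hH2 : 1 - u z ≤ 2 := by linarith [hgrowth z, mul_nonneg hc.le (sq_nonneg ‖z‖)]
    have hεP : 56 * (ε * (2 / c)) ≤ 1 := by rw [hε]; exact le_of_eq (by field_simp; norm_num)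
    have hsq := A.gradient_sq_le h m.succ_ne_zero (by positivity) hN₁ hD₁ hD₂ hz hεP hH2 le_rfl
    rw [← hC] at hsq
    set H := 1 - u z
    have hH0 : 0 < H := sub_pos.2 h.lt_one
    have hg : ∂[e] u z ≤ 1 + ∂[e] u z ^ 2 := by linarith [sq_nonneg (∂[e] u z - 1 / 2)]
    calc ∂[e] u z * H ^ (m + 1)
        ≤ (1 + (2 * H * D₁ + n * ε * H ^ 2 + 2 * H * (N₁ * (C / H) ^ m * D₂))) * H ^ (m + 1) := by
          gcongr; linarith
      _ = (1 + 2 * H * D₁ + n * ε * H ^ 2) * H ^ (m + 1) + 2 * H ^ 2 * (N₁ * C ^ m * D₂) := by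
          rw [div_pow, pow_succ]; field_simp; ring
      _ ≤ (1 + 2 * 2 * D₁ + n * ε * 2 ^ 2) * 2 ^ (m + 1) + 2 * 2 ^ 2 * (N₁ * C ^ m * D₂) := by
          gcongr
      _ = K := by rw [hK]; ring

end GradientEstimate

section HessianEstimate

variable {E : Type*} [NormedAddCommGroup E] [InnerProductSpace ℝ E] {n m k : ℕ}
  {N₁ D₁ D₂ c ε P : ℝ} {u : E → ℝ} {z e : E}

namespace EllipticFrame

theorem phi_mul_lam_le (A : EllipticFrame n N₁ m D₁ D₂ u) (hD₁ : 0 ≤ D₁) (hD₂ : 0 ≤ D₂) (x : E)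
    (i : Fin n) : A.phi x i * A.lam x i ≤ D₂ + D₁ * A.phi x i := by
  have hφ := A.pos x i
  rcases le_or_gt (A.lam x i) D₁ with h | h
  · linarith [mul_le_mul_of_nonneg_left h hφ.le]
  · linarith [A.condD x i h, mul_nonneg hD₁ hφ.le]

theorem phi_mul_neg_lam_le (A : EllipticFrame n N₁ m D₁ D₂ u) (hD₁ : 0 ≤ D₁) (hD₂ : 0 ≤ D₂) (x : E)
    (i : Fin n) : A.phi x i * -A.lam x i ≤ n * D₂ + D₁ * A.tr x := by
  have hsplit := Finset.add_sum_erase Finset.univ (fun a => A.phi x a * A.lam x a)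
    (Finset.mem_univ i)
  have hrest : ∑ a ∈ Finset.univ.erase i, A.phi x a * A.lam x a ≤
      ∑ a, (D₂ + D₁ * A.phi x a) :=
    (Finset.sum_le_sum fun a _ => A.phi_mul_lam_le hD₁ hD₂ x a).trans
      (Finset.sum_le_sum_of_subset_of_nonneg (Finset.erase_subset _ _) fun a _ _ =>
        add_nonneg hD₂ (mul_nonneg hD₁ (A.pos x a).le))
  have hsum : ∑ a, (D₂ + D₁ * A.phi x a) = n * D₂ + D₁ * A.tr x := by
    simp [Finset.sum_add_distrib, ← Finset.mul_sum, tr]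
  linarith [A.euler x]

/-- `rotation_le_L` with `σᵢ = ¾ gᵢ` for the `i` where this helps; the factor `3/2 > 1` is what lets
the gain absorb the squared gradient terms of the maximum principle. -/
theorem sum_rotation_gain_le [FiniteDimensional ℝ E] (A : EllipticFrame n N₁ m D₁ D₂ u) (x : E)
    (j : Fin n) (hl : 0 < A.lam x j) {g : Fin n → ℝ}
    (hg : ∀ i, ∂[A.b x i] ∂[A.b x j] ∂[A.b x j] u x = g i * A.lam x j) :
    ∑ i, (if -A.lam x j ≤ 3 * A.lam x i ∧ A.phi x j < A.phi x i
        then 3 / 2 * (A.phi x i - A.phi x j) * g i ^ 2 else 0)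
      ≤ A.L ∂[A.b x j] ∂[A.b x j] u x / A.lam x j := by
  let good : Fin n → Prop := fun i => -A.lam x j ≤ 3 * A.lam x i ∧ A.phi x j < A.phi x i
  classical
  have hrot := A.rotation_le_L x j (σ := fun i => if good i then 3 / 4 * g i else 0)
    (if_neg fun h => h.2.false)
  rw [le_div_iff₀ hl, Finset.sum_mul]
  refine (Finset.sum_le_sum fun i _ => ?_).trans hrot
  by_cases h : good i
  · rw [if_pos h, if_pos h, hg]
    have hgain := mul_nonneg (mul_nonneg (sub_nonneg.2 h.2.le) (sq_nonneg (g i)))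
      (by linarith [h.1] : 0 ≤ A.lam x j + 3 * A.lam x i)
    nlinarith
  · rw [if_neg h, if_neg h]; simp

end EllipticFrame

theorem hessian_term_le {φ φj l lam g H κ p q Q : ℝ} (hφ : 0 < φ) (hφj : 0 < φj) (hl : 0 < l)
    (hκ : 8 ≤ κ) (hε : 0 ≤ ε) (hq : q ^ 2 ≤ P) (hεP : 2 * (ε * P) ≤ 1)
    (hcrit : g = κ * (p / H) - 2 * ε * q) (hneg : φ * -lam ≤ Q) (hQ : φj * l ≤ Q) :
    φ * (κ * (p / H) ^ 2 + g ^ 2)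
      ≤ ε / 2 * φ + 5 * Q / l * g ^ 2
        + if -l ≤ 3 * lam ∧ φj < φ then 3 / 2 * (φ - φj) * g ^ 2 else 0 := by
  have hεq : (ε * q) ^ 2 ≤ ε / 2 := by
    calc (ε * q) ^ 2 = ε * (ε * q ^ 2) := by ring
      _ ≤ ε * (ε * P) := by gcongr
      _ ≤ ε / 2 := by nlinarith
  have hgrad : κ * (p / H) ^ 2 ≤ g ^ 2 / 4 + (ε * q) ^ 2 := by
    have hsq : κ * (κ * (p / H) ^ 2) ≤ 2 * g ^ 2 + 8 * (ε * q) ^ 2 := by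
      calc κ * (κ * (p / H) ^ 2) = (g + 2 * (ε * q)) ^ 2 := by rw [hcrit]; ring
        _ ≤ 2 * g ^ 2 + 8 * (ε * q) ^ 2 := by linarith [sq_nonneg (g - 2 * (ε * q))]
    have h8 : 8 * (κ * (p / H) ^ 2) ≤ κ * (κ * (p / H) ^ 2) :=
      mul_le_mul_of_nonneg_right hκ (by positivity)
    linarith
  have hQ0 : 0 ≤ Q := (by positivity : 0 ≤ φj * l).trans hQ
  have hφj_le : φj ≤ Q / l := (le_div_iff₀ hl).2 hQ
  have : 0 ≤ Q / l := by positivity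
  suffices h : 5 / 4 * φ * g ^ 2 ≤ 5 * (Q / l) * g ^ 2
      + if -l ≤ 3 * lam ∧ φj < φ then 3 / 2 * (φ - φj) * g ^ 2 else 0 by
    have := mul_le_mul_of_nonneg_left (hgrad.trans (add_le_add_right hεq _)) hφ.le
    rw [mul_div_assoc]
    linarith
  split_ifs with hgood
  · rw [← add_mul]
    exact mul_le_mul_of_nonneg_right (by linarith) (sq_nonneg g)
  · rw [add_zero]
    refine mul_le_mul_of_nonneg_right ?_ (sq_nonneg g)
    rcases not_and_or.1 hgood with hlam | hle
    · have : φ ≤ 3 * (Q / l) := by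
        rw [← mul_div_assoc, le_div_iff₀ hl]
        nlinarith
      linarith
    · linarith

namespace EllipticFrame

theorem exists_isWeightedMax_basis [NeZero n] (A : EllipticFrame n N₁ m D₁ D₂ u)
    (h : IsWeightedMax (fun v => ∂[v] ∂[v] u) u k ε z e) :
    ∃ j, IsWeightedMax (fun v => ∂[v] ∂[v] u) u k ε z (A.b z j) := by
  obtain ⟨j, hj⟩ := Finite.exists_max (A.lam z)
  refine ⟨j, h.of_le (A.norm_b z j) ?_⟩
  rw [A.hess_apply, A.diag_self]
  calc ∑ i, A.lam z i * inner ℝ (A.b z i) e ^ 2 ≤ ∑ i, A.lam z j * inner ℝ (A.b z i) e ^ 2 := by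
        gcongr with i; exact hj i
    _ = A.lam z j := by rw [← Finset.mul_sum, A.sum_inner_sq, h.norm_eq, one_pow, mul_one]

theorem hessian_tr_le [FiniteDimensional ℝ E] (A : EllipticFrame n N₁ m D₁ D₂ u) {j : Fin n}
    (h : IsWeightedMax (fun v => ∂[v] ∂[v] u) u k ε z (A.b z j)) (hk : 8 ≤ k) (hε : 0 ≤ ε)
    (hD₁ : 0 ≤ D₁) (hD₂ : 0 ≤ D₂) (hz : ‖z‖ ^ 2 ≤ P) (hεP : 2 * (ε * P) ≤ 1)
    (hlarge : D₁ < A.lam z j) :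
    3 / 2 * (ε * A.tr z) ≤ k / (1 - u z) + 5 * (n * D₂ + D₁ * A.tr z) / A.lam z j *
      ∑ i, (∂[A.b z i] ∂[A.b z j] ∂[A.b z j] u z / A.lam z j) ^ 2 := by
  have hl : 0 < A.lam z j := hD₁.trans_lt hlarge
  have hφ := A.pos z
  set w := ∂[A.b z j] ∂[A.b z j] u
  have hw : w z = A.lam z j := A.diag_self z j
  have hmax := A.L_div_le_of_isWeightedMax h (A.contDiff_hess _ _)
  have hcrit := h.dirDeriv_div A.smooth (A.contDiff_hess _ _)
  change A.L w z / w z + _ ≤ _ + ∑ i, A.phi z i * (_ + (∂[A.b z i] w z / w z) ^ 2) at hmax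
  change ∀ v, ∂[v] w z / w z = _ at hcrit
  rw [hw] at hmax hcrit
  have hgain := A.sum_rotation_gain_le z j hl (g := fun i => ∂[A.b z i] w z / A.lam z j)
    fun i => (div_mul_cancel₀ _ hl.ne').symm
  have hQ : A.phi z j * A.lam z j ≤ n * D₂ + D₁ * A.tr z := by
    have hn : (1 : ℝ) ≤ n := by exact_mod_cast Fin.pos j
    have htr : 0 ≤ A.tr z := Finset.sum_nonneg fun i _ => (hφ i).le
    nlinarith [A.condD z j hlarge]
  have hterm := Finset.sum_le_sum fun i (_ : i ∈ Finset.univ) =>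
    hessian_term_le (hφ i) (hφ j) hl (by exact_mod_cast hk) hε (inner_sq_le hz (A.norm_b z i)) hεP
      (hcrit (A.b z i)) (A.phi_mul_neg_lam_le hD₁ hD₂ z i) hQ
  rw [Finset.sum_add_distrib, Finset.sum_add_distrib, ← Finset.mul_sum, ← Finset.mul_sum] at hterm
  change _ ≤ ε / 2 * A.tr z + _ + _ at hterm
  linarith

/-- The gradient bound makes the third derivatives in `hessian_tr_le` a lower order term as soon as
the eigenvalue is large. -/
theorem sum_sq_third_le (A : EllipticFrame n N₁ m D₁ D₂ u) {j : Fin n}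
    (h : IsWeightedMax (fun v => ∂[v] ∂[v] u) u k ε z (A.b z j)) (hz : ‖z‖ ^ 2 ≤ P)
    (hu : 1 - u z ≤ 2) {K : ℝ}
    (hgrad : ∀ v, ‖v‖ = 1 → ∂[v] u z * (1 - u z) ^ (m + 1) ≤ K) :
    (∑ i, (∂[A.b z i] ∂[A.b z j] ∂[A.b z j] u z / A.lam z j) ^ 2) * (1 - u z) ^ (2 * m + 4) ≤
      2 * k ^ 2 * (n * K ^ 2) + 8 * ε ^ 2 * (P * 2 ^ (2 * m + 4)) := by
  set H := 1 - u z
  have hH : 0 < H := sub_pos.2 h.lt_one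
  have hp : ∀ i, (∂[A.b z i] u z / H) ^ 2 * H ^ (2 * m + 4) ≤ K ^ 2 := fun i => by
    have hneg := hgrad (-A.b z i) (by rw [norm_neg, A.norm_b])
    rw [dirDeriv, map_neg, neg_mul] at hneg
    calc (∂[A.b z i] u z / H) ^ 2 * H ^ (2 * m + 4) = (∂[A.b z i] u z * H ^ (m + 1)) ^ 2 := by
          field_simp; ring
      _ ≤ K ^ 2 := sq_le_sq' (neg_le.1 hneg) (hgrad _ (A.norm_b z i))
  have hcrit := h.dirDeriv_div A.smooth (A.contDiff_hess _ _)
  simp only [A.diag_self] at hcrit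
  have hpow : ‖z‖ ^ 2 * H ^ (2 * m + 4) ≤ P * 2 ^ (2 * m + 4) := by
    have := (sq_nonneg ‖z‖).trans hz
    gcongr
  calc _ ≤ (∑ i, (2 * k ^ 2 * (∂[A.b z i] u z / H) ^ 2 + 8 * ε ^ 2 * inner ℝ (A.b z i) z ^ 2))
        * H ^ (2 * m + 4) := by
        gcongr with i
        rw [hcrit, real_inner_comm]
        linarith [sq_nonneg (k * (∂[A.b z i] u z / H) + 2 * ε * inner ℝ (A.b z i) z)]
    _ = 2 * k ^ 2 * ∑ i, (∂[A.b z i] u z / H) ^ 2 * H ^ (2 * m + 4)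
        + 8 * ε ^ 2 * (‖z‖ ^ 2 * H ^ (2 * m + 4)) := by
        rw [Finset.sum_add_distrib, ← Finset.mul_sum, ← Finset.mul_sum, A.sum_inner_sq,
          ← Finset.sum_mul]
        ring
    _ ≤ _ := by
        gcongr
        simpa using Finset.sum_le_sum fun i (_ : i ∈ Finset.univ) => hp i

theorem lam_le_of_third_le [NeZero n] [FiniteDimensional ℝ E] (A : EllipticFrame n N₁ m D₁ D₂ u)
    {j : Fin n} (h : IsWeightedMax (fun v => ∂[v] ∂[v] u) u k ε z (A.b z j)) (hk : 8 ≤ k)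
    (hε : 0 < ε) (hN₁ : 0 ≤ N₁) (hD₁ : 0 ≤ D₁) (hD₂ : 0 ≤ D₂) (hz : ‖z‖ ^ 2 ≤ P)
    (hεP : 2 * (ε * P) ≤ 1) (hu : 1 - u z ≤ 2) (hlarge : D₁ < A.lam z j)
    (hthird : 10 * (n * D₂ + D₁) *
      ∑ i, (∂[A.b z i] ∂[A.b z j] ∂[A.b z j] u z / A.lam z j) ^ 2 ≤ ε * A.lam z j) :
    A.lam z j ≤ N₁ * ((2 + k / ε) / (1 - u z)) ^ m * D₂ := by
  have htr := A.hessian_tr_le h hk hε.le hD₁ hD₂ hz hεP hlarge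
  set H := 1 - u z
  set S := ∑ i, (∂[A.b z i] ∂[A.b z j] ∂[A.b z j] u z / A.lam z j) ^ 2
  have hl : 0 < A.lam z j := hD₁.trans_lt hlarge
  have hH : 0 < H := sub_pos.2 h.lt_one
  have : 0 ≤ S := Finset.sum_nonneg fun i _ => sq_nonneg _
  have htr0 := (A.tr_pos z).le
  have hsmall : 5 * (n * D₂ + D₁ * A.tr z) / A.lam z j * S ≤ ε / 2 * (1 + A.tr z) := by
    rw [div_mul_eq_mul_div, div_le_iff₀ hl]
    calc 5 * (n * D₂ + D₁ * A.tr z) * S ≤ 5 * ((n * D₂ + D₁) * (1 + A.tr z)) * S := by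
          gcongr
          linarith [mul_nonneg (mul_nonneg n.cast_nonneg hD₂) htr0]
      _ = 10 * (n * D₂ + D₁) * S * ((1 + A.tr z) / 2) := by ring
      _ ≤ ε * A.lam z j * ((1 + A.tr z) / 2) := by gcongr
      _ = ε / 2 * (1 + A.tr z) * A.lam z j := by ring
  have htrC : A.tr z ≤ (2 + k / ε) / H := by
    have hH2 : 1 ≤ 2 / H := (one_le_div hH).2 hu
    calc A.tr z ≤ 1 + k / H / ε := by
          rw [← sub_le_iff_le_add', le_div_iff₀ hε]
          linarith
      _ ≤ 2 / H + k / ε / H := by rw [div_right_comm]; gcongr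
      _ = (2 + k / ε) / H := (add_div _ _ _).symm
  refine A.lam_le hN₁ hD₁ ((one_le_div hH).2 (hu.trans ?_)) htrC hlarge
  exact le_add_of_nonneg_right (by positivity)

theorem lam_mul_pow_le [NeZero n] [FiniteDimensional ℝ E] (A : EllipticFrame n N₁ m D₁ D₂ u)
    {j : Fin n} (h : IsWeightedMax (fun v => ∂[v] ∂[v] u) u (2 * m + 8) ε z (A.b z j)) (hε : 0 < ε)
    (hN₁ : 0 ≤ N₁) (hD₁ : 0 ≤ D₁) (hD₂ : 0 ≤ D₂) (hz : ‖z‖ ^ 2 ≤ P) (hεP : 2 * (ε * P) ≤ 1)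
    (hu : 1 - u z ≤ 2) {K₃ : ℝ} (hK₃ : 0 ≤ K₃)
    (hthird : (∑ i, (∂[A.b z i] ∂[A.b z j] ∂[A.b z j] u z / A.lam z j) ^ 2)
      * (1 - u z) ^ (2 * m + 4) ≤ K₃) :
    A.lam z j * (1 - u z) ^ (2 * m + 8) ≤ D₁ * 2 ^ (2 * m + 8)
      + 10 * (n * D₂ + D₁) * K₃ / ε * 2 ^ 4
      + N₁ * (2 + (2 * m + 8 : ℕ) / ε) ^ m * D₂ * 2 ^ (m + 8) := by
  have hlam := A.lam_le_of_third_le h (by lia) hε hN₁ hD₁ hD₂ hz hεP hu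
  set H := 1 - u z
  set S := ∑ i, (∂[A.b z i] ∂[A.b z j] ∂[A.b z j] u z / A.lam z j) ^ 2
  set C : ℝ := 2 + (2 * m + 8 : ℕ) / ε
  have hH : 0 < H := sub_pos.2 h.lt_one
  have h₁ : 0 ≤ D₁ * 2 ^ (2 * m + 8) := by positivity
  have h₂ : 0 ≤ 10 * (n * D₂ + D₁) * K₃ / ε * 2 ^ 4 := by positivity
  have h₃ : 0 ≤ N₁ * C ^ m * D₂ * 2 ^ (m + 8) := by positivity
  rcases le_or_gt (A.lam z j) D₁ with hsmall | hlarge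
  · have : A.lam z j * H ^ (2 * m + 8) ≤ D₁ * 2 ^ (2 * m + 8) := by gcongr
    linarith
  rcases le_or_gt (A.lam z j * H ^ (2 * m + 4)) (10 * (n * D₂ + D₁) * K₃ / ε) with hle | hgt
  · have : A.lam z j * H ^ (2 * m + 8) ≤ 10 * (n * D₂ + D₁) * K₃ / ε * 2 ^ 4 := by
      rw [show 2 * m + 8 = 2 * m + 4 + 4 by ring, pow_add, ← mul_assoc]
      gcongr
    linarith
  have hS : 10 * (n * D₂ + D₁) * S ≤ ε * A.lam z j := by
    refine le_of_mul_le_mul_right ?_ (pow_pos hH (2 * m + 4))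
    calc 10 * (n * D₂ + D₁) * S * H ^ (2 * m + 4) = 10 * (n * D₂ + D₁) * (S * H ^ (2 * m + 4)) :=
          mul_assoc _ _ _
      _ ≤ 10 * (n * D₂ + D₁) * K₃ := by gcongr
      _ ≤ A.lam z j * H ^ (2 * m + 4) * ε := ((div_lt_iff₀ hε).1 hgt).le
      _ = ε * A.lam z j * H ^ (2 * m + 4) := by ring
  have : A.lam z j * H ^ (2 * m + 8) ≤ N₁ * C ^ m * D₂ * 2 ^ (m + 8) := by
    calc A.lam z j * H ^ (2 * m + 8) ≤ N₁ * (C / H) ^ m * D₂ * H ^ (2 * m + 8) := by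
          gcongr; exact hlam hlarge hS
      _ = N₁ * C ^ m * D₂ * H ^ (m + 8) := by
          rw [div_pow, show 2 * m + 8 = m + (m + 8) by ring, pow_add]; field_simp
      _ ≤ N₁ * C ^ m * D₂ * 2 ^ (m + 8) := by gcongr
  linarith

end EllipticFrame

theorem exists_hessian_bound [NeZero n] [FiniteDimensional ℝ E] (hc : 0 < c) (hN₁ : 0 ≤ N₁)
    (hD₁ : 0 ≤ D₁) (hD₂ : 0 ≤ D₂) :
    ∃ K, 0 < K ∧ ∀ u : E → ℝ, EllipticFrame n N₁ m D₁ D₂ u → (∀ x, c * ‖x‖ ^ 2 - 1 ≤ u x) →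
      ∀ x v, u x < 1 → ‖v‖ = 1 → ∂[v] ∂[v] u x * (1 - u x) ^ (2 * m + 8) ≤ K := by
  have := FiniteDimensional.proper_real E
  obtain ⟨Kg, -, hgrad⟩ := exists_gradient_bound (E := E) (n := n) (m := m) hc hN₁ hD₁ hD₂
  set ε := c / 4 with hε
  set K₃ := 2 * (2 * m + 8 : ℕ) ^ 2 * (n * Kg ^ 2) + 8 * ε ^ 2 * (2 / c * 2 ^ (2 * m + 4))
  set K := 1 + (D₁ * 2 ^ (2 * m + 8) + 10 * (n * D₂ + D₁) * K₃ / ε * 2 ^ 4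
    + N₁ * (2 + (2 * m + 8 : ℕ) / ε) ^ m * D₂ * 2 ^ (m + 8))
  refine ⟨K * Real.exp (ε * (2 / c)), by positivity, fun u A hgrowth x v hx hv => ?_⟩
  refine weighted_le_of_isWeightedMax (Ψ := fun v => ∂[v] ∂[v] u) ?_ A.smooth.continuous hc hgrowth
    (by lia) (by positivity) (by positivity) (fun z e h => ?_) hx hv
  · simp only [dirDeriv_dirDeriv (A.smooth.of_le two_le_infty)]
    have := (A.smooth.fderiv_right (m := ∞) (by simp)).continuous_fderiv (by simp)
    fun_prop
  · have hz : ‖z‖ ^ 2 ≤ 2 / c := by rw [le_div_iff₀ hc]; linarith [hgrowth z, h.lt_one]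
    have hu : 1 - u z ≤ 2 := by linarith [hgrowth z, mul_nonneg hc.le (sq_nonneg ‖z‖)]
    have hεP : 2 * (ε * (2 / c)) ≤ 1 := by rw [hε]; exact le_of_eq (by field_simp; norm_num)
    obtain ⟨j, hj⟩ := A.exists_isWeightedMax_basis h
    have hthird := A.sum_sq_third_le hj hz hu fun v hv => hgrad u A hgrowth z v h.lt_one hv
    have hlam := A.lam_mul_pow_le hj (by positivity) hN₁ hD₁ hD₂ hz hεP hu (by positivity) hthird
    calc ∂[e] ∂[e] u z * (1 - u z) ^ (2 * m + 8) ≤ A.lam z j * (1 - u z) ^ (2 * m + 8) := by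
          have := sub_pos.2 h.lt_one
          gcongr
          exact (hj.apply_le h.norm_eq).trans_eq (A.diag_self z j)
      _ ≤ K := hlam.trans (le_add_of_nonneg_left zero_le_one)

/-- Rescaling by a radius `R` adapted to `x₀` turns `u` into a solution of the same growth whose
value at the origin is at most `1/2`. -/
theorem exists_hessian_upper_bound [NeZero n] [FiniteDimensional ℝ E]
    (A : EllipticFrame n N₁ m D₁ D₂ u) (hN₁ : 0 ≤ N₁) (hD₁ : 0 ≤ D₁) (hD₂ : 0 ≤ D₂) (hc : 0 < c)
    {C : ℝ} (hgrowth : ∀ x, c * ‖x‖ ^ 2 - C ≤ u x) :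
    ∃ M, 0 < M ∧ ∀ x v, ‖v‖ = 1 → ∂[v] ∂[v] u x ≤ M := by
  obtain ⟨K, hK, hbound⟩ :=
    exists_hessian_bound (E := E) (n := n) (m := m) (half_pos hc) hN₁ hD₁ hD₂
  refine ⟨K * 2 ^ (2 * m + 8), by positivity, fun x₀ v hv => ?_⟩
  set R := 1 + c * ‖x₀‖ ^ 2 + |C| + 2 * |u x₀| with hR
  have hR1 : 1 ≤ R := by rw [hR, add_assoc, add_assoc]; exact le_add_of_nonneg_right (by positivity)
  have hR0 : 0 < R := one_pos.trans_le hR1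
  have hRsq : R ≤ R ^ 2 := le_self_pow₀ hR1 two_ne_zero
  have hgrowthR : ∀ x, c / 2 * ‖x‖ ^ 2 - 1 ≤ R⁻¹ ^ 2 * u (x₀ + R • x) := fun x => by
    have hsq : R ^ 2 * ‖x‖ ^ 2 ≤ 2 * ‖x₀ + R • x‖ ^ 2 + 2 * ‖x₀‖ ^ 2 := by
      calc R ^ 2 * ‖x‖ ^ 2 = ‖(x₀ + R • x) - x₀‖ ^ 2 := by
            rw [add_sub_cancel_left, norm_smul, Real.norm_of_nonneg hR0.le, mul_pow]
        _ ≤ (‖x₀ + R • x‖ + ‖x₀‖) ^ 2 := by gcongr; exact norm_sub_le _ _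
        _ ≤ 2 * ‖x₀ + R • x‖ ^ 2 + 2 * ‖x₀‖ ^ 2 := by
            linarith [sq_nonneg (‖x₀ + R • x‖ - ‖x₀‖)]
    rw [inv_pow, ← div_eq_inv_mul, le_div_iff₀ (by positivity)]
    nlinarith [hgrowth (x₀ + R • x), le_abs_self C, abs_nonneg (u x₀)]
  have hvalue : R⁻¹ ^ 2 * u (x₀ + R • (0 : E)) ≤ 1 / 2 := by
    rw [smul_zero, add_zero, inv_pow, ← div_eq_inv_mul, div_le_iff₀ (by positivity)]
    linarith [le_abs_self (u x₀), abs_nonneg C, mul_nonneg hc.le (sq_nonneg ‖x₀‖)]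
  have h := hbound _ (A.rescale x₀ hR0) hgrowthR 0 v (hvalue.trans_lt (by norm_num)) hv
  rw [hess_rescale A.smooth x₀ hR0] at h
  simp only [smul_zero, add_zero] at h hvalue
  by_contra! hlt
  refine h.not_gt ?_
  calc K = K * 2 ^ (2 * m + 8) * (1 / 2) ^ (2 * m + 8) := by
        rw [mul_assoc, ← mul_pow, mul_one_div_cancel two_ne_zero, one_pow, mul_one]
    _ < ∂[v] ∂[v] u x₀ * (1 / 2) ^ (2 * m + 8) := by gcongr
    _ ≤ ∂[v] ∂[v] u x₀ * (1 - R⁻¹ ^ 2 * u x₀) ^ (2 * m + 8) := by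
        have : 0 ≤ ∂[v] ∂[v] u x₀ := (by positivity : 0 ≤ K * 2 ^ (2 * m + 8)).trans hlt.le
        gcongr
        linarith

theorem exists_abs_hessian_le [NeZero n] [FiniteDimensional ℝ E]
    (A : EllipticFrame n N₁ m D₁ D₂ u) (hN₁ : 0 ≤ N₁) (hD₁ : 0 ≤ D₁) (hD₂ : 0 ≤ D₂) (hc : 0 < c)
    {C : ℝ} (hgrowth : ∀ x, c * ‖x‖ ^ 2 - C ≤ u x) :
    ∃ M, 0 < M ∧ ∀ x v, |∂[v] ∂[v] u x| ≤ M * ‖v‖ ^ 2 := by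
  obtain ⟨M, hM, hupper⟩ := exists_hessian_upper_bound A hN₁ hD₁ hD₂ hc hgrowth
  have hle : ∀ x i, A.lam x i ≤ M := fun x i =>
    (A.diag_self x i).symm.trans_le (hupper x _ (A.norm_b x i))
  have hn : (1 : ℝ) ≤ n := by exact_mod_cast NeZero.pos n
  have hlam : ∀ x i, |A.lam x i| ≤ n * M := fun x i => by
    have hlap := A.laplacian_pos x (A.b x)
    simp only [A.diag_self] at hlap
    rw [← Finset.add_sum_erase _ _ (Finset.mem_univ i)] at hlap
    have hrest : ∑ a ∈ Finset.univ.erase i, A.lam x a ≤ n * M := by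
      calc ∑ a ∈ Finset.univ.erase i, A.lam x a ≤ ∑ _a ∈ Finset.univ.erase i, M :=
            Finset.sum_le_sum fun _ _ => hle x _
        _ ≤ ∑ _a : Fin n, M := Finset.sum_le_sum_of_subset_of_nonneg (Finset.erase_subset _ _)
            fun _ _ _ => hM.le
        _ = n * M := by simp
    exact abs_le.2 ⟨by linarith, (hle x i).trans (le_mul_of_one_le_left hM.le hn)⟩
  refine ⟨n * M, by positivity, fun x v => ?_⟩
  rw [A.hess_apply, ← A.sum_inner_sq x v, Finset.mul_sum]
  refine (Finset.abs_sum_le_sum_abs _ _).trans (Finset.sum_le_sum fun i _ => ?_)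
  rw [abs_mul, abs_sq]
  exact mul_le_mul_of_nonneg_right (hlam x i) (sq_nonneg _)

end HessianEstimate

/-! ### Touching paraboloids -/

section HessForm

variable {E : Type*} [NormedAddCommGroup E] [InnerProductSpace ℝ E] {n : ℕ} {g : E → ℝ}

/-- The Hessian of `g` at `x` as a bilinear form. -/
def hessForm (g : E → ℝ) (x : E) : LinearMap.BilinForm ℝ E :=
  (fderiv ℝ (fderiv ℝ g) x).toBilinForm

theorem hessForm_apply (hg : ContDiff ℝ ∞ g) (x v w : E) : hessForm g x v w = ∂[v] ∂[w] g x :=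
  (dirDeriv_dirDeriv (hg.of_le two_le_infty) v w x).symm

theorem hessForm_isSymm (hg : ContDiff ℝ ∞ g) (x : E) : (hessForm g x).IsSymm where
  eq v w := by
    simp [hessForm_apply hg, dirDeriv_comm (hg.of_le two_le_infty) v w]

theorem apply_self_le_trace {T : LinearMap.BilinForm ℝ E} (hT : T.IsSymm) (hpos : ∀ v, 0 ≤ T v v)
    (b : OrthonormalBasis (Fin n) ℝ E) (v : E) : T v v ≤ (∑ i, T (b i) (b i)) * ‖v‖ ^ 2 := by
  have hsq : T v v ^ 2 ≤ (‖v‖ ^ 2 * ∑ i, T (b i) (b i)) * T v v := by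
    have hexp : T v v = ∑ i, inner ℝ (b i) v * T (b i) v := by
      conv_lhs => rw [← LinearMap.flip_apply, ← b.sum_repr' v, map_sum, b.sum_repr' v]
      simp
    calc T v v ^ 2 = (∑ i, inner ℝ (b i) v * T (b i) v) ^ 2 := by rw [hexp]
      _ ≤ (∑ i, inner ℝ (b i) v ^ 2) * ∑ i, T (b i) v ^ 2 := Finset.sum_mul_sq_le_sq_mul_sq _ _ _
      _ ≤ ‖v‖ ^ 2 * ∑ i, T (b i) (b i) * T v v := by
        rw [b.sum_sq_inner_right v]
        gcongr with i
        exact T.apply_sq_le_of_symm hpos ⟨hT.eq⟩ _ _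
      _ = (‖v‖ ^ 2 * ∑ i, T (b i) (b i)) * T v v := by rw [← Finset.sum_mul, mul_assoc]
  rcases (hpos v).eq_or_lt with hzero | hlt
  · rw [← hzero]
    exact mul_nonneg (Finset.sum_nonneg fun i _ => hpos _) (sq_nonneg _)
  · rw [sq] at hsq
    linarith [le_of_mul_le_mul_right hsq hlt]

/-- The values of the quadratic form at `b i + b j` determine it, by polarization. -/
theorem abs_apply_self_le_of_basis_add {T : LinearMap.BilinForm ℝ E} (hT : T.IsSymm) {δ : ℝ}
    (b : OrthonormalBasis (Fin n) ℝ E)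
    (hδ : ∀ i j, |T (b i + b j) (b i + b j)| ≤ δ) (v : E) :
    |T v v| ≤ n ^ 2 * δ * ‖v‖ ^ 2 := by
  have hentry : ∀ i j, |T (b i) (b j)| ≤ δ := fun i j => by
    have hij := hδ i j
    have hi := hδ i i
    have hj := hδ j j
    simp only [map_add, LinearMap.add_apply, hT.eq (b j) (b i), abs_le] at hij hi hj ⊢
    constructor <;> linarith
  have hcoord : ∀ i, |inner ℝ (b i) v| ≤ ‖v‖ := fun i => by
    simpa using abs_real_inner_le_norm (b i) v
  calc |T v v| = |∑ i, ∑ j, inner ℝ (b i) v * (inner ℝ (b j) v * T (b i) (b j))| := by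
        conv_lhs => rw [← b.sum_repr' v]
        simp only [map_sum, map_smul, LinearMap.sum_apply, LinearMap.smul_apply, smul_eq_mul,
          Finset.mul_sum]
        rw [Finset.sum_comm]
        simp only [mul_left_comm]
    _ ≤ ∑ _i : Fin n, ∑ _j : Fin n, ‖v‖ * (‖v‖ * δ) := by
        refine (Finset.abs_sum_le_sum_abs _ _).trans (Finset.sum_le_sum fun i _ =>
          (Finset.abs_sum_le_sum_abs _ _).trans (Finset.sum_le_sum fun j _ => ?_))
        rw [abs_mul, abs_mul]
        gcongr
        exacts [hcoord i, hcoord j, hentry i j]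
    _ = n ^ 2 * δ * ‖v‖ ^ 2 := by simp; ring

theorem hess_add_const_mul {h : E → ℝ} (hg : ContDiff ℝ ∞ g) (hh : ContDiff ℝ ∞ h) (a : ℝ)
    (v w x : E) :
    ∂[v] ∂[w] (fun y => g y + a * h y) x = ∂[v] ∂[w] g x + a * ∂[v] ∂[w] h x := by
  have hg' := (contDiff_dirDeriv hg w).differentiable (by simp)
  have hh' := (contDiff_dirDeriv hh w).differentiable (by simp)
  rw [dirDeriv_add (hg.differentiable (by simp)) ((hh.differentiable (by simp)).const_mul a),
    dirDeriv_const_mul (hh.differentiable (by simp)), dirDeriv_add hg' (hh'.const_mul a),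
    dirDeriv_const_mul hh']

/-- `a ≤ D²g(x) ≤ b` in the sense of quadratic forms. -/
def HessBetween (a b : ℝ) (g : E → ℝ) (x : E) : Prop :=
  ∀ v, a * ‖v‖ ^ 2 ≤ ∂[v] ∂[v] g x ∧ ∂[v] ∂[v] g x ≤ b * ‖v‖ ^ 2

theorem isClosed_hessBetween (hg : ContDiff ℝ ∞ g) (a b : ℝ) :
    IsClosed {x | HessBetween a b g x} := by
  simp only [HessBetween, ofPred_forall]
  refine isClosed_iInter fun v => ?_
  have hcont := (contDiff_dirDeriv (contDiff_dirDeriv hg v) v).continuous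
  exact (isClosed_le continuous_const hcont).inter (isClosed_le hcont continuous_const)

theorem touch_below (hg : ContDiff ℝ ∞ g) {x y : E} {κ : ℝ}
    (hm : IsLocalMin (fun z => g z + κ / 2 * ‖z - y‖ ^ 2) x) (v : E) :
    ∂[v] g x + κ * inner ℝ (x - y) v = 0 ∧ -κ * ‖v‖ ^ 2 ≤ ∂[v] ∂[v] g x := by
  have hjet := (hasTwoJet_comp_line hg x v).add
    ((hasTwoJet_norm_sq_line (x - y) v).const_mul (κ / 2))
  have hshift : ∀ t : ℝ, x - y + t • v = x + t • v - y := fun t => by abel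
  simp only [hshift] at hjet
  have htest := hjet.of_isLocalMin (isLocalMin_comp_line hm v)
  exact ⟨by linarith [htest.1], by linarith [htest.2]⟩

end HessForm

section Area

variable {E : Type*} [NormedAddCommGroup E] [InnerProductSpace ℝ E] [FiniteDimensional ℝ E]
  {g : E → ℝ}

theorem contDiff_gradient (hg : ContDiff ℝ ∞ g) : ContDiff ℝ ∞ (gradient g) :=
  (InnerProductSpace.toDual ℝ E).symm.contDiff.comp (hg.fderiv_right (by simp))

theorem inner_fderiv_gradient (hg : ContDiff ℝ ∞ g) (x v w : E) :
    inner ℝ (fderiv ℝ (gradient g) x v) w = ∂[v] ∂[w] g x := by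
  have hdir : ∂[w] g = fun y => inner ℝ (gradient g y) w := funext fun y =>
    inner_gradient_left.symm
  rw [hdir, dirDeriv, fderiv_inner_apply ℝ ((contDiff_gradient hg).differentiable (by simp) x)
    (differentiableAt_const w)]
  simp

theorem norm_fderiv_gradient_le (hg : ContDiff ℝ ∞ g) {M : ℝ} (hM : 0 ≤ M) {x : E}
    (hx : ∀ v, |∂[v] ∂[v] g x| ≤ M * ‖v‖ ^ 2) : ‖fderiv ℝ (gradient g) x‖ ≤ M := by
  rw [ContinuousLinearMap.norm_eq_iSup_rayleighQuotient _ fun v w => by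
    change inner ℝ (fderiv ℝ (gradient g) x v) w = inner ℝ v (fderiv ℝ (gradient g) x w)
    rw [real_inner_comm _ v, inner_fderiv_gradient hg, inner_fderiv_gradient hg,
      dirDeriv_comm (hg.of_le two_le_infty)]]
  refine ciSup_le fun v => ?_
  rw [ContinuousLinearMap.rayleighQuotient, ContinuousLinearMap.reApplyInnerSelf_apply,
    inner_fderiv_gradient hg, abs_div, abs_sq]
  exact div_le_of_le_mul₀ (sq_nonneg _) hM (hx v)

variable [MeasurableSpace E] [BorelSpace E]

theorem abs_det_le_norm_pow (f : E →L[ℝ] E) : |f.det| ≤ ‖f‖ ^ finrank ℝ E := by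
  have hsub : f '' Metric.closedBall 0 1 ⊆ Metric.closedBall 0 ‖f‖ := by
    rintro _ ⟨v, hv, rfl⟩
    rw [mem_closedBall_zero_iff] at hv ⊢
    exact f.unit_le_opNorm v hv
  have hvol := measure_mono (μ := volume) hsub
  rw [Measure.addHaar_image_continuousLinearMap, Measure.addHaar_closedBall' _ _ (norm_nonneg f),
    ENNReal.mul_le_mul_iff_left (Metric.measure_closedBall_pos _ _ one_pos).ne'
      measure_closedBall_lt_top.ne] at hvol
  exact (ENNReal.ofReal_le_ofReal_iff (by positivity)).1 hvol

/-- The area formula for the map `x ↦ x + κ⁻¹ ∇g(x)`, which sends a contact point of the paraboloid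
`-κ/2 |· - y|²` with `g` to its vertex `y`. -/
theorem volume_le_of_touch_below (hg : ContDiff ℝ ∞ g) {κ K : ℝ} (hκ : κ ≠ 0) (hκK : κ ≤ K)
    (hK : 0 ≤ K) {T B : Set E} (hT : MeasurableSet T)
    (htouch : ∀ y ∈ B, ∃ x ∈ T, IsLocalMin (fun z => g z + κ / 2 * ‖z - y‖ ^ 2) x ∧
      ∀ v, ∂[v] ∂[v] g x ≤ K * ‖v‖ ^ 2) :
    volume B ≤ ENNReal.ofReal ((1 + |κ⁻¹| * K) ^ finrank ℝ E) *
      volume (T ∩ {x | HessBetween (-κ) K g x}) := by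
  let S := T ∩ {x | HessBetween (-κ) K g x}
  let vertex : E → E := fun x => x + κ⁻¹ • gradient g x
  have hcover : B ⊆ vertex '' S := fun y hy => by
    obtain ⟨x, hxT, hmin, hupper⟩ := htouch y hy
    refine ⟨x, ⟨hxT, fun v => ⟨(touch_below hg hmin v).2, hupper v⟩⟩,
      ext_inner_right ℝ fun w => ?_⟩
    have hcrit := (touch_below hg hmin w).1
    rw [inner_sub_left] at hcrit
    rw [inner_add_left, inner_smul_left, inner_gradient_left, ← sub_eq_zero]
    have : ∂[w] g x = κ * (inner ℝ y w - inner ℝ x w) := by linarith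
    change _ + κ⁻¹ * ∂[w] g x - _ = 0
    rw [this]
    field_simp
    ring
  have hderiv : ∀ x ∈ S, HasFDerivWithinAt vertex
      (ContinuousLinearMap.id ℝ E + κ⁻¹ • fderiv ℝ (gradient g) x) S x := fun x _ =>
    ((hasFDerivAt_id x).add (((contDiff_gradient hg).differentiable (by simp)
      x).hasFDerivAt.const_smul κ⁻¹)).hasFDerivWithinAt
  have hdet : ∀ x ∈ S, |(ContinuousLinearMap.id ℝ E + κ⁻¹ • fderiv ℝ (gradient g) x).det| ≤
      (1 + |κ⁻¹| * K) ^ finrank ℝ E := fun x hx => by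
    have habs : ∀ v, |∂[v] ∂[v] g x| ≤ K * ‖v‖ ^ 2 := fun v =>
      abs_le.2 ⟨by nlinarith [(hx.2 v).1, sq_nonneg ‖v‖], (hx.2 v).2⟩
    refine (abs_det_le_norm_pow _).trans (pow_le_pow_left₀ (norm_nonneg _) ?_ _)
    refine (norm_add_le _ _).trans (add_le_add ContinuousLinearMap.norm_id_le ?_)
    rw [norm_smul, Real.norm_eq_abs]
    gcongr
    exact norm_fderiv_gradient_le hg hK habs
  calc volume B ≤ volume (vertex '' S) := measure_mono hcover
    _ ≤ ∫⁻ x in S, ENNReal.ofReal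
          |(ContinuousLinearMap.id ℝ E + κ⁻¹ • fderiv ℝ (gradient g) x).det| :=
        addHaar_image_le_lintegral_abs_det_fderiv _
          (hT.inter (isClosed_hessBetween hg _ _).measurableSet) hderiv
    _ ≤ ∫⁻ _ in S, ENNReal.ofReal ((1 + |κ⁻¹| * K) ^ finrank ℝ E) :=
        setLIntegral_mono measurable_const fun x hx => ENNReal.ofReal_le_ofReal (hdet x hx)
    _ = _ := setLIntegral_const _ _

end Area

section TouchingPoint

variable {E : Type*} [NormedAddCommGroup E]

theorem exists_isLocalMin_of_lt_sphere [ProperSpace E] {h : E → ℝ} (hcont : Continuous h)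
    {z x₁ : E} {r : ℝ} (hx₁ : ‖x₁ - z‖ ≤ r) (hsphere : ∀ x, ‖x - z‖ = r → h x₁ < h x) :
    ∃ x, ‖x - z‖ < r ∧ IsLocalMin h x ∧ h x ≤ h x₁ := by
  have hmem : x₁ ∈ Metric.closedBall z r := mem_closedBall_iff_norm.2 hx₁
  obtain ⟨x, hx, hmin⟩ := (isCompact_closedBall z r).exists_isMinOn ⟨x₁, hmem⟩ hcont.continuousOn
  have hle : h x ≤ h x₁ := hmin hmem
  have hlt : ‖x - z‖ < r :=
    (mem_closedBall_iff_norm.1 hx).lt_of_ne fun heq => (hsphere x heq).not_ge hle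
  exact ⟨x, hlt, hmin.isLocalMin (Metric.closedBall_mem_nhds_of_mem (mem_ball_iff_norm.2 hlt)), hle⟩

theorem norm_sq_add_le_of_le {u W : E → ℝ} {c C R : ℝ} {x x₀ y : E} (hc : 0 < c)
    (hgrowth : ∀ x, c * ‖x‖ ^ 2 - C ≤ u x) (hy : ‖y‖ ≤ R) (hu₀ : C + u x₀ ≤ c * R ^ 2)
    (hW₀ : W x₀ ≤ c * R ^ 2 / 2)
    (hle : u x + W x + -c / 2 * ‖x - y‖ ^ 2 ≤ u x₀ + W x₀ + -c / 2 * ‖x₀ - y‖ ^ 2) :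
    c / 4 * ‖x‖ ^ 2 + W x ≤ 3 * c * R ^ 2 := by
  have hsq : ‖x - y‖ ^ 2 ≤ 3 / 2 * ‖x‖ ^ 2 + 3 * ‖y‖ ^ 2 := by
    have htri : ‖x - y‖ ^ 2 ≤ (‖x‖ + ‖y‖) ^ 2 := by gcongr; exact norm_sub_le x y
    nlinarith [sq_nonneg (‖x‖ - 2 * ‖y‖)]
  have hyR : ‖y‖ ^ 2 ≤ R ^ 2 := by gcongr
  have hmul : c / 2 * ‖x - y‖ ^ 2 ≤ c / 2 * (3 / 2 * ‖x‖ ^ 2 + 3 * R ^ 2) := by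
    gcongr; linarith
  have hx₀ : 0 ≤ c / 2 * ‖x₀ - y‖ ^ 2 := by positivity
  linarith [hgrowth x]

theorem exists_touch_below [ProperSpace E] {u W : E → ℝ} {c C R : ℝ} {x₀ y : E} (hc : 0 < c)
    (hu : Continuous u) (hW : Continuous W) (hW0 : ∀ x, 0 ≤ W x) (hR : 0 < R)
    (hgrowth : ∀ x, c * ‖x‖ ^ 2 - C ≤ u x) (hx₀ : ‖x₀‖ ≤ R) (hu₀ : C + u x₀ ≤ c * R ^ 2)
    (hW₀ : W x₀ ≤ c * R ^ 2 / 2) (hy : ‖y‖ ≤ R) :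
    ∃ x, ‖x‖ ≤ 4 * R ∧ W x ≤ 3 * c * R ^ 2 ∧
      IsLocalMin (fun z => u z + W z + -c / 2 * ‖z - y‖ ^ 2) x := by
  have hbound : ∀ x, u x + W x + -c / 2 * ‖x - y‖ ^ 2 ≤ u x₀ + W x₀ + -c / 2 * ‖x₀ - y‖ ^ 2 →
      c / 4 * ‖x‖ ^ 2 + W x ≤ 3 * c * R ^ 2 := fun x =>
    norm_sq_add_le_of_le hc hgrowth hy hu₀ hW₀
  obtain ⟨x, hxR, hmin, hle⟩ := exists_isLocalMin_of_lt_sphere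
    (h := fun x => u x + W x + -c / 2 * ‖x - y‖ ^ 2) (by fun_prop) (z := 0) (x₁ := x₀) (r := 4 * R)
    (by rw [sub_zero]; linarith) fun x hx => by
      by_contra hcon
      have hsphere := hbound x (not_lt.1 hcon)
      rw [sub_zero] at hx
      rw [hx] at hsphere
      nlinarith [hW0 x, mul_pos hc (pow_pos hR 2)]
  have hpos : 0 ≤ c / 4 * ‖x‖ ^ 2 := by positivity
  exact ⟨x, by simpa using hxR.le, by linarith [hbound x hle], hmin⟩

end TouchingPoint

section ContactSet

variable {E : Type*} [NormedAddCommGroup E] [InnerProductSpace ℝ E] {n m : ℕ} {N₁ D₁ D₂ : ℝ}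
  {u : E → ℝ}

namespace EllipticFrame

theorem L_add_const_mul (A : EllipticFrame n N₁ m D₁ D₂ u) {g h : E → ℝ} (hg : ContDiff ℝ ∞ g)
    (hh : ContDiff ℝ ∞ h) (a : ℝ) (x : E) :
    A.L (fun y => g y + a * h y) x = A.L g x + a * A.L h x := by
  simp only [L, hess_add_const_mul hg hh, mul_add, Finset.sum_add_distrib, Finset.mul_sum]
  exact congrArg _ (Finset.sum_congr rfl fun i _ => mul_left_comm _ _ _)

theorem mul_tr_le_L (A : EllipticFrame n N₁ m D₁ D₂ u) {g : E → ℝ} {x : E} {a : ℝ}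
    (hx : ∀ v, a * ‖v‖ ^ 2 ≤ ∂[v] ∂[v] g x) : a * A.tr x ≤ A.L g x := by
  rw [L, tr, Finset.mul_sum]
  refine Finset.sum_le_sum fun i _ => ?_
  have hi := hx (A.b x i)
  rw [A.norm_b, one_pow, mul_one] at hi
  rw [mul_comm a]
  exact mul_le_mul_of_nonneg_left hi (A.pos x i).le

/-- The coefficients of the linearized operator at `x` are pinched: its trace is at most `Q` and
its eigenvalues are at least `l`. -/
def EllipticAt (A : EllipticFrame n N₁ m D₁ D₂ u) (l Q : ℝ) (x : E) : Prop :=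
  A.tr x ≤ Q ∧ ∀ i, l ≤ A.phi x i

theorem exists_ellipticAt_of_le_hess (A : EllipticFrame n N₁ m D₁ D₂ u) (hN₁ : 0 < N₁) {c : ℝ}
    (hc : 0 < c) : ∃ l Q, 0 < l ∧ 0 < Q ∧ ∀ g x, (∀ v, c * ‖v‖ ^ 2 ≤ ∂[v] ∂[v] g x) →
      A.L g x ≤ 1 → A.EllipticAt l Q x := by
  let Q := max 1 (1 / c)
  have hQ : 1 ≤ Q := le_max_left _ _
  refine ⟨1 / (N₁ * Q ^ m), Q, by positivity, by linarith, fun g x hx hL => ?_⟩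
  have htr : A.tr x ≤ Q := by
    refine le_trans ?_ (le_max_right _ _)
    rw [le_div_iff₀ hc]
    linarith [A.mul_tr_le_L hx]
  refine ⟨htr, fun i => ?_⟩
  rw [div_le_iff₀ (by positivity)]
  linarith [A.condN x Q hQ htr i]

theorem EllipticAt.apply_self_le {A : EllipticFrame n N₁ m D₁ D₂ u} {l Q κ S : ℝ} {x : E}
    (h : A.EllipticAt l Q x) (hl : 0 < l) {T : LinearMap.BilinForm ℝ E} (hT : T.IsSymm)
    (hκ : 0 ≤ κ) (hlower : ∀ v, -κ * ‖v‖ ^ 2 ≤ T v v)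
    (hS : ∑ i, A.phi x i * T (A.b x i) (A.b x i) ≤ S) (v : E) :
    T v v ≤ (S + κ * Q) / l * ‖v‖ ^ 2 := by
  let T' : LinearMap.BilinForm ℝ E := T + κ • innerₗ E
  have hT'_apply : ∀ v w, T' v w = T v w + κ * inner ℝ v w := fun v w => rfl
  have hT'_self : ∀ v, T' v v = T v v + κ * ‖v‖ ^ 2 := fun v => by
    rw [hT'_apply, real_inner_self_eq_norm_sq]
  have hpos : ∀ v, 0 ≤ T' v v := fun v => by rw [hT'_self]; linarith [hlower v]
  have hsymm : T'.IsSymm := ⟨fun v w => by rw [hT'_apply, hT'_apply, hT.eq, real_inner_comm]⟩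
  have htrace : ∑ i, T' (A.b x i) (A.b x i) ≤ (S + κ * Q) / l := by
    rw [le_div_iff₀ hl, Finset.sum_mul]
    calc ∑ i, T' (A.b x i) (A.b x i) * l ≤ ∑ i, A.phi x i * T' (A.b x i) (A.b x i) :=
          Finset.sum_le_sum fun i _ => by
            rw [mul_comm]; exact mul_le_mul_of_nonneg_right (h.2 i) (hpos _)
      _ = ∑ i, A.phi x i * T (A.b x i) (A.b x i) + κ * A.tr x := by
          simp only [hT'_self, A.norm_b, one_pow, mul_add, Finset.sum_add_distrib, tr,
            ← Finset.sum_mul, one_mul, mul_comm κ]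
      _ ≤ S + κ * Q := add_le_add hS (mul_le_mul_of_nonneg_left h.1 hκ)
  calc T v v ≤ T' v v := by rw [hT'_self]; exact le_add_of_nonneg_right (by positivity)
    _ ≤ (∑ i, T' (A.b x i) (A.b x i)) * ‖v‖ ^ 2 := apply_self_le_trace hsymm hpos (A.b x) v
    _ ≤ (S + κ * Q) / l * ‖v‖ ^ 2 := by gcongr

/-- A smooth nonnegative supersolution of the linearized equation. -/
structure IsNonnegSupersolution (A : EllipticFrame n N₁ m D₁ D₂ u) (V : E → ℝ) : Prop where
  smooth : ContDiff ℝ ∞ V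
  nonneg : ∀ x, 0 ≤ V x
  L_nonpos : ∀ x, A.L V x ≤ 0

end EllipticFrame

/-- The points of the ball of radius `4R` at which the perturbation `u + τV` can be touched from
below by a paraboloid of opening `c`. -/
def contactSet (u V : E → ℝ) (c K R τ : ℝ) : Set E :=
  {x | x ∈ Metric.closedBall 0 (4 * R) ∧ τ * V x ≤ 3 * c * R ^ 2} ∩
    {x | HessBetween c K (fun y => u y + τ * V y) x}

theorem measurableSet_contactSet [MeasurableSpace E] [BorelSpace E] {V : E → ℝ}
    (hu : ContDiff ℝ ∞ u) (hV : ContDiff ℝ ∞ V) (c K R τ : ℝ) :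
    MeasurableSet (contactSet u V c K R τ) :=
  ((Metric.isClosed_closedBall.inter (isClosed_le (continuous_const.mul hV.continuous)
    continuous_const)).inter
      (isClosed_hessBetween (hu.add (contDiff_const.mul hV)) c K)).measurableSet

theorem exists_volume_le_contactSet [FiniteDimensional ℝ E] [MeasurableSpace E] [BorelSpace E]
    (A : EllipticFrame n N₁ m D₁ D₂ u) (hN₁ : 0 < N₁) {c C : ℝ} (hc : 0 < c)
    (hgrowth : ∀ x, c * ‖x‖ ^ 2 - C ≤ u x) :
    ∃ K P, 0 < K ∧ 0 < P ∧ ∀ V, A.IsNonnegSupersolution V → ∀ x₀, ∃ R₀ > 0, ∀ R τ, R₀ ≤ R →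
      0 ≤ τ → τ * V x₀ ≤ c * R ^ 2 / 2 →
      volume (Metric.closedBall (0 : E) R) ≤ ENNReal.ofReal P *
        volume (contactSet u V c K R τ) := by
  obtain ⟨l, Q, hl, -, hell⟩ := A.exists_ellipticAt_of_le_hess hN₁ hc
  refine ⟨1 / l, (1 + |(-c)⁻¹| * (1 / l)) ^ finrank ℝ E, by positivity, by positivity,
    fun V hV x₀ => ⟨1 + ‖x₀‖ + |C + u x₀| / c, by positivity, fun R τ hR hτ hτV => ?_⟩⟩
  have hquot : 0 ≤ |C + u x₀| / c := by positivity
  have hR1 : 1 ≤ R := by linarith [norm_nonneg x₀]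
  have hx₀ : ‖x₀‖ ≤ R := by linarith
  have hu₀ : C + u x₀ ≤ c * R ^ 2 := by
    have hdiv : |C + u x₀| / c ≤ R := by linarith [norm_nonneg x₀]
    rw [div_le_iff₀ hc] at hdiv
    nlinarith [le_abs_self (C + u x₀), mul_pos hc (one_pos.trans_le hR1)]
  have hU : ContDiff ℝ ∞ fun y => u y + τ * V y := A.smooth.add (contDiff_const.mul hV.smooth)
  have harea := volume_le_of_touch_below hU (κ := -c) (K := 1 / l) (neg_ne_zero.2 hc.ne')
    ((neg_neg_of_pos hc).le.trans (by positivity)) (by positivity)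
    (T := {x | x ∈ Metric.closedBall 0 (4 * R) ∧ τ * V x ≤ 3 * c * R ^ 2})
    (Metric.isClosed_closedBall.inter (isClosed_le (continuous_const.mul hV.smooth.continuous)
      continuous_const)).measurableSet (B := Metric.closedBall 0 R) fun y hy => by
    obtain ⟨x, hxR, hxV, hmin⟩ := exists_touch_below hc A.smooth.continuous
      (continuous_const.mul hV.smooth.continuous) (fun x => mul_nonneg hτ (hV.nonneg x))
      (one_pos.trans_le hR1) hgrowth hx₀ hu₀ hτV (mem_closedBall_zero_iff.1 hy)
    refine ⟨x, ⟨mem_closedBall_zero_iff.2 hxR, hxV⟩, hmin, fun v => ?_⟩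
    have hlower : ∀ v, c * ‖v‖ ^ 2 ≤ ∂[v] ∂[v] (fun y => u y + τ * V y) x := fun v => by
      simpa using (touch_below hU hmin v).2
    have hLU : A.L (fun y => u y + τ * V y) x ≤ 1 := by
      rw [A.L_add_const_mul A.smooth hV.smooth, A.L_self]
      linarith [mul_nonpos_of_nonneg_of_nonpos hτ (hV.L_nonpos x)]
    simpa [hessForm_apply hU] using (hell _ x hlower hLU).apply_self_le hl
      (hessForm_isSymm hU x) le_rfl (S := 1)
      (fun v => by
        rw [hessForm_apply hU, neg_zero, zero_mul]
        exact le_trans (by positivity) (hlower v))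
      (by simpa only [hessForm_apply hU, EllipticFrame.L] using hLU) v
  simpa only [contactSet, neg_neg] using harea

end ContactSet

/-! ### The Hessian gauge -/

section Gauge

/-- The weights are obtained by maximizing `q ↦ ∑ (q p + B) ^ 2` over the closure of the range:
strict convexity of this function yields the quadratic lower bound. -/
theorem exists_sq_le_weighted_sum {X ι : Type*} [Fintype ι] [Nonempty X] {z : X → ι → ℝ} {B : ℝ}
    (hz : ∀ x p, |z x p| ≤ B) :
    ∃ a s : ι → ℝ, (∀ p, 0 ≤ a p) ∧
      (∀ x, ∑ p, (s p - z x p) ^ 2 / 2 ≤ ∑ p, a p * (s p - z x p)) ∧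
      ∀ ε > 0, ∃ x, ∑ p, a p * (s p - z x p) < ε := by
  have hbox : closure (range z) ⊆ Icc (fun _ => -B) (fun _ => B) :=
    closure_minimal (range_subset_iff.2 fun x =>
      ⟨fun p => (abs_le.1 (hz x p)).1, fun p => (abs_le.1 (hz x p)).2⟩) isClosed_Icc
  obtain ⟨s, hs, hmax⟩ := (isCompact_Icc.of_isClosed_subset isClosed_closure hbox).exists_isMaxOn
    (range_nonempty z).closure (f := fun q => ∑ p, (q p + B) ^ 2) (by fun_prop)
  refine ⟨fun p => s p + B, s, fun p => by linarith [(hbox hs).1 p], fun x => ?_, fun ε hε => ?_⟩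
  · have hx : ∑ p, (z x p + B) ^ 2 ≤ ∑ p, (s p + B) ^ 2 :=
      hmax (subset_closure (mem_range_self x))
    have hsquare : ∑ p, (z x p + B) ^ 2 - ∑ p, (s p + B) ^ 2 =
        2 * (∑ p, (s p - z x p) ^ 2 / 2 - ∑ p, (s p + B) * (s p - z x p)) := by
      rw [← Finset.sum_sub_distrib, ← Finset.sum_sub_distrib, Finset.mul_sum]
      exact Finset.sum_congr rfl fun p _ => by ring
    linarith
  · have hopen : IsOpen {q : ι → ℝ | ∑ p, (s p + B) * (s p - q p) < ε} :=
      isOpen_lt (by fun_prop) continuous_const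
    obtain ⟨_, hq, x, rfl⟩ := mem_closure_iff.1 hs _ hopen (by simpa using hε)
    exact ⟨x, hq⟩

variable {E : Type*} [NormedAddCommGroup E] [InnerProductSpace ℝ E] {n m : ℕ} {N₁ D₁ D₂ : ℝ}
  {u : E → ℝ}

theorem hess_weighted_sum_const_sub {ι : Type*} [Fintype ι] {g : ι → E → ℝ}
    (hg : ∀ p, ContDiff ℝ ∞ (g p)) (a s : ι → ℝ) (v x : E) :
    ∂[v] ∂[v] (fun y => ∑ p, a p * (s p - g p y)) x = -∑ p, a p * ∂[v] ∂[v] (g p) x := by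
  have hg₁ : ∀ p, Differentiable ℝ (g p) := fun p => (hg p).differentiable (by simp)
  have hg₂ : ∀ p, Differentiable ℝ (∂[v] (g p)) := fun p =>
    (contDiff_dirDeriv (hg p) v).differentiable (by simp)
  have hfirst : ∂[v] (fun y => ∑ p, a p * (s p - g p y)) =
      fun y => ∑ p, a p * -∂[v] (g p) y := by
    rw [dirDeriv_sum fun p _ => ((hg₁ p).const_sub (s p)).const_mul (a p)]
    funext y
    exact Finset.sum_congr rfl fun p _ => by
      rw [dirDeriv_const_mul ((hg₁ p).const_sub (s p)), dirDeriv_const_sub]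
  rw [hfirst, dirDeriv_sum fun p _ => (hg₂ p).fun_neg.const_mul (a p), ← Finset.sum_neg_distrib]
  exact Finset.sum_congr rfl fun p _ => by
    simp only [mul_neg, dirDeriv_neg, dirDeriv_const_mul (hg₂ p)]

namespace EllipticFrame

theorem L_weighted_sum_const_sub (A : EllipticFrame n N₁ m D₁ D₂ u) {ι : Type*} [Fintype ι]
    {g : ι → E → ℝ} (hg : ∀ p, ContDiff ℝ ∞ (g p)) (a s : ι → ℝ) (x : E) :
    A.L (fun y => ∑ p, a p * (s p - g p y)) x = -∑ p, a p * A.L (g p) x := by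
  simp only [L, hess_weighted_sum_const_sub hg, mul_neg, Finset.sum_neg_distrib, Finset.mul_sum]
  rw [Finset.sum_comm]
  simp only [mul_left_comm]

/-- A nonnegative supersolution with infimum `0` whose small sublevel sets have small oscillation
of the Hessian of `u`. -/
structure IsHessianGauge (A : EllipticFrame n N₁ m D₁ D₂ u) (C : ℝ) (V : E → ℝ) : Prop
    extends A.IsNonnegSupersolution V where
  exists_le : ∀ ε > 0, ∃ x, V x ≤ ε
  abs_hess_sub_le : ∀ x y η, V x ≤ η → V y ≤ η → ∀ v,
    |∂[v] ∂[v] u x - ∂[v] ∂[v] u y| ≤ C * √η * ‖v‖ ^ 2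

theorem exists_isHessianGauge [FiniteDimensional ℝ E] (A : EllipticFrame n N₁ m D₁ D₂ u)
    {M : ℝ} (hM : 0 ≤ M) (hb : ∀ x v, |∂[v] ∂[v] u x| ≤ M * ‖v‖ ^ 2) :
    ∃ C V, 0 < C ∧ A.IsHessianGauge C V := by
  let b := A.b 0
  let w : Fin n × Fin n → E := fun p => b p.1 + b p.2
  let z : E → Fin n × Fin n → ℝ := fun x p => ∂[w p] ∂[w p] u x
  have hw : ∀ p, ‖w p‖ ≤ 2 := fun p => by
    have := norm_add_le (b p.1) (b p.2)
    rwa [A.norm_b, A.norm_b, one_add_one_eq_two] at this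
  have hz : ∀ p, ContDiff ℝ ∞ fun x => z x p := fun p => A.contDiff_hess (w p) (w p)
  have hzM : ∀ x p, |z x p| ≤ M * 2 ^ 2 := fun x p => (hb x (w p)).trans (by gcongr; exact hw p)
  obtain ⟨a, s, ha, hsq, hinf⟩ := exists_sq_le_weighted_sum hzM
  let V : E → ℝ := fun x => ∑ p, a p * (s p - z x p)
  have hdist : ∀ x η p, V x ≤ η → |s p - z x p| ≤ √(2 * η) := fun x η p hx => by
    refine Real.abs_le_sqrt ?_
    have := Finset.single_le_sum (f := fun p => (s p - z x p) ^ 2 / 2)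
      (fun q _ => by positivity) (Finset.mem_univ p)
    linarith [hsq x]
  refine ⟨n ^ 2 * (2 * √2) + 1, V, by positivity,
    { smooth := ContDiff.sum fun p _ => contDiff_const.mul (contDiff_const.sub (hz p))
      nonneg := fun x => (Finset.sum_nonneg fun p _ => by positivity).trans (hsq x)
      L_nonpos := fun x => ?_
      exists_le := fun ε hε => (hinf ε hε).imp fun x hx => hx.le
      abs_hess_sub_le := fun x y η hx hy v => ?_ }⟩
  · rw [A.L_weighted_sum_const_sub hz, neg_nonpos]
    exact Finset.sum_nonneg fun p _ => mul_nonneg (ha p) (A.L_dirDeriv_dirDeriv_nonneg x (w p))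
  · have hpair : ∀ i j, |(hessForm u x - hessForm u y) (b i + b j) (b i + b j)| ≤
        2 * √2 * √η := fun i j => by
      have hx' := hdist x η (i, j) hx
      have hy' := hdist y η (i, j) hy
      rw [Real.sqrt_mul zero_le_two] at hx' hy'
      rw [LinearMap.sub_apply, LinearMap.sub_apply, hessForm_apply A.smooth,
        hessForm_apply A.smooth, ← sub_sub_sub_cancel_left _ _ (s (i, j)), abs_sub_comm]
      linarith [abs_sub (s (i, j) - z x (i, j)) (s (i, j) - z y (i, j))]
    have hsub := abs_apply_self_le_of_basis_add
      ((hessForm_isSymm A.smooth x).sub (hessForm_isSymm A.smooth y)) b hpair v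
    rw [LinearMap.sub_apply, LinearMap.sub_apply, hessForm_apply A.smooth,
      hessForm_apply A.smooth] at hsub
    refine hsub.trans ?_
    nlinarith [mul_nonneg (Real.sqrt_nonneg η) (sq_nonneg ‖v‖)]

end EllipticFrame

end Gauge

section Pigeonhole

variable {E : Type*} [NormedAddCommGroup E] [NormedSpace ℝ E] [FiniteDimensional ℝ E]
  [MeasurableSpace E] [BorelSpace E] (μ : Measure E) [μ.IsAddHaarMeasure]

theorem exists_inter_nonempty_of_measure_closedBall_le {q : ℕ} {T : ℕ → Set E} {R P ρ : ℝ}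
    (hR : 0 < R) (hP : 0 ≤ P) (hρ : 0 ≤ ρ)
    (hT : ∀ k, MeasurableSet (T k)) (hsub : ∀ k, T k ⊆ Metric.closedBall 0 (ρ * R))
    (hvol : ∀ k < q, μ (Metric.closedBall (0 : E) R) ≤ ENNReal.ofReal P * μ (T k))
    (hq : P * ρ ^ finrank ℝ E < q) : ∃ i j, i < j ∧ j < q ∧ (T i ∩ T j).Nonempty := by
  let B := Metric.closedBall (0 : E) R
  let B' := Metric.closedBall (0 : E) (ρ * R)
  have hrestrict : ∀ k, μ.restrict B' (T k) = μ (T k) := fun k => by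
    rw [Measure.restrict_apply (hT k), inter_eq_left.2 (hsub k)]
  have hsum : μ.restrict B' univ < ∑ k ∈ Finset.range q, μ.restrict B' (T k) := by
    simp only [Measure.restrict_apply_univ, hrestrict]
    by_contra! hle
    have hmul : (q : ENNReal) * μ B ≤ ENNReal.ofReal (P * ρ ^ finrank ℝ E) * μ B := calc
      (q : ENNReal) * μ B = ∑ _k ∈ Finset.range q, μ B := by simp
      _ ≤ ∑ k ∈ Finset.range q, ENNReal.ofReal P * μ (T k) :=
        Finset.sum_le_sum fun k hk => hvol k (Finset.mem_range.1 hk)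
      _ ≤ ENNReal.ofReal P * μ B' := by rw [← Finset.mul_sum]; gcongr
      _ = _ := by
        rw [Measure.addHaar_closedBall_mul _ _ hρ hR.le, ENNReal.ofReal_mul hP, mul_assoc]
    rw [ENNReal.mul_le_mul_iff_left (Metric.measure_closedBall_pos _ _ hR).ne'
      measure_closedBall_lt_top.ne, ← ENNReal.ofReal_natCast,
      ENNReal.ofReal_le_ofReal_iff (by positivity)] at hmul
    exact hq.not_ge hmul
  obtain ⟨i, hi, j, hj, hne, hinter⟩ := exists_nonempty_inter_of_measure_univ_lt_sum_measure
    (μ.restrict B') (fun i _ => (hT i).nullMeasurableSet) hsum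
  rcases hne.lt_or_gt with h | h
  · exact ⟨i, j, h, Finset.mem_range.1 hj, hinter⟩
  · exact ⟨j, i, h, Finset.mem_range.1 hi, by rwa [inter_comm]⟩

end Pigeonhole

section Pinching

variable {E : Type*} [NormedAddCommGroup E] [InnerProductSpace ℝ E] {n m : ℕ} {N₁ D₁ D₂ : ℝ}
  {u : E → ℝ}

theorem half_le_hess_of_hessBetween_pair {V : E → ℝ} (hu : ContDiff ℝ ∞ u) (hV : ContDiff ℝ ∞ V)
    {c K M τ τ' : ℝ} {x : E} (hc : 0 < c) (hKM : 0 < K + M) (hτ : 0 ≤ τ)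
    (hττ' : 2 * (K + M) * τ ≤ c * τ') (hM : ∀ v, |∂[v] ∂[v] u x| ≤ M * ‖v‖ ^ 2)
    (hx : HessBetween c K (fun y => u y + τ * V y) x)
    (hx' : HessBetween c K (fun y => u y + τ' * V y) x) (v : E) :
    c / 2 * ‖v‖ ^ 2 ≤ ∂[v] ∂[v] u x := by
  have hlower := (hx v).1
  have hupper := (hx' v).2
  rw [hess_add_const_mul hu hV] at hlower hupper
  suffices τ * ∂[v] ∂[v] V x ≤ c / 2 * ‖v‖ ^ 2 by linarith
  rcases le_total (∂[v] ∂[v] V x) 0 with hneg | hpos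
  · exact (mul_nonpos_of_nonneg_of_nonpos hτ hneg).trans (by positivity)
  · refine le_of_mul_le_mul_left ?_ (mul_pos two_pos hKM)
    calc 2 * (K + M) * (τ * ∂[v] ∂[v] V x) = 2 * (K + M) * τ * ∂[v] ∂[v] V x := by ring
      _ ≤ c * (τ' * ∂[v] ∂[v] V x) := by
        rw [← mul_assoc]; exact mul_le_mul_of_nonneg_right hττ' hpos
      _ ≤ c * ((K + M) * ‖v‖ ^ 2) :=
        mul_le_mul_of_nonneg_left (by linarith [(abs_le.1 (hM v)).1]) hc.le
      _ = 2 * (K + M) * (c / 2 * ‖v‖ ^ 2) := by ring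

namespace EllipticFrame

/-- Contact sets for geometrically increasing `τ` all have volume comparable to the ball, so two of
them meet; at a common point the two bounds on `D²u + τ D²V` bound `D²V` and hence `D²u`. -/
theorem IsNonnegSupersolution.exists_half_le_hess [FiniteDimensional ℝ E]
    {A : EllipticFrame n N₁ m D₁ D₂ u} {V : E → ℝ} (hV : A.IsNonnegSupersolution V)
    (hinf : ∀ ε > 0, ∃ x, V x ≤ ε) (hN₁ : 0 < N₁) {c C M : ℝ} (hc : 0 < c)
    (hgrowth : ∀ x, c * ‖x‖ ^ 2 - C ≤ u x) (hM : 0 < M)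
    (hb : ∀ x v, |∂[v] ∂[v] u x| ≤ M * ‖v‖ ^ 2) {ε : ℝ} (hε : 0 < ε) :
    ∃ x, V x ≤ ε ∧ ∀ v, c / 2 * ‖v‖ ^ 2 ≤ ∂[v] ∂[v] u x := by
  borelize E
  obtain ⟨K, P, hK, hP, hcontact⟩ := exists_volume_le_contactSet A hN₁ hc hgrowth
  obtain ⟨q, hq⟩ := exists_nat_gt (P * 4 ^ finrank ℝ E)
  let G := 1 + 2 * (K + M) / c
  have hG : 1 ≤ G := le_add_of_nonneg_right (by positivity)
  obtain ⟨x₀, hx₀⟩ := hinf (ε / (6 * G ^ q)) (by positivity)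
  obtain ⟨R, hR, hvol⟩ := hcontact V hV x₀
  let τ : ℕ → ℝ := fun k => 3 * c * R ^ 2 / ε * G ^ k
  have hτ : ∀ k, 0 < τ k := fun k => by positivity
  have hsmall : ∀ k < q, τ k * V x₀ ≤ c * R ^ 2 / 2 := fun k hk => calc
    τ k * V x₀ ≤ τ k * (ε / (6 * G ^ q)) := mul_le_mul_of_nonneg_left hx₀ (hτ k).le
    _ = c * R ^ 2 / 2 * (G ^ k / G ^ q) := by simp only [τ]; field_simp; ring
    _ ≤ c * R ^ 2 / 2 := mul_le_of_le_one_right (by positivity)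
      (div_le_one_of_le₀ (pow_le_pow_right₀ hG hk.le) (by positivity))
  obtain ⟨i, j, hij, -, x, hxi, hxj⟩ := exists_inter_nonempty_of_measure_closedBall_le volume
    (T := fun k => contactSet u V c K R (τ k)) hR hP.le zero_le_four
    (fun k => measurableSet_contactSet A.smooth hV.smooth c K R (τ k)) (fun k x hx => hx.1.1)
    (fun k hk => hvol R (τ k) le_rfl (hτ k).le (hsmall k hk)) hq
  refine ⟨x, ?_, half_le_hess_of_hessBetween_pair A.smooth hV.smooth hc (add_pos hK hM)
    (hτ i).le ?_ (hb x) hxi.2 hxj.2⟩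
  · have hscale : 3 * c * R ^ 2 / ε * V x ≤ τ i * V x :=
      mul_le_mul_of_nonneg_right (le_mul_of_one_le_right (by positivity) (one_le_pow₀ hG))
        (hV.nonneg x)
    have hle := hscale.trans hxi.1.2
    rw [div_mul_eq_mul_div, div_le_iff₀ hε] at hle
    exact le_of_mul_le_mul_left hle (by positivity)
  · have hnext : τ i * G ≤ τ j := by
      rw [mul_assoc, ← pow_succ]
      exact mul_le_mul_of_nonneg_left (pow_le_pow_right₀ hG hij) (by positivity)
    calc 2 * (K + M) * τ i = c * (τ i * (G - 1)) := by simp only [G]; field_simp; ring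
      _ ≤ c * τ j := mul_le_mul_of_nonneg_left (by linarith [hτ i]) hc.le

theorem IsHessianGauge.exists_ellipticAt [FiniteDimensional ℝ E]
    {A : EllipticFrame n N₁ m D₁ D₂ u} {V : E → ℝ} {B : ℝ} (hV : A.IsHessianGauge B V)
    (hB : 0 < B) (hN₁ : 0 < N₁) {c C M : ℝ} (hc : 0 < c)
    (hgrowth : ∀ x, c * ‖x‖ ^ 2 - C ≤ u x) (hM : 0 < M)
    (hb : ∀ x v, |∂[v] ∂[v] u x| ≤ M * ‖v‖ ^ 2) :
    ∃ η l Q, 0 < η ∧ 0 < l ∧ 0 < Q ∧ ∀ x, V x ≤ η → A.EllipticAt l Q x := by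
  obtain ⟨l, Q, hl, hQ, hell⟩ := A.exists_ellipticAt_of_le_hess hN₁ (c := c / 4) (by positivity)
  refine ⟨(c / (4 * B)) ^ 2, l, Q, by positivity, hl, hQ,
    fun x hx => hell u x (fun v => ?_) (A.L_self x).le⟩
  obtain ⟨y, hy, hHy⟩ := hV.toIsNonnegSupersolution.exists_half_le_hess hV.exists_le hN₁ hc
    hgrowth hM hb (ε := (c / (4 * B)) ^ 2) (by positivity)
  have hosc := hV.abs_hess_sub_le x y _ hx hy v
  rw [Real.sqrt_sq (by positivity), show B * (c / (4 * B)) = c / 4 by field_simp] at hosc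
  linarith [(abs_le.1 hosc).1, hHy v]

end EllipticFrame

end Pinching

/-! ### Spreading of sublevel sets -/

section BarrierHessian

variable {E : Type*} [NormedAddCommGroup E] [InnerProductSpace ℝ E] {n m : ℕ} {N₁ D₁ D₂ : ℝ}
  {u : E → ℝ}

theorem le_hess_of_isLocalMin_sub_exp {g : E → ℝ} (hg : ContDiff ℝ ∞ g) {S β : ℝ} {x z : E}
    (hm : IsLocalMin (fun y => g y - S * Real.exp (-β * ‖y - z‖ ^ 2)) x) (v : E) :
    S * Real.exp (-β * ‖x - z‖ ^ 2) * (4 * β ^ 2 * inner ℝ (x - z) v ^ 2 - 2 * β * ‖v‖ ^ 2) ≤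
      ∂[v] ∂[v] g x := by
  have hjet := (hasTwoJet_comp_line hg x v).add
    (((hasTwoJet_norm_sq_line (x - z) v).const_mul (-β)).exp.const_mul (-S))
  have hshift : ∀ t : ℝ, x - z + t • v = x + t • v - z := fun t => by abel
  simp only [hshift, neg_mul S, ← sub_eq_add_neg] at hjet
  linarith [(hjet.of_isLocalMin (isLocalMin_comp_line hm v)).2]

namespace EllipticFrame

theorem EllipticAt.mul_norm_sq_le {A : EllipticFrame n N₁ m D₁ D₂ u} {l Q : ℝ} {x : E}
    (h : A.EllipticAt l Q x) (v : E) :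
    l * ‖v‖ ^ 2 ≤ ∑ i, A.phi x i * inner ℝ v (A.b x i) ^ 2 := by
  rw [← (A.b x).sum_sq_inner_left v, Finset.mul_sum]
  exact Finset.sum_le_sum fun i _ => mul_le_mul_of_nonneg_right (h.2 i) (sq_nonneg _)

theorem EllipticAt.L_pos_of_isLocalMin_sub_exp {A : EllipticFrame n N₁ m D₁ D₂ u} {l Q : ℝ}
    {x z : E} (h : A.EllipticAt l Q x) {g : E → ℝ} (hg : ContDiff ℝ ∞ g) {S β : ℝ} (hS : 0 < S)
    (hβ : 0 < β) (hm : IsLocalMin (fun y => g y - S * Real.exp (-β * ‖y - z‖ ^ 2)) x)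
    (hfar : Q < 2 * β * (l * ‖x - z‖ ^ 2)) : 0 < A.L g x := by
  let e := S * Real.exp (-β * ‖x - z‖ ^ 2)
  have : 0 < e := mul_pos hS (Real.exp_pos _)
  calc 0 < e * (2 * β * (2 * β * (l * ‖x - z‖ ^ 2) - Q)) := by
        have := sub_pos.2 hfar
        positivity
    _ ≤ e * (2 * β * (2 * β * ∑ i, A.phi x i * inner ℝ (x - z) (A.b x i) ^ 2 - A.tr x)) := by
        gcongr
        · exact h.mul_norm_sq_le (x - z)
        · exact h.1
    _ = ∑ i, A.phi x i * (e * (4 * β ^ 2 * inner ℝ (x - z) (A.b x i) ^ 2 - 2 * β)) := by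
        simp only [tr, Finset.mul_sum, ← Finset.sum_sub_distrib]
        exact Finset.sum_congr rfl fun i _ => by ring
    _ ≤ A.L g x := Finset.sum_le_sum fun i _ => by
        have hi := le_hess_of_isLocalMin_sub_exp hg hm (A.b x i)
        rw [A.norm_b, one_pow, mul_one] at hi
        exact mul_le_mul_of_nonneg_left hi (A.pos x i).le

end EllipticFrame

end BarrierHessian

section SublevelDensity

variable {E : Type*} [NormedAddCommGroup E] [InnerProductSpace ℝ E] [FiniteDimensional ℝ E]
  {n m : ℕ} {N₁ D₁ D₂ : ℝ} {u : E → ℝ}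

/-- Below the level `η`, smallness of `V` at one point of a ball propagates to a fixed proportion
of the ball, at the cost of the factor `G`. -/
def HasSublevelDensity [MeasureSpace E] (V : E → ℝ) (η G P : ℝ) : Prop :=
  ∀ z x₁ r t, 0 < r → 0 < t → ‖x₁ - z‖ ≤ 2 * r → V x₁ ≤ t → G * t ≤ η →
    volume (Metric.closedBall z r) ≤
      ENNReal.ofReal P * volume ({x | V x ≤ G * t} ∩ Metric.closedBall z r)

namespace EllipticFrame.IsNonnegSupersolution

variable {A : EllipticFrame n N₁ m D₁ D₂ u} {V : E → ℝ} {η l Q : ℝ}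

theorem volume_closedBall_le_sublevel [MeasurableSpace E] [BorelSpace E]
    (hV : A.IsNonnegSupersolution V) (hl : 0 < l) (hQ : 0 ≤ Q)
    (hell : ∀ x, V x ≤ η → A.EllipticAt l Q x) {z : E} {t r : ℝ} (ht : 0 < t) (hr : 0 < r)
    (htη : 2 * t ≤ η) (hz : V z ≤ t) :
    volume (Metric.closedBall z r) ≤ ENNReal.ofReal ((2 + Q / l) ^ finrank ℝ E) *
      volume ({x | V x ≤ 2 * t} ∩ Metric.closedBall z (3 * r)) := by
  let a := t / r ^ 2
  have ha : 0 < a := by positivity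
  have har : a * r ^ 2 = t := by simp only [a]; field_simp
  have hratio : 1 + |a⁻¹| * (a * (1 + Q / l)) = 2 + Q / l := by
    rw [abs_of_pos (by positivity)]; field_simp; ring
  have harea := volume_le_of_touch_below hV.smooth (κ := a) (K := a * (1 + Q / l)) ha.ne'
    (le_mul_of_one_le_right ha.le (le_add_of_nonneg_right (by positivity))) (by positivity)
    (T := {x | V x ≤ 2 * t} ∩ Metric.closedBall z (3 * r)) (B := Metric.closedBall z r)
    ((isClosed_le hV.smooth.continuous continuous_const).inter
      Metric.isClosed_closedBall).measurableSet fun y hy => ?_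
  · rw [hratio] at harea
    exact harea.trans (mul_le_mul_right (measure_mono inter_subset_left) _)
  have hy : ‖y - z‖ ≤ r := mem_closedBall_iff_norm.1 hy
  have hstart : V z + a / 2 * ‖z - y‖ ^ 2 ≤ 3 / 2 * t := by
    have : a / 2 * ‖z - y‖ ^ 2 ≤ a / 2 * r ^ 2 := by rw [norm_sub_rev]; gcongr
    linarith
  obtain ⟨x, hxr, hmin, hle⟩ := exists_isLocalMin_of_lt_sphere (z := z) (x₁ := z) (r := 3 * r)
    (h := fun x => V x + a / 2 * ‖x - y‖ ^ 2) (hV.smooth.continuous.add (by fun_prop))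
    (by rw [sub_self, norm_zero]; positivity) fun x hx => by
      have hfar : 2 * r ≤ ‖x - y‖ := by linarith [norm_sub_le_norm_sub_add_norm_sub x y z]
      have : a / 2 * (2 * r) ^ 2 ≤ a / 2 * ‖x - y‖ ^ 2 := by gcongr
      linarith [hV.nonneg x]
  have hVx : V x ≤ 2 * t := by
    have : 0 ≤ a / 2 * ‖x - y‖ ^ 2 := by positivity
    linarith
  have hupper : ∀ v, ∂[v] ∂[v] V x ≤ (0 + a * Q) / l * ‖v‖ ^ 2 := by
    simpa only [hessForm_apply hV.smooth] using (hell x (hVx.trans htη)).apply_self_le hl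
      (hessForm_isSymm hV.smooth x) ha.le
      (fun v => by rw [hessForm_apply hV.smooth]; exact (touch_below hV.smooth hmin v).2)
      (by simpa only [hessForm_apply hV.smooth, EllipticFrame.L] using hV.L_nonpos x)
  refine ⟨x, ⟨hVx, mem_closedBall_iff_norm.2 hxr.le⟩, hmin, fun v => (hupper v).trans ?_⟩
  rw [zero_add, mul_div_assoc]
  gcongr
  exact le_add_of_nonneg_left zero_le_one

theorem exists_le_half_radius (hV : A.IsNonnegSupersolution V) (hl : 0 < l) (hQ : 0 ≤ Q)
    (hell : ∀ x, V x ≤ η → A.EllipticAt l Q x) :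
    ∃ G, 1 < G ∧ ∀ z x₁ r t, 0 < r → 0 < t → ‖x₁ - z‖ ≤ 2 * r → V x₁ ≤ t → G * t ≤ η →
      ∃ x, ‖x - z‖ ≤ r / 2 ∧ V x ≤ G * t := by
  let α := 2 * Q / l + 1
  have hα : 0 < α := by positivity
  let e₄ := Real.exp (-(4 * α))
  let e₉ := Real.exp (-(9 * α))
  have he : 0 < e₄ - e₉ := sub_pos.2 (Real.exp_lt_exp.2 (by linarith))
  have he₄ : e₄ < 1 := Real.exp_lt_one_iff.2 (neg_neg_of_pos (by positivity))
  have he₉ : 0 < e₉ := Real.exp_pos _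
  refine ⟨2 / (e₄ - e₉), by rw [lt_div_iff₀ he]; linarith,
    fun z x₁ r t hr ht hx₁ hVx₁ hη => ?_⟩
  let S := 2 / (e₄ - e₉) * t
  have hS : 0 < S := by positivity
  have hSe : S * e₄ - S * e₉ = 2 * t := by
    rw [← mul_sub]; simp only [S]; field_simp
  let β := α / r ^ 2
  have hβ : 0 < β := by positivity
  have hβr : β * r ^ 2 = α := by simp only [β]; field_simp
  by_contra! hlarge
  have hstart : V x₁ - S * Real.exp (-β * ‖x₁ - z‖ ^ 2) ≤ t - S * e₄ := by
    have hdist : β * ‖x₁ - z‖ ^ 2 ≤ β * (2 * r) ^ 2 := by gcongr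
    have : e₄ ≤ Real.exp (-β * ‖x₁ - z‖ ^ 2) := Real.exp_le_exp.2 (by linarith)
    linarith [mul_le_mul_of_nonneg_left this hS.le]
  obtain ⟨x, -, hmin, hle⟩ := exists_isLocalMin_of_lt_sphere (r := 3 * r)
    (h := fun x => V x - S * Real.exp (-β * ‖x - z‖ ^ 2))
    (hV.smooth.continuous.sub (by fun_prop)) (hx₁.trans (by linarith)) fun x hx => by
      rw [hx, show -β * (3 * r) ^ 2 = -(9 * α) by rw [← hβr]; ring]
      linarith [hV.nonneg x]
  have hVx : V x ≤ S := by
    have : S * Real.exp (-β * ‖x - z‖ ^ 2) ≤ S := mul_le_of_le_one_right hS.le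
      (Real.exp_le_one_iff.2 (by rw [neg_mul, neg_nonpos]; positivity))
    linarith [mul_pos hS he₉]
  have hfar : r / 2 < ‖x - z‖ := not_le.1 fun hnear => (hlarge x hnear).not_ge hVx
  refine ((hell x (hVx.trans hη)).L_pos_of_isLocalMin_sub_exp hV.smooth hS hβ hmin ?_).not_ge
    (hV.L_nonpos x)
  calc Q < 2 * β * (l * (r / 2) ^ 2) := by
        have hlα : l * α = 2 * Q + l := by simp only [α]; field_simp
        rw [show 2 * β * (l * (r / 2) ^ 2) = l * (β * r ^ 2) / 2 by ring, hβr, hlα]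
        linarith
    _ ≤ 2 * β * (l * ‖x - z‖ ^ 2) := by gcongr

theorem exists_hasSublevelDensity [MeasurableSpace E] [BorelSpace E]
    (hV : A.IsNonnegSupersolution V) (hl : 0 < l) (hQ : 0 ≤ Q)
    (hell : ∀ x, V x ≤ η → A.EllipticAt l Q x) :
    ∃ G P, 1 < G ∧ 0 < P ∧ HasSublevelDensity V η G P := by
  obtain ⟨G, hG, hspread⟩ := hV.exists_le_half_radius hl hQ hell
  refine ⟨2 * G, 6 ^ finrank ℝ E * (2 + Q / l) ^ finrank ℝ E, by linarith, by positivity,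
    fun z x₁ r t hr ht hx₁ hVx₁ hη => ?_⟩
  have hGt : 0 < G * t := by positivity
  obtain ⟨x₂, hx₂, hVx₂⟩ := hspread z x₁ r t hr ht hx₁ hVx₁ (by linarith)
  have hsub : Metric.closedBall x₂ (3 * (r / 6)) ⊆ Metric.closedBall z r :=
    Metric.closedBall_subset_closedBall' (by rw [dist_eq_norm]; linarith)
  calc volume (Metric.closedBall z r) = volume (Metric.closedBall z (6 * (r / 6))) := by
        rw [mul_div_cancel₀ r (by norm_num)]
    _ = ENNReal.ofReal (6 ^ finrank ℝ E) * volume (Metric.closedBall x₂ (r / 6)) := by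
        rw [Measure.addHaar_closedBall_mul _ _ (by norm_num) (by positivity),
          Measure.addHaar_closedBall_center _ x₂]
    _ ≤ ENNReal.ofReal (6 ^ finrank ℝ E) * (ENNReal.ofReal ((2 + Q / l) ^ finrank ℝ E) *
          volume ({x | V x ≤ 2 * (G * t)} ∩ Metric.closedBall x₂ (3 * (r / 6)))) := by
        gcongr
        exact hV.volume_closedBall_le_sublevel hl hQ hell hGt (by positivity) (by linarith) hVx₂
    _ ≤ _ := by
        rw [← mul_assoc, ← ENNReal.ofReal_mul (by positivity), ← mul_assoc 2 G]
        gcongr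

end EllipticFrame.IsNonnegSupersolution

end SublevelDensity

/-! ### Growth of sublevel sets -/

section Vitali

variable {E : Type*} [NormedAddCommGroup E] [NormedSpace ℝ E] [FiniteDimensional ℝ E]
  [MeasurableSpace E] [BorelSpace E] (μ : Measure E) [μ.IsAddHaarMeasure]

theorem measure_le_of_measure_closedBall_le_inter {B S : Set E} {r : E → ℝ} {P R : ℝ}
    (hr : ∀ z ∈ B, 0 < r z) (hrR : ∀ z ∈ B, r z ≤ R) (hS : MeasurableSet S)
    (hdens : ∀ z ∈ B, μ (Metric.closedBall z (r z)) ≤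
      ENNReal.ofReal P * μ (S ∩ Metric.closedBall z (r z))) :
    μ B ≤ ENNReal.ofReal (5 ^ finrank ℝ E * P) * μ S := by
  obtain ⟨W, hWB, hdisj, hcover⟩ :=
    Vitali.exists_disjoint_subfamily_covering_enlargement_closedBall B id r R hrR 5 (by norm_num)
  simp only [id] at hdisj hcover
  have hcount : W.Countable := hdisj.countable_of_nonempty_interior fun z hz =>
    ⟨z, Metric.ball_subset_interior_closedBall (Metric.mem_ball_self (hr z (hWB hz)))⟩
  have hsub : B ⊆ ⋃ z ∈ W, Metric.closedBall z (5 * r z) := fun x hx =>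
    let ⟨_, hbW, hb⟩ := hcover x hx
    mem_biUnion hbW (hb (Metric.mem_closedBall_self (hr x hx).le))
  calc μ B ≤ μ (⋃ z ∈ W, Metric.closedBall z (5 * r z)) := measure_mono hsub
    _ ≤ ∑' z : W, μ (Metric.closedBall (z : E) (5 * r z)) := measure_biUnion_le μ hcount _
    _ ≤ ∑' z : W, ENNReal.ofReal (5 ^ finrank ℝ E * P) *
          μ (S ∩ Metric.closedBall (z : E) (r z)) := ENNReal.tsum_le_tsum fun z => by
        rw [Measure.addHaar_closedBall_mul _ _ (by norm_num) (hr z (hWB z.2)).le,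
          Measure.addHaar_closedBall_center, ENNReal.ofReal_mul (by positivity), mul_assoc,
          ← Measure.addHaar_closedBall_center μ (z : E)]
        gcongr
        exact hdens z (hWB z.2)
    _ = ENNReal.ofReal (5 ^ finrank ℝ E * P) * μ (⋃ z ∈ W, S ∩ Metric.closedBall z (r z)) := by
        rw [ENNReal.tsum_mul_left, measure_biUnion hcount
          (hdisj.mono_on fun z _ => inter_subset_right)
          fun z _ => hS.inter Metric.isClosed_closedBall.measurableSet]
    _ ≤ _ := by
        gcongr
        exact iUnion₂_subset fun z _ => inter_subset_left

end Vitali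

/-- `S` has asymptotic density zero: it fills a vanishing proportion of large balls. -/
def HasZeroDensity {E : Type*} [NormedAddCommGroup E] [MeasureSpace E] (S : Set E) : Prop :=
  ∀ ε > 0, ∃ R₀ > 0, ∀ R, R₀ ≤ R → volume (S ∩ Metric.closedBall 0 R) ≤
    ENNReal.ofReal ε * volume (Metric.closedBall (0 : E) R)

namespace HasSublevelDensity

variable {E : Type*} [NormedAddCommGroup E] [NormedSpace ℝ E] [FiniteDimensional ℝ E]
  [MeasureSpace E] [BorelSpace E] [(volume : Measure E).IsAddHaarMeasure] {V : E → ℝ}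
  {η G P : ℝ}

theorem volume_superlevel_le (hdens : HasSublevelDensity V η G P) (hV : Continuous V)
    {t R : ℝ} (ht : 0 < t) (htη : G * t ≤ η) {x₀ : E} (hx₀ : V x₀ ≤ t) (hx₀R : ‖x₀‖ ≤ R) :
    volume ({x | t < V x} ∩ Metric.closedBall 0 R) ≤ ENNReal.ofReal (5 ^ finrank ℝ E * P) *
      volume (V ⁻¹' Ioc t (G * t) ∩ Metric.closedBall 0 (2 * R)) := by
  let F := {x | V x ≤ t}
  have hF : IsClosed F := isClosed_le hV continuous_const
  let r : E → ℝ := fun z => Metric.infDist z F / 2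
  have hr : ∀ z, 2 * r z = Metric.infDist z F := fun z => by simp only [r]; ring
  have hrpos : ∀ z, t < V z → 0 < r z := fun z hz =>
    half_pos ((hF.notMem_iff_infDist_pos ⟨x₀, hx₀⟩).1 hz.not_ge)
  have hrR : ∀ z ∈ Metric.closedBall 0 R, r z ≤ R := fun z hz => by
    have := Metric.infDist_le_dist_of_mem (x := z) (show x₀ ∈ F from hx₀)
    linarith [hr z, dist_le_norm_add_norm z x₀, mem_closedBall_zero_iff.1 hz]
  refine measure_le_of_measure_closedBall_le_inter volume (r := r) (fun z hz => hrpos z hz.1)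
    (fun z hz => hrR z hz.2) ?_ fun z hz => ?_
  · exact (hV.measurable measurableSet_Ioc).inter Metric.isClosed_closedBall.measurableSet
  obtain ⟨x₁, hx₁, hzx₁⟩ := hF.exists_infDist_eq_dist ⟨x₀, hx₀⟩ z
  refine (hdens z x₁ (r z) t (hrpos z hz.1) ht ?_ hx₁ htη).trans ?_
  · rw [← dist_eq_norm, dist_comm, ← hzx₁, hr]
  · gcongr ENNReal.ofReal P * volume ?_
    rintro x ⟨hxG, hxz⟩
    rw [Metric.mem_closedBall] at hxz
    refine ⟨⟨⟨not_le.1 fun hxF => ?_, hxG⟩, ?_⟩, hxz⟩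
    · have := Metric.infDist_le_dist_of_mem (x := z) (show x ∈ F from hxF)
      rw [dist_comm] at this
      linarith [hr z, hrpos z hz.1]
    · rw [mem_closedBall_zero_iff]
      have := norm_le_norm_add_norm_sub' x z
      rw [← dist_eq_norm] at this
      linarith [hrR z hz.2, mem_closedBall_zero_iff.1 hz.2]

/-- For every `k` the superlevel set is dominated by the layer `s / Gᵏ⁺¹ < V ≤ s / Gᵏ`, and these
layers are disjoint. -/
theorem natCast_mul_volume_superlevel_le (hdens : HasSublevelDensity V η G P) (hV : Continuous V)
    (hG : 1 < G) (hP : 0 ≤ P) {s R : ℝ} (hs : 0 < s) (hsη : s ≤ η) {K : ℕ} {x₀ : E}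
    (hx₀ : V x₀ ≤ s / G ^ K) (hx₀R : ‖x₀‖ ≤ R) :
    K * volume ({x | s < V x} ∩ Metric.closedBall 0 R) ≤
      ENNReal.ofReal (5 ^ finrank ℝ E * P * 2 ^ finrank ℝ E) *
        volume (Metric.closedBall (0 : E) R) := by
  let d := finrank ℝ E
  let B : ℝ → Set E := Metric.closedBall 0
  let t : ℕ → ℝ := fun k => s / G ^ k
  have htpos : ∀ k, 0 < t k := fun k => by positivity
  have htanti : Antitone t := fun i j hij =>
    div_le_div_of_nonneg_left hs.le (by positivity) (pow_le_pow_right₀ hG.le hij)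
  have htle : ∀ k, t k ≤ s := fun k => (htanti k.zero_le).trans_eq (by simp [t])
  have hGt : ∀ k, G * t (k + 1) = t k := fun k => by simp only [t, pow_succ]; field_simp
  let layer : ℕ → Set E := fun k => V ⁻¹' Ioc (t (k + 1)) (t k) ∩ B (2 * R)
  have hlayer : ∀ k < K, volume ({x | s < V x} ∩ B R) ≤
      ENNReal.ofReal (5 ^ d * P) * volume (layer k) := fun k hk => by
    have hle := hdens.volume_superlevel_le hV (htpos (k + 1))
      ((hGt k).trans_le ((htle k).trans hsη)) (hx₀.trans (htanti (Nat.succ_le_of_lt hk))) hx₀R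
    rw [hGt] at hle
    refine (measure_mono (inter_subset_inter_left _ fun x hx => ?_)).trans hle
    exact (htle (k + 1)).trans_lt hx
  have hdisj : Pairwise (Function.onFun Disjoint layer) := fun _ _ hij =>
    ((htanti.pairwise_disjoint_on_Ioc_succ hij).preimage V).mono inter_subset_left
      inter_subset_left
  calc (K : ENNReal) * volume ({x | s < V x} ∩ B R)
      = ∑ _k ∈ Finset.range K, volume ({x | s < V x} ∩ B R) := by simp
    _ ≤ ∑ k ∈ Finset.range K, ENNReal.ofReal (5 ^ d * P) * volume (layer k) :=
        Finset.sum_le_sum fun k hk => hlayer k (Finset.mem_range.1 hk)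
    _ = ENNReal.ofReal (5 ^ d * P) * volume (⋃ k ∈ Finset.range K, layer k) := by
        rw [← Finset.mul_sum, measure_biUnion_finset (hdisj.set_pairwise _) fun k _ =>
          (hV.measurable measurableSet_Ioc).inter Metric.isClosed_closedBall.measurableSet]
    _ ≤ ENNReal.ofReal (5 ^ d * P) * volume (B (2 * R)) := by
        gcongr
        exact iUnion₂_subset fun k _ => inter_subset_right
    _ = ENNReal.ofReal (5 ^ d * P * 2 ^ d) * volume (B R) := by
        rw [Measure.addHaar_closedBall_mul _ _ zero_le_two
          ((norm_nonneg x₀).trans hx₀R), ← mul_assoc, ← ENNReal.ofReal_mul (by positivity)]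

theorem hasZeroDensity_superlevel (hdens : HasSublevelDensity V η G P) (hV : Continuous V)
    (hG : 1 < G) (hP : 0 ≤ P) (hinf : ∀ ε > 0, ∃ x, V x ≤ ε) {s : ℝ} (hs : 0 < s) (hsη : s ≤ η) :
    HasZeroDensity {x | s < V x} := fun ε hε => by
  obtain ⟨K, hK⟩ := exists_nat_gt (5 ^ finrank ℝ E * P * 2 ^ finrank ℝ E / ε)
  have hK₀ : (0 : ℝ) < K := lt_of_le_of_lt (by positivity) hK
  rw [div_lt_iff₀ hε] at hK
  obtain ⟨x₀, hx₀⟩ := hinf (s / G ^ K) (by positivity)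
  refine ⟨‖x₀‖ + 1, by positivity, fun R hR => ?_⟩
  refine (ENNReal.mul_le_mul_iff_right (Nat.cast_ne_zero.2 (Nat.cast_pos.1 hK₀).ne')
    (ENNReal.natCast_ne_top K)).1 ((hdens.natCast_mul_volume_superlevel_le hV hG hP hs hsη hx₀
      (by linarith)).trans ?_)
  rw [← mul_assoc, ← ENNReal.ofReal_natCast, ← ENNReal.ofReal_mul hK₀.le]
  gcongr

end HasSublevelDensity

/-! ### Constancy of the Hessian -/

section Complement

variable {E : Type*} [NormedAddCommGroup E] [NormedSpace ℝ E] [FiniteDimensional ℝ E]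
  [MeasureSpace E] [BorelSpace E] [(volume : Measure E).IsAddHaarMeasure]

theorem HasZeroDensity.exists_inter_compl_nonempty {S : Set E} (hS : HasZeroDensity S) {P ρ : ℝ}
    (hP : 0 < P) (hρ : 1 ≤ ρ) :
    ∃ R₀ > 0, ∀ R, R₀ ≤ R → ∀ T ⊆ Metric.closedBall (0 : E) (ρ * R),
      volume (Metric.closedBall (0 : E) R) ≤ ENNReal.ofReal P * volume T → (T ∩ Sᶜ).Nonempty := by
  let d := finrank ℝ E
  obtain ⟨R₀, hR₀, hdens⟩ := hS (1 / (2 * P * ρ ^ d)) (by positivity)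
  refine ⟨R₀, hR₀, fun R hR T hT hvol => ?_⟩
  have hR' : 0 < R := hR₀.trans_le hR
  by_contra hne
  have hTS : T ⊆ S ∩ Metric.closedBall 0 (ρ * R) := fun x hx =>
    ⟨not_not.1 fun hxS => hne ⟨x, hx, hxS⟩, hT hx⟩
  have hhalf := calc (1 : ENNReal) * volume (Metric.closedBall (0 : E) R)
      ≤ ENNReal.ofReal P * volume T := by rwa [one_mul]
    _ ≤ ENNReal.ofReal P * (ENNReal.ofReal (1 / (2 * P * ρ ^ d)) *
          volume (Metric.closedBall (0 : E) (ρ * R))) := by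
        gcongr
        exact (measure_mono hTS).trans
          (hdens _ (hR.trans (le_mul_of_one_le_left hR'.le hρ)))
    _ = ENNReal.ofReal (1 / 2) * volume (Metric.closedBall (0 : E) R) := by
        rw [Measure.addHaar_closedBall_mul _ _ (by positivity) hR'.le, ← mul_assoc, ← mul_assoc,
          ← ENNReal.ofReal_mul hP.le, ← ENNReal.ofReal_mul (by positivity)]
        congr 2
        simp only [d]
        field_simp
  rw [ENNReal.mul_le_mul_iff_left (Metric.measure_closedBall_pos _ _ hR').ne'
    measure_closedBall_lt_top.ne, ENNReal.one_le_ofReal] at hhalf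
  norm_num at hhalf

end Complement

section Rigidity

variable {E : Type*} [NormedAddCommGroup E] [InnerProductSpace ℝ E] {n m : ℕ}
  {N₁ D₁ D₂ c C : ℝ} {u : E → ℝ} {A : EllipticFrame n N₁ m D₁ D₂ u}

namespace EllipticFrame

/-- The one-sided bound is reversed by ellipticity: `L u = 1` at `x`, while the frozen coefficients
at `x` applied to `D²u(y)` give at least `1`. -/
theorem EllipticAt.abs_hess_sub_le {B l Q : ℝ} {x y : E} (hell : A.EllipticAt l Q x) (hl : 0 < l)
    (hQ : 0 ≤ Q) (hB : 0 ≤ B)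
    (hle : ∀ v, ∂[v] ∂[v] u y ≤ ∂[v] ∂[v] u x + B * ‖v‖ ^ 2) (v : E) :
    |∂[v] ∂[v] u y - ∂[v] ∂[v] u x| ≤ B * (1 + Q / l) * ‖v‖ ^ 2 := by
  have happly : ∀ w, (hessForm u x - hessForm u y) w w = ∂[w] ∂[w] u x - ∂[w] ∂[w] u y := by
    intro w
    rw [LinearMap.sub_apply, LinearMap.sub_apply, hessForm_apply A.smooth, hessForm_apply A.smooth]
  have hupper := hell.apply_self_le hl (κ := B) (S := 0)
    ((hessForm_isSymm A.smooth x).sub (hessForm_isSymm A.smooth y)) hB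
    (fun w => by rw [happly]; linarith [hle w]) (by
      have hx := A.L_self x
      unfold L at hx
      simp only [happly, mul_sub, Finset.sum_sub_distrib, hx]
      linarith [A.comp x y (A.b x)]) v
  rw [happly, zero_add] at hupper
  have : 0 ≤ B * ‖v‖ ^ 2 := by positivity
  have : 0 ≤ B * Q / l * ‖v‖ ^ 2 := by positivity
  rw [show B * (1 + Q / l) * ‖v‖ ^ 2 = B * ‖v‖ ^ 2 + B * Q / l * ‖v‖ ^ 2 by ring, abs_le]
  constructor <;> linarith [hle v]

variable [FiniteDimensional ℝ E]

theorem isNonnegSupersolution_const_sub_hess (A : EllipticFrame n N₁ m D₁ D₂ u) {a : ℝ} {v : E}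
    (ha : ∀ x, ∂[v] ∂[v] u x ≤ a) : A.IsNonnegSupersolution fun x => a - ∂[v] ∂[v] u x where
  smooth := contDiff_const.sub (A.contDiff_hess v v)
  nonneg x := sub_nonneg.2 (ha x)
  L_nonpos x := by
    have := A.L_dirDeriv_dirDeriv_nonneg x v
    simp only [L] at this
    simpa only [L, dirDeriv_const_sub, dirDeriv_neg, mul_neg, Finset.sum_neg_distrib, neg_nonpos]

/-- Perturbing `u` by a large multiple of `W` makes `W` small on the whole contact set, which is too
large to be contained in `S`. -/
theorem IsNonnegSupersolution.exists_le_of_hasZeroDensity [MeasurableSpace E] [BorelSpace E]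
    {W : E → ℝ} (hW : A.IsNonnegSupersolution W) (hinf : ∀ ε > 0, ∃ x, W x ≤ ε) (hN₁ : 0 < N₁)
    (hc : 0 < c) (hgrowth : ∀ x, c * ‖x‖ ^ 2 - C ≤ u x) {S : Set E} (hS : HasZeroDensity S) {δ : ℝ}
    (hδ : 0 < δ) : ∃ x ∉ S, W x ≤ δ := by
  obtain ⟨K, P, -, hP, hcontact⟩ := exists_volume_le_contactSet A hN₁ hc hgrowth
  obtain ⟨x₀, hx₀⟩ := hinf (δ / 6) (by positivity)
  obtain ⟨R₁, hR₁, hvol⟩ := hcontact W hW x₀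
  obtain ⟨R₂, -, hmeet⟩ := hS.exists_inter_compl_nonempty hP (ρ := 4) (by norm_num)
  let R := max R₁ R₂
  have : 0 < R := lt_max_of_lt_left hR₁
  let τ := 3 * c * R ^ 2 / δ
  have hτ : 0 < τ := by positivity
  have hτδ : τ * δ = 3 * c * R ^ 2 := div_mul_cancel₀ _ hδ.ne'
  obtain ⟨x, ⟨⟨-, hx⟩, -⟩, hxS⟩ := hmeet R (le_max_right _ _) (contactSet u W c K R τ)
    (fun _ hx => hx.1.1) (hvol R τ (le_max_left _ _) hτ.le
      (by linarith [mul_le_mul_of_nonneg_left hx₀ hτ.le]))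
  exact ⟨x, hxS, le_of_mul_le_mul_left (hx.trans_eq hτδ.symm) hτ⟩

theorem IsHessianGauge.hess_le [MeasurableSpace E] [BorelSpace E] {V : E → ℝ} {B M η : ℝ}
    (hV : A.IsHessianGauge B V) (hN₁ : 0 < N₁) (hc : 0 < c)
    (hgrowth : ∀ x, c * ‖x‖ ^ 2 - C ≤ u x) (hb : ∀ x v, |∂[v] ∂[v] u x| ≤ M * ‖v‖ ^ 2)
    (hη : HasZeroDensity {x | η < V x}) {x : E} (hx : V x ≤ η) (y v : E) :
    ∂[v] ∂[v] u y ≤ ∂[v] ∂[v] u x + B * √η * ‖v‖ ^ 2 := by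
  let a := ⨆ z, ∂[v] ∂[v] u z
  have hbdd : BddAbove (range ∂[v] ∂[v] u) :=
    ⟨M * ‖v‖ ^ 2, forall_mem_range.2 fun z => (abs_le.1 (hb z v)).2⟩
  have hinf : ∀ ε > 0, ∃ z, a - ∂[v] ∂[v] u z ≤ ε := fun ε hε =>
    let ⟨z, hz⟩ := exists_lt_of_lt_ciSup (sub_lt_self a hε)
    ⟨z, by linarith⟩
  refine (le_ciSup hbdd y).trans (le_of_forall_pos_le_add fun δ hδ => ?_)
  obtain ⟨z, hz, hza⟩ := (A.isNonnegSupersolution_const_sub_hess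
    (le_ciSup hbdd)).exists_le_of_hasZeroDensity hinf hN₁ hc hgrowth hη hδ
  linarith [(abs_le.1 (hV.abs_hess_sub_le z x η (not_lt.1 hz) hx v)).2]

theorem hess_eq [NeZero n] (A : EllipticFrame n N₁ m D₁ D₂ u) (hN₁ : 0 < N₁) (hD₁ : 0 ≤ D₁)
    (hD₂ : 0 ≤ D₂) (hc : 0 < c) (hgrowth : ∀ x, c * ‖x‖ ^ 2 - C ≤ u x) (x y v : E) :
    ∂[v] ∂[v] u x = ∂[v] ∂[v] u y := by
  borelize E
  obtain ⟨M, hM, hb⟩ := exists_abs_hessian_le A hN₁.le hD₁ hD₂ hc hgrowth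
  obtain ⟨B, V, hB, hV⟩ := A.exists_isHessianGauge hM.le hb
  obtain ⟨η₀, l, Q, hη₀, hl, hQ, hell⟩ := hV.exists_ellipticAt hB hN₁ hc hgrowth hM hb
  obtain ⟨G, P, hG, hP, hdens⟩ := hV.exists_hasSublevelDensity hl hQ.le hell
  have hosc : ∀ η ∈ Ioc 0 η₀, |∂[v] ∂[v] u x - ∂[v] ∂[v] u y| ≤
      2 * (B * √η * (1 + Q / l) * ‖v‖ ^ 2) := fun η ⟨hη, hηη₀⟩ => by
    obtain ⟨z, hz⟩ := hV.exists_le η hη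
    have hzero := hdens.hasZeroDensity_superlevel hV.smooth.continuous hG hP.le hV.exists_le hη hηη₀
    have hnear : ∀ y, |∂[v] ∂[v] u y - ∂[v] ∂[v] u z| ≤ B * √η * (1 + Q / l) * ‖v‖ ^ 2 := fun y =>
      (hell z (hz.trans hηη₀)).abs_hess_sub_le hl hQ.le (by positivity)
        (hV.hess_le hN₁ hc hgrowth hb hzero hz y) v
    rw [two_mul, ← sub_sub_sub_cancel_right _ _ (∂[v] ∂[v] u z)]
    exact (abs_sub _ _).trans (add_le_add (hnear x) (hnear y))
  have hlim : Tendsto (fun η => 2 * (B * √η * (1 + Q / l) * ‖v‖ ^ 2)) (𝓝[>] 0) (𝓝 0) := by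
    have : Continuous fun η => 2 * (B * √η * (1 + Q / l) * ‖v‖ ^ 2) := by fun_prop
    simpa using (this.tendsto 0).mono_left nhdsWithin_le_nhds
  exact sub_eq_zero.1 (abs_nonpos_iff.1
    (ge_of_tendsto hlim (eventually_of_mem (Ioc_mem_nhdsGT hη₀) hosc)))

end EllipticFrame

end Rigidity

/-! ### Hessian operators and entire solutions -/

section Taylor

variable {E : Type*} [NormedAddCommGroup E] [NormedSpace ℝ E] {u : E → ℝ}

theorem eq_quadratic_of_hess_eq (hu : ContDiff ℝ 2 u)
    (h : ∀ x v, ∂[v] ∂[v] u x = ∂[v] ∂[v] u 0) (x : E) :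
    u x = 1 / 2 * ∂[x] ∂[x] u 0 + ∂[x] u 0 + u 0 := by
  have hu' : Differentiable ℝ ∂[x] u := fun y =>
    (differentiable_fderiv hu y).clm_apply (differentiableAt_const x)
  have deriv_line : ∀ t : ℝ, ∂[x] u (0 + t • x) = t * ∂[x] ∂[x] u 0 + ∂[x] u 0 := fun t => by
    have hderiv : ∀ s : ℝ,
        HasDerivAt (fun s : ℝ => ∂[x] u (0 + s • x) - s * ∂[x] ∂[x] u 0) 0 s := fun s =>
      ((hasDerivAt_comp_line hu' 0 x s).sub ((hasDerivAt_id s).mul_const _)).congr_deriv (by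
        rw [h, one_mul, sub_self])
    have := is_const_of_deriv_eq_zero (fun s => (hderiv s).differentiableAt)
      (fun s => (hderiv s).deriv) t 0
    simp only [zero_smul, zero_mul, add_zero, sub_zero] at this
    linarith
  have hderiv : ∀ t : ℝ, HasDerivAt
      (fun t : ℝ => u (0 + t • x) - (t ^ 2 / 2 * ∂[x] ∂[x] u 0 + t * ∂[x] u 0)) 0 t := fun t => by
    refine ((hasDerivAt_comp_line (hu.differentiable two_ne_zero) 0 x t).sub
      (((((hasDerivAt_id t).pow 2).div_const 2).mul_const _).add
        ((hasDerivAt_id t).mul_const _))).congr_deriv ?_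
    rw [deriv_line]
    simp
  have := is_const_of_deriv_eq_zero (fun t => (hderiv t).differentiableAt)
    (fun t => (hderiv t).deriv) 1 0
  norm_num at this
  linarith

end Taylor

section Concave

variable {F : Type*} [NormedAddCommGroup F] [NormedSpace ℝ F] {f : F → ℝ} {a d : F}

theorem sub_le_fderiv_of_concaveOn {s : Set F} (hf : ConcaveOn ℝ s f) (ha : a ∈ s) (hd : d ∈ s)
    (hfa : DifferentiableAt ℝ f a) : f d - f a ≤ fderiv ℝ f a (d - a) := by
  have hline : HasDerivAt (f ∘ AffineMap.lineMap a d) (fderiv ℝ f a (d - a)) (0 : ℝ) :=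
    HasFDerivAt.comp_hasDerivAt (0 : ℝ) (by simpa using hfa.hasFDerivAt)
      AffineMap.hasDerivAt_lineMap
  simpa [slope] using (hf.comp_affineMap (AffineMap.lineMap a d)).slope_le_of_hasDerivAt
    (by simpa) (by simpa) one_pos hline

theorem fderiv_apply_self_of_homogeneous (hfa : DifferentiableAt ℝ f a)
    (hhom : ∀ t : ℝ, 0 < t → f (t • a) = t * f a) : fderiv ℝ f a a = f a := by
  have hline : HasDerivAt (fun t : ℝ => f (t • a)) (fderiv ℝ f a a) 1 :=
    HasFDerivAt.comp_hasDerivAt (1 : ℝ) (by simpa using hfa.hasFDerivAt)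
      (by simpa using (hasDerivAt_id (1 : ℝ)).smul_const a)
  have hlin : HasDerivAt (fun t : ℝ => f (t • a)) (f a) 1 :=
    (by simpa using (hasDerivAt_id (1 : ℝ)).mul_const (f a) :
      HasDerivAt (fun t : ℝ => t * f a) (f a) 1).congr_of_eventuallyEq
      ((lt_mem_nhds one_pos).mono fun t ht => hhom t ht)
  exact hline.unique hlin

end Concave

section DoublyStochastic

variable {ι : Type*} [Fintype ι] [DecidableEq ι]

theorem mulVec_mem_of_mem_doublyStochastic {S : Set (ι → ℝ)} (hS : Convex ℝ S) {p : ι → ℝ}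
    (hp : ∀ σ : Equiv.Perm ι, p ∘ σ ∈ S) {P : Matrix ι ι ℝ} (hP : P ∈ doublyStochastic ℝ ι) :
    P.mulVec p ∈ S := by
  obtain ⟨w, hw, hw1, rfl⟩ := exists_eq_sum_perm_of_mem_doublyStochastic hP
  simp only [Matrix.sum_mulVec, Matrix.smul_mulVec, Matrix.permMatrix_mulVec]
  exact hS.sum_mem (fun σ _ => hw σ) hw1 fun σ _ => hp σ

theorem sq_inner_mem_doublyStochastic {E : Type*} [NormedAddCommGroup E] [InnerProductSpace ℝ E]
    (b b' : OrthonormalBasis ι ℝ E) :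
    (Matrix.of fun i k => inner ℝ (b k) (b' i) ^ 2) ∈ doublyStochastic ℝ ι := by
  refine mem_doublyStochastic_iff_sum.2 ⟨fun i k => sq_nonneg _, fun i => ?_, fun k => ?_⟩
  · simp [b.sum_sq_inner_right]
  · simp [b'.sum_sq_inner_left]

end DoublyStochastic

section HessianMatrix

variable {n : ℕ} {u : EuclideanSpace ℝ (Fin n) → ℝ}

theorem sum_smul_single (v : EuclideanSpace ℝ (Fin n)) :
    ∑ i, v i • EuclideanSpace.single i (1 : ℝ) = v := by
  simpa using (EuclideanSpace.basisFun (Fin n) ℝ).sum_repr v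

theorem hessianMatrix_apply (hu : ContDiff ℝ 2 u) (x : EuclideanSpace ℝ (Fin n)) (i j : Fin n) :
    hessianMatrix u x i j = ∂[EuclideanSpace.single i 1] ∂[EuclideanSpace.single j 1] u x := by
  simp [hessianMatrix, iteratedFDeriv_two_apply, dirDeriv_dirDeriv hu]

theorem isSymm_hessianMatrix (hu : ContDiff ℝ 2 u) (x : EuclideanSpace ℝ (Fin n)) :
    (hessianMatrix u x).IsSymm := by
  ext i j
  rw [Matrix.transpose_apply, hessianMatrix_apply hu, hessianMatrix_apply hu, dirDeriv_comm hu]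

theorem dirDeriv_dirDeriv_eq_sum_hessianMatrix (hu : ContDiff ℝ 2 u)
    (x v w : EuclideanSpace ℝ (Fin n)) :
    ∂[v] ∂[w] u x = ∑ i, ∑ j, hessianMatrix u x i j * v i * w j := by
  simp only [hessianMatrix_apply hu, dirDeriv_dirDeriv hu]
  conv_lhs => rw [← sum_smul_single v, ← sum_smul_single w]
  simp only [map_sum, map_smul, sum_apply, smul_apply, smul_eq_mul, Finset.mul_sum]
  rw [Finset.sum_comm]
  exact Finset.sum_congr rfl fun i _ => Finset.sum_congr rfl fun j _ => by ring

theorem exists_basis_hess_eq_hessEigen (hu : ContDiff ℝ 2 u) (x : EuclideanSpace ℝ (Fin n)) :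
    ∃ b : OrthonormalBasis (Fin n) ℝ (EuclideanSpace ℝ (Fin n)),
      ∀ i j, ∂[b i] ∂[b j] u x = if i = j then hessEigen u x i else 0 := by
  have hH : (hessianMatrix u x).IsHermitian := by
    rw [Matrix.IsHermitian, Matrix.conjTranspose_eq_transpose_of_trivial]
    exact isSymm_hessianMatrix hu x
  refine ⟨hH.eigenvectorBasis, fun i j => ?_⟩
  have horth := orthonormal_iff_ite.1 hH.eigenvectorBasis.orthonormal j i
  calc ∂[hH.eigenvectorBasis i] ∂[hH.eigenvectorBasis j] u x
      = hH.eigenvectorBasis i ⬝ᵥ (hessianMatrix u x).mulVec (hH.eigenvectorBasis j) := by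
        rw [dirDeriv_dirDeriv_eq_sum_hessianMatrix hu]
        simp only [dotProduct, Matrix.mulVec, Finset.mul_sum]
        exact Finset.sum_congr rfl fun k _ => Finset.sum_congr rfl fun l _ => by ring
    _ = hH.eigenvalues j * inner ℝ (hH.eigenvectorBasis j) (hH.eigenvectorBasis i) := by
        rw [hH.mulVec_eigenvectorBasis, dotProduct_smul, smul_eq_mul,
          EuclideanSpace.inner_eq_star_dotProduct, star_trivial]
    _ = if i = j then hessEigen u x i else 0 := by
        rw [horth, hessEigen, dif_pos hH]
        rcases eq_or_ne i j with rfl | hij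
        · simp
        · simp [hij, hij.symm]

theorem isQuadraticPolynomial_of_hess_eq (hu : ContDiff ℝ 2 u)
    (h : ∀ x v, ∂[v] ∂[v] u x = ∂[v] ∂[v] u 0) : IsQuadraticPolynomial u := by
  refine ⟨hessianMatrix u 0, fun i => ∂[EuclideanSpace.single i 1] u 0, u 0,
    isSymm_hessianMatrix hu 0, fun x => ?_⟩
  have hlin : ∂[x] u 0 = ∑ i, ∂[EuclideanSpace.single i 1] u 0 * x i := by
    conv_lhs => rw [← sum_smul_single x, dirDeriv_sum_left]
    simp only [smul_eq_mul, mul_comm]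
  rw [eq_quadratic_of_hess_eq hu h x, dirDeriv_dirDeriv_eq_sum_hessianMatrix hu, hlin]

end HessianMatrix

section HessianOperator

variable {n : ℕ} {Γ : Set (Fin n → ℝ)} {f : (Fin n → ℝ) → ℝ}

theorem fderiv_apply_eq_sum_fpd (f : (Fin n → ℝ) → ℝ) (a v : Fin n → ℝ) :
    fderiv ℝ f a v = ∑ i, fpd f i a * v i := by
  conv_lhs => rw [pi_eq_sum_univ' v]
  simp [fpd, mul_comm]

theorem le_sum_fpd_mul_of_concaveOn (hconc : ConcaveOn ℝ Γ f) {a d : Fin n → ℝ} (ha : a ∈ Γ)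
    (hd : d ∈ Γ) (hdiff : DifferentiableAt ℝ f a) (heuler : ∑ i, fpd f i a * a i = f a) :
    f d ≤ ∑ i, fpd f i a * d i := by
  have htangent := sub_le_fderiv_of_concaveOn hconc ha hd hdiff
  rw [map_sub, fderiv_apply_eq_sum_fpd f a d, fderiv_apply_eq_sum_fpd f a a, heuler] at htangent
  linarith

theorem ConditionN.one_le {N₁ N₂ : ℝ} (hN : ConditionN Γ f N₁ N₂) (hN₁ : 0 < N₁)
    {a : Fin n → ℝ} (ha : a ∈ Γ) (hfa : f a = 1) {C : ℝ} (hC : 1 ≤ C)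
    (hsum : ∑ i, fpd f i a ≤ C) (i : Fin n) : 1 ≤ N₁ * C ^ ⌈N₂⌉₊ * fpd f i a := by
  have hC₀ : 0 < C := one_pos.trans_le hC
  have hpow : C ^ N₂ ≤ C ^ ⌈N₂⌉₊ := by
    rw [← Real.rpow_natCast]
    exact Real.rpow_le_rpow_of_exponent_le hC (Nat.le_ceil N₂)
  have hCN : 0 < N₁ * C ^ N₂ := mul_pos hN₁ (Real.rpow_pos_of_pos hC₀ N₂)
  have hle := hN a ha hfa C hC₀ hsum i
  have hpos : 0 ≤ fpd f i a := (one_div_nonneg.2 hCN.le).trans hle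
  calc 1 ≤ fpd f i a * (N₁ * C ^ N₂) := (div_le_iff₀ hCN).1 hle
    _ ≤ fpd f i a * (N₁ * C ^ ⌈N₂⌉₊) := by gcongr
    _ = N₁ * C ^ ⌈N₂⌉₊ * fpd f i a := mul_comm _ _

theorem nonempty_ellipticFrame (hdiff : ∀ a ∈ Γ, DifferentiableAt ℝ f a) (hconc : ConcaveOn ℝ Γ f)
    (hperm : ∀ a ∈ Γ, ∀ σ : Equiv.Perm (Fin n), a ∘ σ ∈ Γ ∧ f (a ∘ σ) = f a)
    (hell : ∀ a ∈ Γ, ∀ i, 0 < fpd f i a) (heuler : ∀ a ∈ Γ, ∑ i, fpd f i a * a i = f a)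
    {N₁ N₂ : ℝ} (hN₁ : 0 < N₁) (hN : ConditionN Γ f N₁ N₂) {u : EuclideanSpace ℝ (Fin n) → ℝ}
    (hu : ContDiff ℝ ∞ u) (hadm : ∀ x, hessEigen u x ∈ Γ) (heq : ∀ x, f (hessEigen u x) = 1)
    {D₁ D₂ : ℝ} (hD : ConditionD f u univ D₁ D₂) :
    Nonempty (EllipticFrame n N₁ ⌈N₂⌉₊ D₁ D₂ u) := by
  have hu₂ : ContDiff ℝ 2 u := hu.of_le two_le_infty
  choose b hb using exists_basis_hess_eq_hessEigen hu₂
  refine ⟨{ smooth := hu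
            b := b
            lam := hessEigen u
            phi := fun x i => fpd f i (hessEigen u x)
            diag := hb
            pos := fun x i => hell _ (hadm x) i
            euler := fun x => (heuler _ (hadm x)).trans (heq x)
            comp := fun x y b' => ?_
            condN := fun x C hC hsum => hN.one_le hN₁ (hadm x) (heq x) hC hsum
            condD := fun x => hD x (mem_univ x) }⟩
  have hdiag : (fun i => ∂[b' i] ∂[b' i] u y) =
      (Matrix.of fun i k => inner ℝ (b y k) (b' i) ^ 2).mulVec (hessEigen u y) := by
    ext i
    simp only [hess_apply_of_diag hu₂ (b y) (hb y), Matrix.mulVec, dotProduct, Matrix.of_apply,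
      mul_comm]
  obtain ⟨hmem, hle⟩ : (fun i => ∂[b' i] ∂[b' i] u y) ∈ {d ∈ Γ | 1 ≤ f d} := by
    rw [hdiag]
    exact mulVec_mem_of_mem_doublyStochastic (hconc.convex_ge 1)
      (fun σ => ⟨(hperm _ (hadm y) σ).1, ((hperm _ (hadm y) σ).2.trans (heq y)).ge⟩)
      (sq_inner_mem_doublyStochastic (b y) b')
  exact hle.trans (le_sum_fpd_mul_of_concaveOn hconc (hadm x) hmem (hdiff _ (hadm x))
    (heuler _ (hadm x)))

theorem liouville_hessian_general [NeZero n] (hdiff : ∀ a ∈ Γ, DifferentiableAt ℝ f a)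
    (hconc : ConcaveOn ℝ Γ f)
    (hperm : ∀ a ∈ Γ, ∀ σ : Equiv.Perm (Fin n), a ∘ σ ∈ Γ ∧ f (a ∘ σ) = f a)
    (hell : ∀ a ∈ Γ, ∀ i, 0 < fpd f i a) (heuler : ∀ a ∈ Γ, ∑ i, fpd f i a * a i = f a)
    {N₁ N₂ : ℝ} (hN₁ : 0 < N₁) (hN : ConditionN Γ f N₁ N₂) {u : EuclideanSpace ℝ (Fin n) → ℝ}
    (hu : ContDiff ℝ ∞ u) (hadm : ∀ x, hessEigen u x ∈ Γ) (heq : ∀ x, f (hessEigen u x) = 1)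
    (hquad : QuadraticGrowth u) {D₁ D₂ : ℝ} (hD₁ : 0 ≤ D₁) (hD₂ : 0 ≤ D₂)
    (hD : ConditionD f u univ D₁ D₂) : IsQuadraticPolynomial u := by
  obtain ⟨A⟩ := nonempty_ellipticFrame hdiff hconc hperm hell heuler hN₁ hN hu hadm heq hD
  obtain ⟨C, hC, hgrowth⟩ := hquad
  exact isQuadraticPolynomial_of_hess_eq (hu.of_le two_le_infty) fun x v =>
    A.hess_eq hN₁ hD₁ hD₂ (inv_pos.2 hC) hgrowth x 0 v

theorem IsConcaveEllipticHessianOp.differentiableAt (hf : IsConcaveEllipticHessianOp Γ f)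
    (hΓ : IsOpen Γ) {a : Fin n → ℝ} (ha : a ∈ Γ) : DifferentiableAt ℝ f a :=
  (hf.1.contDiffAt (hΓ.mem_nhds ha)).differentiableAt two_ne_zero

theorem IsConcaveEllipticHessianOp.sum_fpd_mul_self (hf : IsConcaveEllipticHessianOp Γ f)
    (hΓ : IsOpen Γ) {a : Fin n → ℝ} (ha : a ∈ Γ) : ∑ i, fpd f i a * a i = f a := by
  have ⟨_, _, _, _, _, hhom⟩ := hf
  rw [← fderiv_apply_eq_sum_fpd]
  exact fderiv_apply_self_of_homogeneous (hf.differentiableAt hΓ ha) (hhom a ha)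

end HessianOperator

/-- **Liouville theorem.** An entire smooth admissible solution of `F(D²u) = 1` with quadratic
growth satisfying condition D is a quadratic polynomial. -/
theorem liouville_hessian (n : ℕ) (hn : 2 ≤ n)
    (Γ : Set (Fin n → ℝ)) (f : (Fin n → ℝ) → ℝ)
    (hΓ : IsConvexInvariantCone Γ) (hf : IsConcaveEllipticHessianOp Γ f)
    (N₁ N₂ : ℝ) (hN₁ : 0 < N₁) (hN₂ : 0 < N₂) (hN : ConditionN Γ f N₁ N₂)
    (u : EuclideanSpace ℝ (Fin n) → ℝ) (hu : ContDiff ℝ (⊤ : ℕ∞) u)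
    (hadm : ∀ x, hessEigen u x ∈ Γ)
    (heq : ∀ x, f (hessEigen u x) = 1)
    (hquad : QuadraticGrowth u)
    (D₁ D₂ : ℝ) (hD₁ : 0 < D₁) (hD₂ : 0 < D₂)
    (hD : ConditionD f u Set.univ D₁ D₂) :
    IsQuadraticPolynomial u := by
  have : NeZero n := ⟨by omega⟩
  obtain ⟨hopen, -, -, -, -, hperm⟩ := hΓ
  have ⟨_, hconc, hsymm, hell, _, _⟩ := hf
  exact liouville_hessian_general (fun a => hf.differentiableAt hopen) hconc
    (fun a ha σ => ⟨hperm a ha σ, hsymm a ha σ⟩) hell (fun a => hf.sum_fpd_mul_self hopen)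
    hN₁ hN hu hadm heq hquad hD₁.le hD₂.le hD
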